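/- There exists an absolute constant A > 0 such that for every set L of n lines and every set C of k circles in ℝ² with k ≥ 2, the number T(L,C) of tangent pairs satisfies T(L,C) ≤ A · ( n^{2/3} k^{2/3} + n^{6/11} k^{9/11} (log k)^{2/11} + k + n ). -/

import Mathlib

noncomputable section

abbrev Pt2 := EuclideanSpace ℝ (Fin 2)

/-- A line in the plane: the set of points `a + t • v` for a nonzero direction `v`. -/
def IsLine2 (l : Set Pt2) : Prop :=
  ∃ a v : Pt2, v ≠ 0 ∧ l = {x : Pt2 | ∃ t : ℝ, x = a + t • v}

/-- A circle in the plane: a metric sphere with positive radius. -/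
def IsCircle2 (s : Set Pt2) : Prop :=
  ∃ c : Pt2, ∃ r : ℝ, 0 < r ∧ s = Metric.sphere c r

/-- Two subsets of the plane are tangent if they intersect in exactly one point. -/
def Tangent2 (a b : Set Pt2) : Prop := ∃ p : Pt2, a ∩ b = {p}

namespace LCT
open Finset
open scoped Classical

/-- block of a pair -/
def blk (k : ℕ) (w : ℕ × ℕ) : ℕ × ℕ := (w.1 / k, w.2 / k)

structure Good (W : Finset (ℕ × ℕ)) : Prop where
  inj : ∀ w ∈ W, ∀ w' ∈ W, (w.1 = w'.1 ↔ w.2 = w'.2)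
  tri : ∀ a ∈ W, ∀ b ∈ W, ∀ c ∈ W, a.1 < b.1 → b.1 < c.1 →
    ¬ (a.2 < b.2 ∧ b.2 < c.2) ∧ ¬ (b.2 < c.2 ∧ c.2 < a.2) ∧ ¬ (c.2 < a.2 ∧ a.2 < b.2)

def ch (k : ℕ) (W : Finset (ℕ × ℕ)) : Finset (ℕ × ℕ) :=
  W.filter (fun w => ∃ w1 ∈ W, ∃ w2 ∈ W, blk k w1 = blk k w ∧ blk k w2 = blk k w ∧
    w1.1 < w2.1 ∧ w1.2 < w2.2)

lemma div_lt_of {k a b : ℕ} (h : a / k < b / k) : a < b := by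
  by_contra h'
  exact absurd (Nat.div_le_div_right (c := k) (not_lt.1 h')) (not_le.2 h)

lemma Good.noFour {W : Finset (ℕ × ℕ)} (h : Good W) {a b c d : ℕ × ℕ} (ha : a ∈ W) (hb : b ∈ W)
    (hc : c ∈ W) (hd : d ∈ W) (h1 : a.1 < b.1) (h2 : b.1 < c.1) (h3 : c.1 < d.1)
    (h4 : a.2 < b.2) (h5 : c.2 < d.2) : False := by
  have t1 := h.tri a ha b hb c hc h1 h2
  have t2 := h.tri a ha b hb d hd h1 (h2.trans h3)
  have t3 := h.tri a ha c hc d hd (h1.trans h2) h3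
  have i1 := h.inj a ha c hc
  have i2 := h.inj b hb c hc
  omega

lemma Good.noFour' {W : Finset (ℕ × ℕ)} (h : Good W) {a b c d : ℕ × ℕ} (ha : a ∈ W) (hb : b ∈ W)
    (hc : c ∈ W) (hd : d ∈ W) (h1 : a.2 < b.2) (h2 : b.2 < c.2) (h3 : c.2 < d.2)
    (h4 : a.1 < b.1) (h5 : c.1 < d.1) : False := by
  have tt : ∀ p q r : ℕ × ℕ, p ∈ W → q ∈ W → r ∈ W → p.2 < q.2 → q.2 < r.2 →
     ¬ (p.1 < q.1 ∧ q.1 < r.1) ∧ ¬ (q.1 < r.1 ∧ r.1 < p.1) ∧ ¬ (r.1 < p.1 ∧ p.1 < q.1) := by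
    intro p q r hp hq hr e1 e2
    refine ⟨?_, ?_, ?_⟩
    · rintro ⟨e3, e4⟩
      exact (h.tri p hp q hq r hr e3 e4).1 ⟨e1, e2⟩
    · rintro ⟨e3, e4⟩
      exact (h.tri q hq r hr p hp e3 e4).2.2 ⟨e1, e2⟩
    · rintro ⟨e3, e4⟩
      exact (h.tri r hr p hp q hq e3 e4).2.1 ⟨e1, e2⟩
  have t1 := tt a b c ha hb hc h1 h2
  have t2 := tt a b d ha hb hd h1 (h2.trans h3)
  have t3 := tt a c d ha hc hd (h1.trans h2) h3
  have i1 := h.inj a ha c hc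
  have i2 := h.inj b hb c hc
  omega

lemma Good.ch_one {W : Finset (ℕ × ℕ)} (h : Good W) {k : ℕ} {w w' : ℕ × ℕ} (hw : w ∈ ch k W)
    (hw' : w' ∈ ch k W) : blk k w = blk k w' := by
  simp only [ch, mem_filter] at hw hw'
  obtain ⟨-, a, ha, b, hb, ba, bb, x1, y1⟩ := hw
  obtain ⟨-, c, hc, d, hd, bc, bd, x2, y2⟩ := hw'
  have e1 := congrArg Prod.fst ba
  have e2 := congrArg Prod.fst bb
  have e3 := congrArg Prod.fst bc
  have e4 := congrArg Prod.fst bd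
  have f1 := congrArg Prod.snd ba
  have f2 := congrArg Prod.snd bb
  have f3 := congrArg Prod.snd bc
  have f4 := congrArg Prod.snd bd
  simp only [blk] at *
  refine Prod.ext ?_ ?_
  · by_contra hne
    rcases lt_or_gt_of_ne hne with hlt | hlt
    · exact h.noFour ha hb hc hd x1 (div_lt_of (k := k) (by simp_all)) x2 y1 y2
    · exact h.noFour hc hd ha hb x2 (div_lt_of (k := k) (by simp_all)) x1 y2 y1
  · by_contra hne
    rcases lt_or_gt_of_ne hne with hlt | hlt
    · exact h.noFour' ha hb hc hd y1 (div_lt_of (k := k) (by simp_all)) y2 x1 x2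
    · exact h.noFour' hc hd ha hb y2 (div_lt_of (k := k) (by simp_all)) y1 x2 x1

/-- increasing pairs inside `Ch` -/
def incr (Y : Finset (ℕ × ℕ)) : Finset ((ℕ × ℕ) × (ℕ × ℕ)) :=
  (Y ×ˢ Y).filter (fun z => z.1.1 < z.2.1 ∧ z.1.2 < z.2.2)

lemma Good.mantel {W : Finset (ℕ × ℕ)} (h : Good W) (k : ℕ) :
    4 * (incr (ch k W)).card ≤ (ch k W).card ^ 2 := by
  set Y := ch k W with hY
  have hYW : ∀ w ∈ Y, w ∈ W := fun w hw => (mem_filter.1 hw).1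
  set Lo := Y.filter (fun w => ∃ v ∈ Y, w.1 < v.1 ∧ w.2 < v.2)
  set Hi := Y.filter (fun w => ∃ v ∈ Y, v.1 < w.1 ∧ v.2 < w.2)
  have hd : Disjoint Lo Hi := by
    rw [Finset.disjoint_left]
    intro w hw hw'
    obtain ⟨hwY, v, hv, h1, h2⟩ := mem_filter.1 hw
    obtain ⟨-, u, hu, h3, h4⟩ := mem_filter.1 hw'
    exact (h.tri u (hYW u hu) w (hYW w hwY) v (hYW v hv) h3 h1).1 ⟨h4, h2⟩
  have hs : incr Y ⊆ Lo ×ˢ Hi := by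
    intro z hz
    simp only [incr, mem_filter, mem_product] at hz
    simp only [Lo, Hi, mem_filter, mem_product]
    exact ⟨⟨hz.1.1, z.2, hz.1.2, hz.2⟩, ⟨hz.1.2, z.1, hz.1.1, hz.2⟩⟩
  have h1 := card_le_card hs
  rw [card_product] at h1
  have h2 : Lo.card + Hi.card ≤ Y.card := by
    rw [← card_union_of_disjoint hd]
    exact card_le_card (union_subset (filter_subset _ _) (filter_subset _ _))
  have h3 : 4 * (Lo.card * Hi.card) ≤ (Lo.card + Hi.card) ^ 2 := by
    have := four_mul_le_pow_two_add Lo.card Hi.card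
    nlinarith
  calc _ ≤ 4 * (Lo.card * Hi.card) := by omega
    _ ≤ _ := h3
    _ ≤ _ := Nat.pow_le_pow_left h2 2

def same (k : ℕ) (W : Finset (ℕ × ℕ)) : Finset ((ℕ × ℕ) × (ℕ × ℕ)) :=
  (W ×ˢ W).filter (fun z => blk k z.1 = blk k z.2 ∧ z.1.1 < z.2.1 ∧ z.1.2 < z.2.2)
def rev (k : ℕ) (W : Finset (ℕ × ℕ)) : Finset ((ℕ × ℕ) × (ℕ × ℕ)) :=
  (W ×ˢ W).filter (fun z => blk k z.1 = blk k z.2 ∧ z.1.1 < z.2.1 ∧ z.2.2 < z.1.2)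
def lpair (k : ℕ) (Y : Finset (ℕ × ℕ)) : Finset ((ℕ × ℕ) × (ℕ × ℕ)) :=
  (Y ×ˢ Y).filter (fun z => blk k z.1 = blk k z.2 ∧ z.1.1 < z.2.1)

lemma same_card_le (k : ℕ) (W : Finset (ℕ × ℕ)) : (same k W).card ≤ (incr (ch k W)).card := by
  apply card_le_card
  intro z hz
  simp only [same, mem_filter, mem_product] at hz
  simp only [incr, ch, mem_filter, mem_product]
  exact ⟨⟨⟨hz.1.1, z.1, hz.1.1, z.2, hz.1.2, rfl, hz.2.1.symm, hz.2.2⟩,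
    ⟨hz.1.2, z.1, hz.1.1, z.2, hz.1.2, hz.2.1, rfl, hz.2.2⟩⟩, hz.2.2⟩

/-- pairs in the same block: square count -/
lemma card_sameblock (k : ℕ) (W Y : Finset (ℕ × ℕ)) (h : Good W) (hYW : Y ⊆ W) :
    ((Y ×ˢ Y).filter (fun z => blk k z.1 = blk k z.2)).card = Y.card + 2 * (lpair k Y).card := by
  have e : (Y ×ˢ Y).filter (fun z => blk k z.1 = blk k z.2) =
     (Y.image (fun w => (w, w))) ∪ (lpair k Y ∪ (lpair k Y).image Prod.swap) := by
    ext ⟨w, v⟩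
    simp only [lpair, mem_filter, mem_product, mem_union, mem_image, Prod.exists, Prod.swap_prod_mk,
      Prod.mk.injEq]
    constructor
    · rintro ⟨⟨hw, hv⟩, hb⟩
      rcases lt_trichotomy w.1 v.1 with hl | hl | hl
      · exact Or.inr (Or.inl ⟨⟨hw, hv⟩, hb, hl⟩)
      · left
        have := (h.inj w (hYW hw) v (hYW hv)).1 hl
        exact ⟨w.1, w.2, hw, rfl, Prod.ext hl this⟩
      · exact Or.inr (Or.inr ⟨v.1, v.2, w.1, w.2, ⟨⟨hv, hw⟩, hb.symm, hl⟩, rfl, rfl⟩)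
    · rintro (⟨a, b, hab, rfl, rfl⟩ | h1 | ⟨a, b, c, d, h1, rfl, rfl⟩)
      · exact ⟨⟨hab, hab⟩, rfl⟩
      · exact ⟨h1.1, h1.2.1⟩
      · exact ⟨⟨h1.1.2, h1.1.1⟩, h1.2.1.symm⟩
  rw [e, card_union_of_disjoint, card_union_of_disjoint, card_image_of_injective,
    card_image_of_injective _ Prod.swap_injective]
  · ring
  · intro a b hab
    exact (Prod.mk.inj hab).1
  · rw [Finset.disjoint_left]
    rintro z hz hz'
    simp only [lpair, mem_filter, mem_product, mem_image] at hz hz'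
    obtain ⟨u, hu, rfl⟩ := hz'
    have := hz.2.2
    have := hu.2.2
    simp at *
    omega
  · rw [Finset.disjoint_left]
    rintro z hz hz'
    simp only [lpair, mem_filter, mem_product, mem_image, mem_union] at hz hz'
    obtain ⟨u, hu, rfl⟩ := hz
    rcases hz' with hz' | ⟨v, hv, hv'⟩
    · simp at hz'
    · have := hv.2.2
      have e1 := congrArg Prod.fst hv'
      have e2 := congrArg Prod.snd hv'
      simp at e1 e2
      rw [e1, e2] at this
      exact lt_irrefl _ this

lemma Good.a_bound {W : Finset (ℕ × ℕ)} (h : Good W) (k : ℕ) :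
    2 * (lpair k (W \ ch k W)).card + 2 * (same k W).card ≤
      2 * (rev k W).card + (ch k W).card := by
  have hsub : ch k W ⊆ W := filter_subset _ _
  have h1 : (lpair k (W \ ch k W)).card + (lpair k (ch k W)).card ≤
      (rev k W).card + (incr (ch k W)).card := by
    rw [← card_union_of_disjoint]
    · refine le_trans (card_le_card ?_) (card_union_le _ _)
      intro z hz
      simp only [mem_union, lpair, rev, incr, mem_filter, mem_product, mem_sdiff] at hz ⊢
      rcases hz with ⟨⟨⟨a1, a2⟩, a3, a4⟩, a5, a6⟩ | ⟨⟨a1, a2⟩, a3, a4⟩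
      · left
        refine ⟨⟨a1, a3⟩, a5, a6, ?_⟩
        by_contra hc
        have hne : z.1.2 ≠ z.2.2 := fun e => by
          have := (h.inj _ a1 _ a3).2 e
          omega
        apply a2
        simp only [ch, mem_filter]
        exact ⟨a1, z.1, a1, z.2, a3, rfl, a5.symm, a6, by omega⟩
      · have hne : z.1.2 ≠ z.2.2 := fun e => by
          have := (h.inj _ (hsub a1) _ (hsub a2)).2 e
          omega
        by_cases hc : z.1.2 < z.2.2
        · exact Or.inr ⟨⟨a1, a2⟩, a4, hc⟩
        · exact Or.inl ⟨⟨hsub a1, hsub a2⟩, a3, a4, by omega⟩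
    · rw [Finset.disjoint_left]
      intro z hz hz'
      simp only [lpair, mem_filter, mem_product, mem_sdiff] at hz hz'
      exact hz.1.1.2 hz'.1.1
  have h2 := card_sameblock k W (ch k W) h hsub
  have h3 : (ch k W ×ˢ ch k W).filter (fun z => blk k z.1 = blk k z.2) = ch k W ×ˢ ch k W := by
    rw [filter_true_of_mem]
    intro z hz
    rw [mem_product] at hz
    exact h.ch_one hz.1 hz.2
  rw [h3, card_product] at h2
  have h4 := h.mantel k
  have h5 := same_card_le k W
  have h6 : (ch k W).card * (ch k W).card = (ch k W).card ^ 2 := by ring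
  omega

lemma Good.Y_bound {W : Finset (ℕ × ℕ)} (h : Good W) (k : ℕ) (Y : Finset (ℕ × ℕ))
    (hY : Y ⊆ W \ ch k W) (hb : (Y.image (blk k)).card ≤ 4) :
    Y.card ^ 2 ≤ 4 * (Y.card + 2 * (lpair k (W \ ch k W)).card) := by
  have h1 := card_sameblock k W Y h (hY.trans sdiff_subset)
  have h2 : (lpair k Y).card ≤ (lpair k (W \ ch k W)).card := by
    apply card_le_card
    intro z hz
    simp only [lpair, mem_filter, mem_product] at hz ⊢
    exact ⟨⟨hY hz.1.1, hY hz.1.2⟩, hz.2⟩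
  have h3 : Y.card = ∑ b ∈ Y.image (blk k), (Y.filter (fun w => blk k w = b)).card :=
    card_eq_sum_card_fiberwise (fun x hx => by simpa using ⟨x.1, x.2, hx, rfl⟩)
  have h4 : ((Y ×ˢ Y).filter (fun z => blk k z.1 = blk k z.2)).card =
      ∑ b ∈ Y.image (blk k), (Y.filter (fun w => blk k w = b)).card ^ 2 := by
    rw [card_eq_sum_card_fiberwise (f := fun z => blk k z.1) (t := Y.image (blk k))]
    · apply sum_congr rfl
      intro b _
      rw [sq, ← card_product]
      congr 1
      ext z
      simp only [mem_filter, mem_product]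
      constructor
      · rintro ⟨⟨⟨p, q⟩, e⟩, e'⟩
        exact ⟨⟨p, e'⟩, q, by rw [← e, e']⟩
      · rintro ⟨⟨p, e⟩, q, e'⟩
        exact ⟨⟨⟨p, q⟩, by rw [e, e']⟩, e⟩
    · intro z hz
      simp only [coe_filter, mem_product, Set.mem_ofPred_eq] at hz
      exact mem_coe.2 (mem_image_of_mem _ hz.1.1)
  have h5 := sq_sum_le_card_mul_sum_sq (s := Y.image (blk k))
    (f := fun b => (Y.filter (fun w => blk k w = b)).card)
  rw [← h3, ← h4, h1] at h5
  calc _ ≤ _ := h5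
    _ ≤ 4 * (Y.card + 2 * (lpair k Y).card) := Nat.mul_le_mul_right _ hb
    _ ≤ _ := by omega

lemma ch_mono (k : ℕ) (W : Finset (ℕ × ℕ)) : ch k W ⊆ ch (k * 2) W := by
  intro w hw
  simp only [ch, mem_filter] at hw ⊢
  obtain ⟨hw, a, ha, b, hb, e1, e2, h⟩ := hw
  refine ⟨hw, a, ha, b, hb, ?_, ?_, h⟩
  · simp only [blk, Prod.mk.injEq, ← Nat.div_div_eq_div_mul] at e1 ⊢
    rw [e1.1, e1.2]; simp
  · simp only [blk, Prod.mk.injEq, ← Nat.div_div_eq_div_mul] at e2 ⊢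
    rw [e2.1, e2.2]; simp

lemma ch_onek (W : Finset (ℕ × ℕ)) : ch 1 W = ∅ := by
  rw [ch, filter_eq_empty_iff]
  rintro w hw ⟨a, ha, b, hb, e1, e2, h⟩
  simp only [blk, Prod.mk.injEq, Nat.div_one] at e1 e2
  omega

lemma Good.mid {W : Finset (ℕ × ℕ)} (h : Good W) (k : ℕ) :
    (ch (k*2) W \ ch k W).card ^ 2 + 8 * (same k W).card ≤ 4 * (W.card + 2 * (rev k W).card) := by
  have h1 := h.Y_bound k (ch (k*2) W \ ch k W) (sdiff_subset_sdiff (filter_subset _ _) le_rfl) (by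
    by_cases he : ch (k*2) W = ∅
    · simp [he]
    obtain ⟨w0, hw0⟩ := nonempty_iff_ne_empty.2 he
    set b := blk (k*2) w0
    have : (ch (k*2) W \ ch k W).image (blk k) ⊆
       ({2*b.1, 2*b.1+1} : Finset ℕ) ×ˢ ({2*b.2, 2*b.2+1} : Finset ℕ) := by
      intro z hz
      obtain ⟨w, hw, rfl⟩ := mem_image.1 hz
      have e : blk (k*2) w = b := h.ch_one (mem_sdiff.1 hw).1 hw0
      simp only [mem_product, mem_insert, mem_singleton]
      rw [← e]
      simp only [blk, ← Nat.div_div_eq_div_mul]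
      omega
    refine (card_le_card this).trans ?_
    rw [card_product]
    exact Nat.mul_le_mul card_le_two card_le_two)
  have h2 := h.a_bound k
  have h3 := card_sdiff_add_card_eq_card (ch_mono k W)
  have h4 : (ch (k*2) W).card ≤ W.card := card_le_card (filter_subset _ _)
  omega

lemma Good.top {W : Finset (ℕ × ℕ)} (h : Good W) (d : ℕ) (hW : W ⊆ range d ×ˢ range d) :
    (W \ ch d W).card ^ 2 + 8 * (same d W).card ≤ 4 * (W.card + 2 * (rev d W).card) := by
  have h1 := h.Y_bound d (W \ ch d W) le_rfl (by
    have : (W \ ch d W).image (blk d) ⊆ {(0,0)} := by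
      intro z hz
      obtain ⟨w, hw, rfl⟩ := mem_image.1 hz
      have := hW (mem_sdiff.1 hw).1
      simp only [mem_product, mem_range] at this
      simp [blk, Nat.div_eq_of_lt this.1, Nat.div_eq_of_lt this.2]
    exact (card_le_card this).trans (by simp))
  have h2 := h.a_bound d
  have h3 := card_sdiff_add_card_eq_card (show ch d W ⊆ W from filter_subset _ _)
  omega

lemma ch_card_le_sum (W : Finset (ℕ × ℕ)) (J : ℕ) :
    (ch (2^J) W).card = ∑ j ∈ range J, (ch (2^j*2) W \ ch (2^j) W).card := by
  induction J with
  | zero => simp [ch_onek]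
  | succ J ih =>
    rw [sum_range_succ, ← ih, pow_succ, add_comm, card_sdiff_add_card_eq_card (ch_mono _ W)]

lemma Good.main {W : Finset (ℕ × ℕ)} (h : Good W) (J : ℕ)
    (hW : W ⊆ range (2^J) ×ˢ range (2^J)) :
    W.card ^ 2 + (J+1) * ∑ j ∈ range (J+1), 8 * (same (2^j) W).card ≤
      (J+1) * ∑ j ∈ range (J+1), 4 * (W.card + 2 * (rev (2^j) W).card) := by
  set y : ℕ → ℕ := fun j => if j < J then (ch (2^j*2) W \ ch (2^j) W).card
    else (W \ ch (2^J) W).card with hy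
  have h1 : W.card = ∑ j ∈ range (J+1), y j := by
    rw [sum_range_succ]
    have h3 := card_sdiff_add_card_eq_card (show ch (2^J) W ⊆ W from filter_subset _ _)
    rw [ch_card_le_sum] at h3
    have : ∑ j ∈ range J, y j = ∑ j ∈ range J, (ch (2^j*2) W \ ch (2^j) W).card := by
      apply sum_congr rfl
      intro j hj
      simp [hy, mem_range.1 hj]
    rw [this]
    simp only [hy, lt_irrefl, if_false]
    omega
  have h2 := sq_sum_le_card_mul_sum_sq (s := range (J+1)) (f := y)
  rw [← h1, card_range] at h2
  have h3 : ∑ j ∈ range (J+1), (y j ^ 2 + 8 * (same (2^j) W).card) ≤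
      ∑ j ∈ range (J+1), 4 * (W.card + 2 * (rev (2^j) W).card) := by
    apply sum_le_sum
    intro j hj
    by_cases hj' : j < J
    · simp only [hy, hj', if_true]
      exact h.mid _
    · have : j = J := by have := mem_range.1 hj; omega
      subst this
      simp only [hy, lt_irrefl, if_false]
      exact h.top _ hW
  rw [sum_add_distrib] at h3
  calc _ ≤ (J+1) * ∑ j ∈ range (J+1), y j ^ 2 + (J+1) * ∑ j ∈ range (J+1), 8 * (same (2^j) W).card :=
        Nat.add_le_add_right h2 _
    _ = (J+1) * (∑ j ∈ range (J+1), y j ^ 2 + ∑ j ∈ range (J+1), 8 * (same (2^j) W).card) := by ring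
    _ ≤ _ := Nat.mul_le_mul_left _ h3
end LCT

namespace LCT
open Finset
open scoped Classical

lemma swap_count {τ γ : Type*} (T : Finset τ) (φ : τ → γ × γ) :
    ((T ×ˢ T).filter (fun z => φ z.2 = (φ z.1).swap)).card ≤
    ((T ×ˢ T).filter (fun z => φ z.1 = φ z.2)).card := by
  set C := T.image φ ∪ (T.image φ).image Prod.swap with hC
  set N : γ × γ → ℕ := fun c => (T.filter (fun t => φ t = c)).card with hN
  have hsw : ∀ c ∈ C, c.swap ∈ C := by
    intro c hc
    rcases mem_union.1 hc with h | h
    · exact mem_union_right _ (mem_image_of_mem _ h)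
    · obtain ⟨d, hd, rfl⟩ := mem_image.1 h
      rw [Prod.swap_swap]
      exact mem_union_left _ hd
  have hmap : ∀ z ∈ T, φ z ∈ C := fun z hz => mem_union_left _ (mem_image_of_mem _ hz)
  have h1 : ((T ×ˢ T).filter (fun z => φ z.2 = (φ z.1).swap)).card = ∑ c ∈ C, N c * N c.swap := by
    rw [card_eq_sum_card_fiberwise (f := fun z => φ z.1) (t := C)]
    · apply sum_congr rfl
      intro b _
      rw [hN, ← card_product]
      congr 1
      ext z
      simp only [mem_filter, mem_product]
      constructor
      · rintro ⟨⟨⟨p, q⟩, e⟩, e'⟩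
        exact ⟨⟨p, e'⟩, q, by rw [e, e']⟩
      · rintro ⟨⟨p, e⟩, q, e'⟩
        exact ⟨⟨⟨p, q⟩, by rw [e, e']⟩, e⟩
    · intro z hz
      have := mem_product.1 (mem_filter.1 (mem_coe.1 hz)).1
      exact mem_coe.2 (hmap _ this.1)
  have h2 : ((T ×ˢ T).filter (fun z => φ z.1 = φ z.2)).card = ∑ c ∈ C, N c ^ 2 := by
    rw [card_eq_sum_card_fiberwise (f := fun z => φ z.1) (t := C)]
    · apply sum_congr rfl
      intro b _
      rw [hN, sq, ← card_product]
      congr 1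
      ext z
      simp only [mem_filter, mem_product]
      constructor
      · rintro ⟨⟨⟨p, q⟩, e⟩, e'⟩
        exact ⟨⟨p, e'⟩, q, by rw [← e, e']⟩
      · rintro ⟨⟨p, e⟩, q, e'⟩
        exact ⟨⟨⟨p, q⟩, by rw [e, e']⟩, e⟩
    · intro z hz
      have := mem_product.1 (mem_filter.1 (mem_coe.1 hz)).1
      exact mem_coe.2 (hmap _ this.1)
  have h3 : ∑ c ∈ C, N c.swap ^ 2 = ∑ c ∈ C, N c ^ 2 :=
    sum_bij' (fun c _ => c.swap) (fun c _ => c.swap) hsw hsw (by simp) (by simp) (by simp)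
  have h4 : ∑ c ∈ C, 2 * (N c * N c.swap) ≤ ∑ c ∈ C, (N c ^ 2 + N c.swap ^ 2) := by
    apply sum_le_sum
    intro c _
    have := two_mul_le_add_sq (N c) (N c.swap)
    nlinarith
  rw [← mul_sum, sum_add_distrib, h3] at h4
  rw [h1, h2]
  omega

variable {ι β : Type*}

def WW (s : ι → ℕ → β) (d : ℕ) (i j : ι) : Finset (ℕ × ℕ) :=
  (range d ×ˢ range d).filter (fun w => s i w.1 = s j w.2)

def TT (I : Finset ι) (d k : ℕ) : Finset (ι × (ℕ × ℕ)) :=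
  (I ×ˢ (range d ×ˢ range d)).filter (fun t => t.2.1 < t.2.2 ∧ t.2.1 / k = t.2.2 / k)

lemma rev_le (I : Finset ι) (s : ι → ℕ → β) (d k : ℕ)
    (hinj : ∀ i ∈ I, ∀ x < d, ∀ y < d, s i x = s i y → x = y) :
    ∑ p ∈ I.offDiag, (rev k (WW s d p.1 p.2)).card ≤
      ∑ p ∈ I.offDiag, (same k (WW s d p.1 p.2)).card + I.card * d ^ 2 := by
  set φ : ι × (ℕ × ℕ) → β × β := fun t => (s t.1 t.2.1, s t.1 t.2.2)
  set T := TT I d k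
  have hT : T.card ≤ I.card * d ^ 2 := by
    refine (card_le_card (filter_subset _ _)).trans ?_
    rw [card_product, card_product, card_range, sq]
  have h1 : ∑ p ∈ I.offDiag, (rev k (WW s d p.1 p.2)).card ≤
      ((T ×ˢ T).filter (fun z => φ z.2 = (φ z.1).swap)).card := by
    rw [← card_sigma]
    apply card_le_card_of_injOn
      (fun q => ((q.1.1, q.2.1.1, q.2.2.1), (q.1.2, q.2.2.2, q.2.1.2)))
    · rintro ⟨⟨i, j⟩, ⟨⟨x1, y1⟩, ⟨x2, y2⟩⟩⟩ hq
      simp only [mem_coe, mem_sigma, mem_offDiag, rev, WW, mem_filter, mem_product, mem_range, blk,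
        Prod.mk.injEq] at hq
      simp only [mem_coe, mem_filter, mem_product, T, TT, φ, mem_range, Prod.swap_prod_mk,
        Prod.mk.injEq]
      obtain ⟨⟨hi, hj, hij⟩, ⟨⟨⟨a1, a2⟩, a3⟩, ⟨a4, a5⟩, a6⟩, ⟨a7, a8⟩, a9, a10⟩ := hq
      exact ⟨⟨⟨⟨hi, a1, a4⟩, a9, a7⟩, ⟨hj, a5, a2⟩, a10, a8.symm⟩, a6.symm, a3.symm⟩
    · rintro ⟨⟨i, j⟩, ⟨⟨x1, y1⟩, ⟨x2, y2⟩⟩⟩ _ ⟨⟨i', j'⟩, ⟨⟨x1', y1'⟩, ⟨x2', y2'⟩⟩⟩ _ h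
      simp only [Prod.mk.injEq] at h
      obtain ⟨⟨rfl, rfl, rfl⟩, rfl, rfl, rfl⟩ := h
      rfl
  have h2 : ((T ×ˢ T).filter (fun z => φ z.1 = φ z.2)).card ≤
      ∑ p ∈ I.offDiag, (same k (WW s d p.1 p.2)).card + T.card := by
    rw [← card_filter_add_card_filter_not (s := (T ×ˢ T).filter (fun z => φ z.1 = φ z.2))
      (fun z => z.1.1 ≠ z.2.1)]
    apply Nat.add_le_add
    · rw [← card_sigma]
      apply card_le_card_of_injOn
        (fun z => (⟨(z.1.1, z.2.1), ((z.1.2.1, z.2.2.1), (z.1.2.2, z.2.2.2))⟩ :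
          (_ : ι × ι) × ((ℕ × ℕ) × (ℕ × ℕ))))
      · rintro ⟨⟨i, x1, x2⟩, ⟨j, y1, y2⟩⟩ hq
        simp only [mem_coe, mem_filter, mem_product, T, TT, φ, mem_range, Prod.mk.injEq] at hq
        simp only [mem_coe, mem_sigma, mem_offDiag, same, WW, mem_filter, mem_product, mem_range,
          blk, Prod.mk.injEq]
        tauto
      · rintro ⟨⟨i, x1, x2⟩, ⟨j, y1, y2⟩⟩ _ ⟨⟨i', x1', x2'⟩, ⟨j', y1', y2'⟩⟩ _ h
        simp only [Sigma.mk.injEq, Prod.mk.injEq, heq_eq_eq] at h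
        obtain ⟨⟨rfl, rfl⟩, ⟨rfl, rfl⟩, rfl, rfl⟩ := h
        rfl
    · apply card_le_card_of_injOn (fun z => z.1)
      · intro z hz
        simp only [mem_coe, mem_filter, mem_product] at hz
        exact hz.1.1.1
      · rintro ⟨⟨i, x1, x2⟩, ⟨j, y1, y2⟩⟩ hz ⟨⟨i', x1', x2'⟩, ⟨j', y1', y2'⟩⟩ hz' h
        simp only [mem_coe, mem_filter, mem_product, T, TT, φ, mem_range, Prod.mk.injEq, not_not]
          at hz hz' h
        obtain ⟨rfl, rfl, rfl⟩ := h
        obtain ⟨⟨⟨⟨⟨hi, a1, a2⟩, a3⟩, ⟨hj, a4, a5⟩, a6⟩, a7, a8⟩, rfl⟩ := hz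
        obtain ⟨⟨⟨⟨⟨_, b1, b2⟩, b3⟩, ⟨_, b4, b5⟩, b6⟩, b7, b8⟩, rfl⟩ := hz'
        have e1 := hinj _ hi _ a1 _ a4 a7
        have e2 := hinj _ hi _ a2 _ a5 a8
        have e3 := hinj _ hi _ b1 _ b4 b7
        have e4 := hinj _ hi _ b2 _ b5 b8
        subst e1 e2 e3 e4
        rfl
  have := swap_count T φ
  omega

lemma omega_ge (I : Finset ι) (s : ι → ℕ → β) (d : ℕ) (B : Finset β)
    (hinj : ∀ i ∈ I, ∀ x < d, ∀ y < d, s i x = s i y → x = y)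
    (hB : ∀ i ∈ I, ∀ x < d, s i x ∈ B) (hc : B.card ≤ I.card) (hne : I.Nonempty) :
    I.card * d ^ 2 ≤ ∑ p ∈ I.offDiag, (WW s d p.1 p.2).card + I.card * d := by
  set X := I ×ˢ range d
  set N : β → ℕ := fun b => (X.filter (fun z => s z.1 z.2 = b)).card
  have hX : X.card = I.card * d := by simp [X]
  have hm : ∀ z ∈ X, s z.1 z.2 ∈ B := by
    intro z hz
    simp only [X, mem_product, mem_range] at hz
    exact hB _ hz.1 _ hz.2
  have h1 : X.card = ∑ b ∈ B, N b := card_eq_sum_card_fiberwise (fun z hz => hm z hz)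
  have h2 : ((X ×ˢ X).filter (fun z => s z.1.1 z.1.2 = s z.2.1 z.2.2)).card = ∑ b ∈ B, N b ^ 2 := by
    rw [card_eq_sum_card_fiberwise (f := fun z => s z.1.1 z.1.2) (t := B)]
    · apply sum_congr rfl
      intro b _
      simp only [N]
      rw [sq, ← card_product]
      congr 1
      ext z
      simp only [mem_filter, mem_product]
      constructor
      · rintro ⟨⟨⟨p, q⟩, e⟩, e'⟩
        exact ⟨⟨p, e'⟩, q, by rw [← e, e']⟩
      · rintro ⟨⟨p, e⟩, q, e'⟩
        exact ⟨⟨⟨p, q⟩, by rw [e, e']⟩, e⟩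
    · intro z hz
      have := mem_product.1 (mem_filter.1 (mem_coe.1 hz)).1
      exact mem_coe.2 (hm _ this.1)
  have h3 : ((X ×ˢ X).filter (fun z => s z.1.1 z.1.2 = s z.2.1 z.2.2)).card ≤
      ∑ p ∈ I.offDiag, (WW s d p.1 p.2).card + X.card := by
    rw [← card_filter_add_card_filter_not
      (s := (X ×ˢ X).filter (fun z => s z.1.1 z.1.2 = s z.2.1 z.2.2)) (fun z => z.1.1 ≠ z.2.1)]
    apply Nat.add_le_add
    · rw [← card_sigma]
      apply card_le_card_of_injOn
        (fun z => (⟨(z.1.1, z.2.1), (z.1.2, z.2.2)⟩ : (_ : ι × ι) × (ℕ × ℕ)))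
      · rintro ⟨⟨i, x⟩, ⟨j, y⟩⟩ hq
        simp only [mem_coe, mem_filter, mem_product, X, mem_range] at hq
        simp only [mem_coe, mem_sigma, mem_offDiag, WW, mem_filter, mem_product, mem_range]
        tauto
      · rintro ⟨⟨i, x⟩, ⟨j, y⟩⟩ _ ⟨⟨i', x'⟩, ⟨j', y'⟩⟩ _ h
        simp only [Sigma.mk.injEq, Prod.mk.injEq, heq_eq_eq] at h
        obtain ⟨⟨rfl, rfl⟩, rfl, rfl⟩ := h
        rfl
    · apply card_le_card_of_injOn (fun z => z.1)
      · intro z hz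
        simp only [mem_coe, mem_filter, mem_product] at hz
        exact hz.1.1.1
      · rintro ⟨⟨i, x⟩, ⟨j, y⟩⟩ hz ⟨⟨i', x'⟩, ⟨j', y'⟩⟩ hz' h
        simp only [mem_coe, mem_filter, mem_product, X, mem_range, Prod.mk.injEq, not_not]
          at hz hz' h
        obtain ⟨rfl, rfl⟩ := h
        obtain ⟨⟨⟨⟨hi, a1⟩, ⟨hj, a2⟩⟩, a3⟩, rfl⟩ := hz
        obtain ⟨⟨⟨⟨_, b1⟩, ⟨_, b2⟩⟩, b3⟩, rfl⟩ := hz'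
        have e1 := hinj _ hi _ a1 _ a2 a3
        have e2 := hinj _ hi _ b1 _ b2 b3
        subst e1 e2
        rfl
  have h4 := sq_sum_le_card_mul_sum_sq (s := B) (f := N)
  rw [← h1, ← h2, hX] at h4
  rw [hX] at h3
  have hp : 0 < I.card := hne.card_pos
  have h5 : (I.card * d) ^ 2 ≤
      I.card * (∑ p ∈ I.offDiag, (WW s d p.1 p.2).card + I.card * d) :=
    h4.trans (Nat.mul_le_mul hc h3)
  apply Nat.le_of_mul_le_mul_left (c := I.card) _ hp
  calc _ = (I.card * d) ^ 2 := by ring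
    _ ≤ _ := h5

theorem MT (I : Finset ι) (s : ι → ℕ → β) (B : Finset β) (J : ℕ) (hJ : 1 ≤ J)
    (hinj : ∀ i ∈ I, ∀ x < 2^J, ∀ y < 2^J, s i x = s i y → x = y)
    (hB : ∀ i ∈ I, ∀ x < 2^J, s i x ∈ B) (hc : B.card ≤ I.card) (hne : I.Nonempty)
    (htri : ∀ i ∈ I, ∀ j ∈ I, i ≠ j → ∀ x1 x2 x3 y1 y2 y3 : ℕ, x1 < x2 → x2 < x3 → x3 < 2^J →
      y1 < 2^J → y2 < 2^J → y3 < 2^J → s i x1 = s j y1 → s i x2 = s j y2 → s i x3 = s j y3 →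
      ¬ (y1 < y2 ∧ y2 < y3) ∧ ¬ (y2 < y3 ∧ y3 < y1) ∧ ¬ (y3 < y1 ∧ y1 < y2)) :
    (2^J)^2 ≤ 40 * (J+1)^2 * I.card := by
  set d := 2^J with hd
  have hgood : ∀ p ∈ I.offDiag, Good (WW s d p.1 p.2) := by
    intro p hp
    obtain ⟨hi, hj, hij⟩ := mem_offDiag.1 hp
    constructor
    · intro w hw w' hw'
      simp only [WW, mem_filter, mem_product, mem_range] at hw hw'
      constructor
      · intro e
        apply hinj _ hj _ hw.1.2 _ hw'.1.2
        rw [← hw.2, ← hw'.2, e]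
      · intro e
        apply hinj _ hi _ hw.1.1 _ hw'.1.1
        rw [hw.2, hw'.2, e]
    · intro a ha b hb c hc hab hbc
      simp only [WW, mem_filter, mem_product, mem_range] at ha hb hc
      exact htri _ hi _ hj hij _ _ _ _ _ _ hab hbc hc.1.1 ha.1.2 hb.1.2 hc.1.2 ha.2 hb.2 hc.2
  set N := I.card with hN
  set O := ∑ p ∈ I.offDiag, (WW s d p.1 p.2).card with hO
  have h1 : ∑ p ∈ I.offDiag, (WW s d p.1 p.2).card ^ 2 ≤ 4 * (J+1)^2 * (O + 2 * N * d^2) := by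
    have h2 := sum_le_sum (fun p hp => (hgood p hp).main J (filter_subset _ _))
    rw [sum_add_distrib, ← mul_sum, ← mul_sum, sum_comm, sum_comm (s := I.offDiag)] at h2
    have h3 : ∑ j ∈ range (J+1), ∑ p ∈ I.offDiag, 4 * ((WW s d p.1 p.2).card +
        2 * (rev (2^j) (WW s d p.1 p.2)).card) ≤
        ∑ j ∈ range (J+1), ∑ p ∈ I.offDiag, 8 * (same (2^j) (WW s d p.1 p.2)).card +
        (J+1) * (4 * (O + 2 * N * d^2)) := by
      have : (J+1) * (4 * (O + 2 * N * d^2)) = ∑ j ∈ range (J+1), (4 * (O + 2 * N * d^2)) := by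
        simp
      rw [this, ← sum_add_distrib]
      apply sum_le_sum
      intro j _
      have h4 := rev_le I s d (2^j) hinj
      rw [← mul_sum, ← mul_sum, sum_add_distrib, ← mul_sum]
      have : I.card * d^2 = N * d^2 := rfl
      have e2 : 2 * N * d^2 = 2 * (N * d^2) := by ring
      rw [e2]
      omega
    have h4 := Nat.mul_le_mul_left (J+1) h3
    have h5 : (J+1) * ((J+1) * (4 * (O + 2 * N * d^2))) = 4 * (J+1)^2 * (O + 2 * N * d^2) := by ring
    rw [mul_add, h5] at h4
    omega
  have h6 := omega_ge I s d B hinj hB hc hne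
  have h7 := sq_sum_le_card_mul_sum_sq (s := I.offDiag) (f := fun p => (WW s d p.1 p.2).card)
  have h8 : I.offDiag.card ≤ N^2 := by
    rw [offDiag_card, sq]; exact Nat.sub_le _ _
  have hd2 : 2 ≤ d := by
    calc 2 = 2^1 := rfl
      _ ≤ 2^J := Nat.pow_le_pow_right (by norm_num) hJ
  have hNp : 0 < N := hne.card_pos
  have h9 : N * d^2 ≤ 2 * O := by
    have : 2 * (N * d) ≤ N * d^2 := by
      calc 2 * (N * d) = (N * d) * 2 := by ring
        _ ≤ (N * d) * d := Nat.mul_le_mul_left _ hd2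
        _ = _ := by ring
    rw [← hN, ← hO] at h6
    omega
  have h10 : O^2 ≤ N^2 * (4 * (J+1)^2 * (5 * O)) := by
    calc O^2 ≤ _ := h7
      _ ≤ N^2 * (4 * (J+1)^2 * (O + 2 * N * d^2)) := Nat.mul_le_mul h8 h1
      _ ≤ _ := by
        apply Nat.mul_le_mul_left
        apply Nat.mul_le_mul_left
        have e2 : 2 * N * d^2 = 2 * (N * d^2) := by ring
        omega
  have hOp : 0 < O := by
    have : 0 < N * d^2 := by positivity
    omega
  have h11 : O ≤ 20 * N^2 * (J+1)^2 := by
    apply Nat.le_of_mul_le_mul_left (c := O) _ hOp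
    calc O * O = O^2 := by ring
      _ ≤ _ := h10
      _ = _ := by ring
  apply Nat.le_of_mul_le_mul_left (c := N) _ hNp
  calc N * d^2 ≤ 2 * O := h9
    _ ≤ 2 * (20 * N^2 * (J+1)^2) := by omega
    _ = _ := by ring
end LCT

namespace LCT
open Finset
open scoped Classical

abbrev Quad := EuclideanSpace ℝ (Fin 3)

def ev (f : Quad) (t : ℝ) : ℝ := f 0 * t ^ 2 + f 1 * t + f 2

lemma ev_sub (f g : Quad) (t : ℝ) : ev (f - g) t = ev f t - ev g t := by
  simp [ev]; ring

lemma ev_add (f g : Quad) (t : ℝ) : ev (f + g) t = ev f t + ev g t := by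
  simp [ev]; ring

lemma ev_smul (c : ℝ) (g : Quad) (t : ℝ) : ev (c • g) t = c * ev g t := by
  simp [ev]; ring

lemma ev_cont (f : Quad) : Continuous (ev f) := by
  unfold ev; fun_prop

lemma quad_ext {f g : Quad} (h0 : f 0 = g 0) (h1 : f 1 = g 1) (h2 : f 2 = g 2) : f = g := by
  ext i; fin_cases i <;> assumption

lemma ev_identity (D : Quad) (x1 x2 x3 x4 : ℝ) :
    ev D x1 * ((x3-x2)*(x4-x2)*(x4-x3)) - ev D x2 * ((x3-x1)*(x4-x1)*(x4-x3))
    + ev D x3 * ((x2-x1)*(x4-x1)*(x4-x2)) - ev D x4 * ((x2-x1)*(x3-x1)*(x3-x2)) = 0 := by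
  unfold ev; ring

lemma no_alt {D : Quad} {x1 x2 x3 x4 : ℝ} (h12 : x1 < x2) (h23 : x2 < x3) (h34 : x3 < x4)
    (h1 : 0 < ev D x1) (h2 : ev D x2 < 0) (h3 : 0 < ev D x3) (h4 : ev D x4 < 0) : False := by
  have h := ev_identity D x1 x2 x3 x4
  have a21 : 0 < x2 - x1 := by linarith
  have a32 : 0 < x3 - x2 := by linarith
  have a43 : 0 < x4 - x3 := by linarith
  have a31 : 0 < x3 - x1 := by linarith
  have a42 : 0 < x4 - x2 := by linarith
  have a41 : 0 < x4 - x1 := by linarith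
  have b1 := mul_pos h1 (mul_pos (mul_pos a32 a42) a43)
  have b2 := mul_pos (neg_pos.2 h2) (mul_pos (mul_pos a31 a41) a43)
  have b3 := mul_pos h3 (mul_pos (mul_pos a21 a41) a42)
  have b4 := mul_pos (neg_pos.2 h4) (mul_pos (mul_pos a21 a31) a32)
  linarith

lemma ev_neg (f : Quad) (t : ℝ) : ev (-f) t = - ev f t := by
  simp [ev]; ring

lemma no_alt' {D : Quad} {x1 x2 x3 x4 : ℝ} (h12 : x1 < x2) (h23 : x2 < x3) (h34 : x3 < x4)
    (h1 : ev D x1 < 0) (h2 : 0 < ev D x2) (h3 : ev D x3 < 0) (h4 : 0 < ev D x4) : False :=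
  no_alt (D := -D) h12 h23 h34 (by rw [ev_neg]; linarith) (by rw [ev_neg]; linarith)
    (by rw [ev_neg]; linarith) (by rw [ev_neg]; linarith)

lemma ev_zero3 {D : Quad} {x1 x2 x3 : ℝ} (h12 : x1 ≠ x2) (h23 : x2 ≠ x3) (h13 : x1 ≠ x3)
    (h1 : ev D x1 = 0) (h2 : ev D x2 = 0) (h3 : ev D x3 = 0) : D = 0 := by
  have e1 : D 0 * (x1 + x2) + D 1 = 0 := by
    apply mul_left_cancel₀ (sub_ne_zero.2 h12)
    unfold ev at *
    linear_combination h1 - h2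
  have e2 : D 0 * (x1 + x3) + D 1 = 0 := by
    apply mul_left_cancel₀ (sub_ne_zero.2 h13)
    unfold ev at *
    linear_combination h1 - h3
  have e3 : D 0 = 0 := by
    apply mul_left_cancel₀ (sub_ne_zero.2 h23)
    linear_combination e1 - e2
  have e4 : D 1 = 0 := by rw [e3] at e1; linarith
  have e5 : D 2 = 0 := by unfold ev at h1; rw [e3, e4] at h1; linarith
  exact quad_ext (by simpa using e3) (by simpa using e4) (by simpa using e5)

lemma ev_eq3 {f g : Quad} {x1 x2 x3 : ℝ} (h12 : x1 ≠ x2) (h23 : x2 ≠ x3) (h13 : x1 ≠ x3)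
    (h1 : ev f x1 = ev g x1) (h2 : ev f x2 = ev g x2) (h3 : ev f x3 = ev g x3) : f = g := by
  apply sub_eq_zero.1
  apply ev_zero3 h12 h23 h13 <;> rw [ev_sub] <;> linarith

/-- zeros at `x1<x2`: factor form -/
lemma ev_factor {D : Quad} {x1 x2 : ℝ} (h12 : x1 ≠ x2) (h1 : ev D x1 = 0) (h2 : ev D x2 = 0)
    (x : ℝ) : ev D x = D 0 * ((x - x1) * (x - x2)) := by
  have e1 : D 0 * (x1 + x2) + D 1 = 0 := by
    apply mul_left_cancel₀ (sub_ne_zero.2 h12)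
    unfold ev at *
    linear_combination h1 - h2
  unfold ev at *
  linear_combination h1 + (x - x1) * e1

/-- Lens data -/
structure Lens where
  u : Quad
  l : Quad
  x1 : ℝ
  x2 : ℝ

structure Lens.Ok (L : Lens) : Prop where
  lt : L.x1 < L.x2
  e1 : ev L.u L.x1 = ev L.l L.x1
  e2 : ev L.u L.x2 = ev L.l L.x2
  pos : ∃ x, L.x1 < x ∧ x < L.x2 ∧ ev L.l x < ev L.u x

lemma Lens.Ok.fac {L : Lens} (h : L.Ok) : ∃ c : ℝ, 0 < c ∧ ∀ x, ev L.u x - ev L.l x =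
    c * ((x - L.x1) * (L.x2 - x)) := by
  have f := ev_factor (D := L.u - L.l) h.lt.ne (by rw [ev_sub]; linarith [h.e1])
    (by rw [ev_sub]; linarith [h.e2])
  obtain ⟨x, hx1, hx2, hx⟩ := h.pos
  refine ⟨-(L.u - L.l) 0, ?_, ?_⟩
  · have := f x
    rw [ev_sub] at this
    have h3 : 0 < (x - L.x1) * (L.x2 - x) := mul_pos (by linarith) (by linarith)
    by_contra hc
    have : ev L.u x - ev L.l x = -(L.u - L.l) 0 * ((x - L.x1) * (L.x2 - x)) := by
      rw [this]; ring
    nlinarith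
  · intro x
    have := f x
    rw [ev_sub] at this
    rw [this]; ring

def Lens.c (L : Lens) : ℝ := (L.x1 + L.x2) / 2

lemma Lens.Ok.in {L : Lens} (h : L.Ok) {x : ℝ} (h1 : L.x1 < x) (h2 : x < L.x2) :
    ev L.l x < ev L.u x := by
  obtain ⟨c, hc, hf⟩ := h.fac
  have := hf x
  have : 0 < c * ((x - L.x1) * (L.x2 - x)) :=
    mul_pos hc (mul_pos (by linarith) (by linarith))
  linarith

lemma Lens.Ok.out {L : Lens} (h : L.Ok) {x : ℝ} (h1 : x < L.x1 ∨ L.x2 < x) :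
    ev L.u x < ev L.l x := by
  obtain ⟨c, hc, hf⟩ := h.fac
  have := hf x
  have hl := h.lt
  have : c * ((x - L.x1) * (L.x2 - x)) < 0 := by
    apply mul_neg_of_pos_of_neg hc
    rcases h1 with h1 | h1
    · exact mul_neg_of_neg_of_pos (by linarith) (by linarith)
    · exact mul_neg_of_pos_of_neg (by linarith) (by linarith)
  linarith

def Lens.Share (L L' : Lens) : Prop := L.u = L'.u ∨ L.u = L'.l ∨ L.l = L'.u ∨ L.l = L'.l

def NonOv (Λ : Finset Lens) : Prop := ∀ L ∈ Λ, ∀ L' ∈ Λ, L ≠ L' → L.Share L' →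
  L.x2 ≤ L'.x1 ∨ L'.x2 ≤ L.x1

lemma Lens.Ok.inlt {L : Lens} (h : L.Ok) : ev L.l L.c < ev L.u L.c :=
  h.in (by have := h.lt; unfold Lens.c; linarith) (by have := h.lt; unfold Lens.c; linarith)

lemma Lens.Ok.outlt {L L' : Lens} (h : L.Ok) (h' : L'.Ok)
    (hh : L.x2 ≤ L'.x1 ∨ L'.x2 ≤ L.x1) : ev L'.u L.c < ev L'.l L.c := by
  apply h'.out
  have := h.lt
  unfold Lens.c
  rcases hh with hh | hh
  · left; linarith
  · right; linarith

lemma lens_unique {Λ : Finset Lens} (hok : ∀ L ∈ Λ, L.Ok) (hno : NonOv Λ) {L L' : Lens}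
    (hL : L ∈ Λ) (hL' : L' ∈ Λ) (hu : L.u = L'.u) (hl : L.l = L'.l) : L = L' := by
  by_contra hne
  have h1 := (hok L hL).outlt (hok L' hL') (hno L hL L' hL' hne (Or.inl hu))
  have h2 := (hok L hL).inlt
  rw [hu, hl] at h2
  linarith

/-- the pair lemma -/
lemma pair_lemma {Λ : Finset Lens} (hok : ∀ L ∈ Λ, L.Ok) (hno : NonOv Λ) {A B A' B' : Lens}
    (hA : A ∈ Λ) (hB : B ∈ Λ) (hA' : A' ∈ Λ) (hB' : B' ∈ Λ)
    (e1 : A.u = B.u) (e2 : A'.u = B'.u) (e3 : A.l = A'.l) (e4 : B.l = B'.l)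
    (hne : A.u ≠ A'.u) (hne' : A.l ≠ B.l) :
    (A.c < B.c → A'.c < B'.c → (A.c < A'.c ∧ B'.c < B.c) ∨ (A'.c < A.c ∧ B.c < B'.c)) ∧
    (A.c < B.c → B'.c < A'.c → B.c < B'.c ∨ A'.c < A.c) := by
  have nAB : A ≠ B := fun h => hne' (by rw [h])
  have nAA : A ≠ A' := fun h => hne (by rw [h])
  have nBB : B ≠ B' := fun h => hne (by rw [e1, e2, h])
  have nAB' : A' ≠ B' := fun h => hne' (by rw [e3, e4, h])
  have iA := (hok A hA).inlt
  have iB := (hok B hB).inlt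
  have iA' := (hok A' hA').inlt
  have iB' := (hok B' hB').inlt
  have o : ∀ L ∈ Λ, ∀ L' ∈ Λ, L ≠ L' → L.Share L' → ev L'.u L.c < ev L'.l L.c :=
    fun L h L' h' hn hs => (hok L h).outlt (hok L' h') (hno L h L' h' hn hs)
  have o1 := o A hA B hB nAB (Or.inl e1)
  have o2 := o B hB A hA nAB.symm (Or.inl e1.symm)
  have o3 := o A hA A' hA' nAA (Or.inr (Or.inr (Or.inr e3)))
  have o4 := o A' hA' A hA nAA.symm (Or.inr (Or.inr (Or.inr e3.symm)))
  have o5 := o B hB B' hB' nBB (Or.inr (Or.inr (Or.inr e4)))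
  have o6 := o B' hB' B hB nBB.symm (Or.inr (Or.inr (Or.inr e4.symm)))
  have o7 := o A' hA' B' hB' nAB' (Or.inl e2)
  have o8 := o B' hB' A' hA' nAB'.symm (Or.inl e2.symm)
  rw [← e1, ← e2, ← e3, ← e4] at *
  have d1 : 0 < ev (A.u - A'.u) A.c := by rw [ev_sub]; linarith
  have d2 : 0 < ev (A.u - A'.u) B.c := by rw [ev_sub]; linarith
  have d3 : ev (A.u - A'.u) A'.c < 0 := by rw [ev_sub]; linarith
  have d4 : ev (A.u - A'.u) B'.c < 0 := by rw [ev_sub]; linarith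
  have f1 : ev (A.l - B.l) A.c < 0 := by rw [ev_sub]; linarith
  have f2 : 0 < ev (A.l - B.l) B.c := by rw [ev_sub]; linarith
  have f3 : ev (A.l - B.l) A'.c < 0 := by rw [ev_sub]; linarith
  have f4 : 0 < ev (A.l - B.l) B'.c := by rw [ev_sub]; linarith
  have n1 : A.c ≠ A'.c := fun h => by rw [h] at d1; linarith
  have n2 : A.c ≠ B'.c := fun h => by rw [h] at d1; linarith
  have n3 : B.c ≠ A'.c := fun h => by rw [h] at d2; linarith
  have n4 : B.c ≠ B'.c := fun h => by rw [h] at d2; linarith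
  constructor
  · intro h h'
    rcases lt_or_gt_of_ne n1 with k1 | k1 <;> rcases lt_or_gt_of_ne n4 with k2 | k2
    · exfalso
      rcases lt_or_gt_of_ne n3 with k3 | k3
      · exact no_alt' h k3 h' f1 f2 f3 f4
      · exact no_alt k1 k3 k2 d1 d3 d2 d4
    · exact Or.inl ⟨k1, k2⟩
    · exact Or.inr ⟨k1, k2⟩
    · exfalso
      rcases lt_or_gt_of_ne n2 with k3 | k3
      · exact no_alt' k1 k3 k2 d3 d1 d4 d2
      · exact no_alt' h' k3 h f3 f4 f1 f2
  · intro h h'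
    by_contra hc
    rw [not_or, not_lt, not_lt] at hc
    have k1 : B'.c < B.c := lt_of_le_of_ne hc.1 n4.symm
    have k2 : A.c < A'.c := lt_of_le_of_ne hc.2 n1
    rcases lt_or_gt_of_ne n2 with k3 | k3
    · rcases lt_or_gt_of_ne n3 with k4 | k4
      · exact no_alt k3 k1 k4 d1 d4 d2 d3
      · exact no_alt' k3 h' k4 f1 f4 f3 f2
    · rcases lt_or_gt_of_ne n3 with k4 | k4
      · exact no_alt k3 h k4 f4 f1 f2 f3
      · exact no_alt' k3 k2 k4 d4 d1 d3 d2

lemma triple_lemma {Λ : Finset Lens} (hok : ∀ L ∈ Λ, L.Ok) (hno : NonOv Λ) {A B C A' B' C' : Lens}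
    (hA : A ∈ Λ) (hB : B ∈ Λ) (hC : C ∈ Λ) (hA' : A' ∈ Λ) (hB' : B' ∈ Λ) (hC' : C' ∈ Λ)
    (e1 : A.u = B.u) (e1' : B.u = C.u) (e2 : A'.u = B'.u) (e2' : B'.u = C'.u)
    (e3 : A.l = A'.l) (e4 : B.l = B'.l) (e5 : C.l = C'.l)
    (hne : A.u ≠ A'.u) (n1 : A.l ≠ B.l) (n2 : B.l ≠ C.l) (n3 : A.l ≠ C.l)
    (h1 : A.c < B.c) (h2 : B.c < C.c) :
    ¬ (A'.c < B'.c ∧ B'.c < C'.c) ∧ ¬ (B'.c < C'.c ∧ C'.c < A'.c) ∧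
      ¬ (C'.c < A'.c ∧ A'.c < B'.c) := by
  have p1 := pair_lemma hok hno hA hB hA' hB' e1 e2 e3 e4 hne n1
  have p2 := pair_lemma hok hno hB hC hB' hC' e1' e2' e4 e5 (by rwa [← e1, ← e2]) n2
  have p3 := pair_lemma hok hno hA hC hA' hC' (e1.trans e1') (e2.trans e2') e3 e5 hne n3
  refine ⟨?_, ?_, ?_⟩
  · rintro ⟨k1, k2⟩
    rcases p1.1 h1 k1 with q1 | q1 <;> rcases p2.1 h2 k2 with q2 | q2 <;>
      rcases p3.1 (h1.trans h2) (k1.trans k2) with q3 | q3 <;> linarith [q1.1, q1.2, q2.1, q2.2, q3.1, q3.2]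
  · rintro ⟨k1, k2⟩
    rcases p1.2 h1 (k1.trans k2) with q1 | q1 <;> rcases p2.1 h2 k1 with q2 | q2 <;>
      rcases p3.2 (h1.trans h2) k2 with q3 | q3 <;> linarith [q2.1, q2.2]
  · rintro ⟨k1, k2⟩
    rcases p1.1 h1 k2 with q1 | q1 <;> rcases p2.2 h2 (k1.trans k2) with q2 | q2 <;>
      rcases p3.2 (h1.trans h2) k1 with q3 | q3 <;> linarith [q1.1, q1.2]
end LCT

namespace LCT
open Finset
open scoped Classical

lemma enum_lens {α : Type*} [Inhabited α] (S : Finset α) (g : α → ℝ) (hg : ∀ a ∈ S, ∀ b ∈ S, g a = g b → a = b) :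
    ∃ e : ℕ → α, (∀ i < S.card, e i ∈ S) ∧ (∀ i j, i < j → j < S.card → g (e i) < g (e j)) := by
  have hc : (S.image g).card = S.card := card_image_of_injOn (fun a ha b hb h => hg a ha b hb h)
  set o := (S.image g).orderEmbOfFin hc
  have ho : ∀ i, ∃ a ∈ S, g a = o i := fun i => mem_image.1 ((S.image g).orderEmbOfFin_mem hc i)
  choose q hq hq' using ho
  refine ⟨fun i => if h : i < S.card then q ⟨i, h⟩ else default, ?_, ?_⟩
  · intro i hi
    simp only [hi, dif_pos]
    exact hq _
  · intro i j hij hj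
    have hi := hij.trans hj
    simp only [hi, hj, dif_pos, hq']
    exact o.strictMono hij

instance : Inhabited Lens := ⟨⟨0, 0, 0, 0⟩⟩

theorem lens_mt (F : Finset Quad) (Λ : Finset Lens) (hok : ∀ L ∈ Λ, L.Ok) (hno : NonOv Λ)
    (hu : ∀ L ∈ Λ, L.u ∈ F) (hl : ∀ L ∈ Λ, L.l ∈ F) (hF : F.Nonempty) (J : ℕ) (hJ : 1 ≤ J)
    (hd : 2 * F.card * 2 ^ J ≤ Λ.card) : (2^J)^2 ≤ 40 * (J+1)^2 * F.card ∧ 2^J ≤ F.card := by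
  set d := 2^J with hdd
  have hdp : 0 < d := by positivity
  set S : Quad → Finset Lens := fun a => Λ.filter (fun L => L.u = a)
  have hSm : ∀ a L, L ∈ S a → L ∈ Λ ∧ L.u = a := fun a L h => mem_filter.1 h
  have hSinj : ∀ a, ∀ L ∈ S a, ∀ L' ∈ S a, L.c = L'.c → L = L' := by
    intro a L hL L' hL' hc
    obtain ⟨hL, hLa⟩ := hSm a L hL
    obtain ⟨hL', hLa'⟩ := hSm a L' hL'
    by_contra hne
    have := hno L hL L' hL' hne (Or.inl (hLa.trans hLa'.symm))
    have h1 := (hok L hL).lt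
    have h2 := (hok L' hL').lt
    unfold Lens.c at hc
    rcases this with h | h <;> linarith
  have hex := fun a => enum_lens (S a) Lens.c (hSinj a)
  choose e he1 he2 using hex
  set I0 : Finset (Quad × ℕ) := (F ×ˢ range Λ.card).filter (fun p => p.2 < (S p.1).card / d)
  have hI0 : F.card ≤ I0.card := by
    have h1 : I0.card = ∑ a ∈ F, (S a).card / d := by
      rw [card_eq_sum_card_fiberwise (f := Prod.fst) (t := F)]
      · apply sum_congr rfl
        intro a ha
        have : (I0.filter (fun p => p.1 = a)) = (range ((S a).card / d)).image (fun x => (a, x)) := by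
          ext ⟨b, x⟩
          simp only [I0, mem_filter, mem_product, mem_range, mem_image, Prod.mk.injEq]
          constructor
          · rintro ⟨⟨⟨h1, h2⟩, h3⟩, rfl⟩
            exact ⟨x, h3, rfl, rfl⟩
          · rintro ⟨y, h1, rfl, rfl⟩
            refine ⟨⟨⟨ha, ?_⟩, h1⟩, rfl⟩
            have h2 : (S a).card ≤ Λ.card := card_le_card (filter_subset _ _)
            have h3 := Nat.div_le_self (S a).card d
            omega
        rw [this, card_image_of_injective _ (fun x y h => (Prod.mk.inj h).2), card_range]
      · intro p hp
        exact (mem_product.1 (mem_filter.1 (mem_coe.1 hp)).1).1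
    have h2 : Λ.card = ∑ a ∈ F, (S a).card := card_eq_sum_card_fiberwise (fun L hL => hu L hL)
    have h3 : ∑ a ∈ F, (S a).card ≤ ∑ a ∈ F, (d * ((S a).card / d) + d) := by
      apply sum_le_sum
      intro a _
      have h4 := Nat.div_add_mod (S a).card d
      have h5 := Nat.mod_lt (S a).card hdp
      omega
    rw [sum_add_distrib, ← mul_sum, ← h1, ← h2, sum_const, smul_eq_mul] at h3
    have h6 : F.card * d ≤ I0.card * d := by
      have : 2 * F.card * d = F.card * d + F.card * d := by ring
      have h7 : d * I0.card = I0.card * d := mul_comm _ _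
      omega
    exact Nat.le_of_mul_le_mul_right h6 hdp
  obtain ⟨I, hI, hIc⟩ := exists_subset_card_eq hI0
  set s : Quad × ℕ → ℕ → Quad := fun p x => (e p.1 (p.2 * d + x)).l
  have hidx : ∀ p ∈ I, ∀ x < d, p.2 * d + x < (S p.1).card := by
    intro p hp x hx
    have h1 := (mem_filter.1 (hI hp)).2
    have h2 : (p.2 + 1) * d ≤ (S p.1).card / d * d := Nat.mul_le_mul_right _ h1
    have h3 := Nat.div_mul_le_self (S p.1).card d
    have : (p.2 + 1) * d = p.2 * d + d := by ring
    omega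
  have hmem : ∀ p ∈ I, ∀ x < d, e p.1 (p.2 * d + x) ∈ Λ ∧ (e p.1 (p.2 * d + x)).u = p.1 :=
    fun p hp x hx => hSm _ _ (he1 _ _ (hidx p hp x hx))
  have hidx_inj : ∀ a, ∀ i < (S a).card, ∀ j < (S a).card, e a i = e a j → i = j := by
    intro a i hi j hj h
    rcases lt_trichotomy i j with h1 | h1 | h1
    · have := he2 a i j h1 hj
      rw [h] at this
      exact absurd this (lt_irrefl _)
    · exact h1
    · have := he2 a j i h1 hi
      rw [h] at this
      exact absurd this (lt_irrefl _)
  have hsame : ∀ p ∈ I, ∀ q ∈ I, p.1 = q.1 → ∀ x < d, ∀ y < d, s p x = s q y →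
      p.2 * d + x = q.2 * d + y := by
    intro p hp q hq hpq x hx y hy h
    obtain ⟨m1, u1⟩ := hmem p hp x hx
    obtain ⟨m2, u2⟩ := hmem q hq y hy
    have h3 := lens_unique hok hno m1 m2 (by rw [u1, u2, hpq]) h
    have i1 := hidx p hp x hx
    have i2 := hidx q hq y hy
    rw [← hpq] at h3 i2
    exact hidx_inj _ _ i1 _ i2 h3
  have hinj : ∀ p ∈ I, ∀ x < d, ∀ y < d, s p x = s p y → x = y := by
    intro p hp x hx y hy h
    have := hsame p hp p hp rfl x hx y hy h
    omega
  have hB : ∀ p ∈ I, ∀ x < d, s p x ∈ F := fun p hp x hx => hl _ (hmem p hp x hx).1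
  have hIn : I.Nonempty := by
    rw [← card_pos, hIc]; exact hF.card_pos
  constructor
  · have := MT I s F J hJ hinj hB hIc.symm.le hIn (by
      intro p hp q hq hpq x1 x2 x3 y1 y2 y3 h12 h23 h3d hy1 hy2 hy3 e1 e2 e3
      by_cases hpq1 : p.1 = q.1
      · exfalso
        apply hpq
        have h1 := hsame p hp q hq hpq1 x1 (by omega) y1 hy1 e1
        refine Prod.ext hpq1 ?_
        have h2 : (p.2 * d + x1) / d = p.2 := by
          rw [mul_comm, Nat.mul_add_div hdp, Nat.div_eq_of_lt (by omega)]; simp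
        have h3 : (q.2 * d + y1) / d = q.2 := by
          rw [mul_comm, Nat.mul_add_div hdp, Nat.div_eq_of_lt (by omega)]; simp
        rw [← h2, ← h3, h1]
      · have m1 := hmem p hp x1 (by omega)
        have m2 := hmem p hp x2 (by omega)
        have m3 := hmem p hp x3 (by omega)
        have k1 := hmem q hq y1 hy1
        have k2 := hmem q hq y2 hy2
        have k3 := hmem q hq y3 hy3
        have n1 : s p x1 ≠ s p x2 := fun h => by
          have := hinj p hp _ (by omega) _ (by omega) h; omega
        have n2 : s p x2 ≠ s p x3 := fun h => by
          have := hinj p hp _ (by omega) _ (by omega) h; omega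
        have n3 : s p x1 ≠ s p x3 := fun h => by
          have := hinj p hp _ (by omega) _ (by omega) h; omega
        have o1 := he2 p.1 (p.2 * d + x1) (p.2 * d + x2) (by omega) (hidx p hp x2 (by omega))
        have o2 := he2 p.1 (p.2 * d + x2) (p.2 * d + x3) (by omega) (hidx p hp x3 (by omega))
        have t := triple_lemma hok hno m1.1 m2.1 m3.1 k1.1 k2.1 k3.1 (m1.2.trans m2.2.symm)
          (m2.2.trans m3.2.symm) (k1.2.trans k2.2.symm) (k2.2.trans k3.2.symm) e1 e2 e3
          (by rw [m1.2, k1.2]; exact hpq1) n1 n2 n3 o1 o2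
        have om : ∀ y z, y < d → z < d → y < z →
            (e q.1 (q.2 * d + y)).c < (e q.1 (q.2 * d + z)).c := fun y z hy hz hyz =>
          he2 q.1 (q.2 * d + y) (q.2 * d + z) (by omega) (hidx q hq z hz)
        refine ⟨fun h => t.1 ⟨om _ _ hy1 hy2 h.1, om _ _ hy2 hy3 h.2⟩,
          fun h => t.2.1 ⟨om _ _ hy2 hy3 h.1, om _ _ hy3 hy1 h.2⟩,
          fun h => t.2.2 ⟨om _ _ hy3 hy1 h.1, om _ _ hy1 hy2 h.2⟩⟩)
    rwa [hIc] at this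
  · obtain ⟨p, hp⟩ := hIn
    have := card_le_card_of_injOn (s := range d) (t := F) (s p)
      (fun x hx => mem_coe.2 (hB p hp x (mem_range.1 (mem_coe.1 hx))))
      (fun x hx y hy h => hinj p hp x (mem_range.1 (mem_coe.1 hx)) y (mem_range.1 (mem_coe.1 hy)) h)
    rwa [card_range] at this

theorem lens_bound (F : Finset Quad) (Λ : Finset Lens) (hok : ∀ L ∈ Λ, L.Ok) (hno : NonOv Λ)
    (hu : ∀ L ∈ Λ, L.u ∈ F) (hl : ∀ L ∈ Λ, L.l ∈ F) :
    (Λ.card : ℝ) ≤ 60 * (F.card * √F.card * (1 + Real.log F.card)) := by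
  by_cases hF : F.Nonempty
  swap
  · rw [not_nonempty_iff_eq_empty] at hF
    have : Λ = ∅ := by
      rw [eq_empty_iff_forall_notMem]
      intro L hL
      have := hu L hL
      rw [hF] at this
      simp at this
    simp [this, hF]
  set n := F.card with hn
  have hn1 : 1 ≤ n := hF.card_pos
  have hn1' : (1:ℝ) ≤ n := by exact_mod_cast hn1
  have hlog : 0 ≤ Real.log n := Real.log_nonneg hn1'
  have hsq : 1 ≤ √(n:ℝ) := Real.one_le_sqrt.2 hn1'
  have hbase : (n:ℝ) ≤ n * √n * (1 + Real.log n) := by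
    calc (n:ℝ) = n * 1 * 1 := by ring
      _ ≤ _ := by gcongr; linarith
  by_cases h4 : Λ.card < 4 * n
  · have : (Λ.card : ℝ) ≤ 4 * n := by exact_mod_cast h4.le
    linarith
  push Not at h4
  set q := Λ.card / (2 * n) with hq
  have hq2 : 2 ≤ q := by
    rw [hq, Nat.le_div_iff_mul_le (by omega)]; omega
  set J := Nat.log 2 q with hJ
  have hJ1 : 1 ≤ J := by
    rw [hJ]; exact Nat.log_pos (by norm_num) hq2
  have hJq : 2^J ≤ q := Nat.pow_log_le_self 2 (by omega)
  have hJq' : q < 2^(J+1) := Nat.lt_pow_succ_log_self (by norm_num) q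
  have h5 : 2 * n * 2^J ≤ Λ.card := by
    calc 2 * n * 2^J ≤ 2 * n * q := Nat.mul_le_mul_left _ hJq
      _ ≤ _ := Nat.mul_div_le _ _
  obtain ⟨h6, h7⟩ := lens_mt F Λ hok hno hu hl hF J hJ1 h5
  have h8 : Λ.card ≤ 4 * n * 2^J := by
    have h9 : Λ.card < 2 * n * (q + 1) := Nat.lt_mul_div_succ _ (by omega)
    have h10 : 2 * n * (q+1) ≤ 2 * n * 2^(J+1) := Nat.mul_le_mul_left _ hJq'
    have : 2 * n * 2^(J+1) = 4 * n * 2^J := by ring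
    omega
  have h8' : (Λ.card : ℝ) ≤ 4 * n * 2^J := by exact_mod_cast h8
  have h6' : ((2:ℝ)^J)^2 ≤ 40 * (J+1)^2 * n := by exact_mod_cast h6
  have h7' : ((2:ℝ)^J) ≤ n := by exact_mod_cast h7
  have hJl : (J:ℝ) * Real.log 2 ≤ Real.log n := by
    rw [← Real.log_pow]
    exact Real.log_le_log (by positivity) h7'
  have hl2 := Real.log_two_gt_d9
  have hJ2 : (J:ℝ) + 1 ≤ 2 * (1 + Real.log n) := by nlinarith
  have h9 : (2:ℝ)^J ≤ 7 * (J+1) * √n := by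
    apply le_of_sq_le_sq _ (by positivity)
    rw [mul_pow, mul_pow, Real.sq_sqrt (by positivity)]
    have : 0 ≤ ((J:ℝ)+1)^2 * n := by positivity
    nlinarith
  calc (Λ.card : ℝ) ≤ 4 * n * 2^J := h8'
    _ ≤ 4 * n * (7 * (2 * (1 + Real.log n)) * √n) := by
      gcongr
      refine h9.trans ?_
      gcongr
    _ = 56 * (n * √n * (1 + Real.log n)) := by ring
    _ ≤ _ := by gcongr; norm_num
end LCT

namespace LCT
open Finset
open scoped Classical

structure Edge where
  f : Quad
  p : ℝ × ℝ
  q : ℝ × ℝ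

lemma Edge.ext' {e e' : Edge} (h1 : e.f = e'.f) (h2 : e.p = e'.p) (h3 : e.q = e'.q) : e = e' := by
  cases e; cases e'; simp_all

lemma ivt_zero {u : ℝ → ℝ} (hu : Continuous u) {x y : ℝ} (hxy : x < y)
    (h : (0 < u x ∧ u y < 0) ∨ (u x < 0 ∧ 0 < u y)) : ∃ z, x < z ∧ z < y ∧ u z = 0 := by
  rcases h with h | h
  · have := intermediate_value_Icc' hxy.le hu.continuousOn
    obtain ⟨z, hz, hz0⟩ := this ⟨h.2.le, h.1.le⟩
    refine ⟨z, lt_of_le_of_ne hz.1 ?_, lt_of_le_of_ne hz.2 ?_, hz0⟩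
    · rintro rfl; linarith
    · rintro rfl; linarith
  · have := intermediate_value_Icc hxy.le hu.continuousOn
    obtain ⟨z, hz, hz0⟩ := this ⟨h.1.le, h.2.le⟩
    refine ⟨z, lt_of_le_of_ne hz.1 ?_, lt_of_le_of_ne hz.2 ?_, hz0⟩
    · rintro rfl; linarith
    · rintro rfl; linarith

structure Pl (φ : Quad → ℝ → ℝ) (η : ℝ × ℝ → ℝ) (V : Finset (ℝ × ℝ)) (E : Finset Edge) : Prop where
  cont : ∀ f, Continuous (φ f)
  hinj : ∀ v w : ℝ × ℝ, v.1 = w.1 → η v = η w → v = w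
  mem : ∀ e ∈ E, e.p ∈ V ∧ e.q ∈ V ∧ e.p.1 < e.q.1 ∧ φ e.f e.p.1 = η e.p ∧ φ e.f e.q.1 = η e.q
  H0 : ∀ e ∈ E, ∀ v ∈ V, e.p.1 < v.1 → v.1 < e.q.1 → φ e.f v.1 ≠ η v
  H2 : ∀ e ∈ E, ∀ e' ∈ E, e.f ≠ e'.f → ∀ x, e.p.1 < x → e'.p.1 < x → x < e.q.1 → x < e'.q.1 →
    φ e.f x ≠ φ e'.f x
  HL : ∀ e ∈ E, ∀ e' ∈ E, e.f ≠ e'.f → e.p = e'.p → ∀ x, e.p.1 < x → x ≤ e.q.1 → x ≤ e'.q.1 →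
    φ e.f x ≠ φ e'.f x

variable {φ : Quad → ℝ → ℝ} {η : ℝ × ℝ → ℝ} {V : Finset (ℝ × ℝ)} {E : Finset Edge}

lemma Pl.neg (P : Pl φ η V E) : Pl (fun f x => - φ f x) (fun v => - η v) V E where
  cont f := (P.cont f).neg
  hinj v w h h' := P.hinj v w h (neg_injective h')
  mem e he := by
    obtain ⟨h1, h2, h3, h4, h5⟩ := P.mem e he
    exact ⟨h1, h2, h3, by rw [h4], by rw [h5]⟩
  H0 e he v hv h1 h2 h := P.H0 e he v hv h1 h2 (neg_injective h)
  H2 e he e' he' hf x h1 h2 h3 h4 h := P.H2 e he e' he' hf x h1 h2 h3 h4 (neg_injective h)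
  HL e he e' he' hf hp x h1 h2 h3 h := P.HL e he e' he' hf hp x h1 h2 h3 (neg_injective h)

lemma Pl.H1 (P : Pl φ η V E) {e e' : Edge} (he : e ∈ E) (he' : e' ∈ E) (hf : e.f = e'.f) {x : ℝ}
    (h1 : e.p.1 < x) (h2 : e'.p.1 < x) (h3 : x < e.q.1) (h4 : x < e'.q.1) : e = e' := by
  obtain ⟨a1, a2, a3, a4, a5⟩ := P.mem e he
  obtain ⟨b1, b2, b3, b4, b5⟩ := P.mem e' he'
  have hp : e.p.1 = e'.p.1 := by
    rcases lt_trichotomy e.p.1 e'.p.1 with h | h | h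
    · exact absurd (by rw [hf, b4]) (P.H0 e he _ b1 h (h2.trans h3))
    · exact h
    · exact absurd (by rw [← hf, a4]) (P.H0 e' he' _ a1 h (h1.trans h4))
  have hq : e.q.1 = e'.q.1 := by
    rcases lt_trichotomy e.q.1 e'.q.1 with h | h | h
    · exact absurd (by rw [← hf, a5]) (P.H0 e' he' _ a2 (h2.trans h3) h)
    · exact h
    · exact absurd (by rw [hf, b5]) (P.H0 e he _ b2 (h1.trans h4) h)
  exact Edge.ext' hf (P.hinj _ _ hp (by rw [← a4, ← b4, hf, hp]))
    (P.hinj _ _ hq (by rw [← a5, ← b5, hf, hq]))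

/-- equal values in the interior force equality of edges -/
lemma Pl.eq_of (P : Pl φ η V E) {e e' : Edge} (he : e ∈ E) (he' : e' ∈ E) {x : ℝ}
    (h1 : e.p.1 < x) (h2 : e'.p.1 < x) (h3 : x < e.q.1) (h4 : x < e'.q.1)
    (h : φ e.f x = φ e'.f x) : e = e' := by
  by_cases hf : e.f = e'.f
  · exact P.H1 he he' hf h1 h2 h3 h4
  · exact absurd h (P.H2 e he e' he' hf x h1 h2 h3 h4)

def abv (φ : Quad → ℝ → ℝ) (η : ℝ × ℝ → ℝ) (E : Finset Edge) (z : ℝ × ℝ) (g : Edge) : Prop :=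
  g ∈ E ∧ g.p.1 < z.1 ∧ z.1 ≤ g.q.1 ∧ η z < φ g.f z.1

lemma Pl.wedge (P : Pl φ η V E) {h : ℝ} (hh : 0 < h)
    (hV : ∀ v ∈ V, ∀ w ∈ V, v.1 < w.1 → v.1 + 2 * h ≤ w.1) {e e' : Edge} (he : e ∈ E)
    (he' : e' ∈ E) (hp : e.p = e'.p) (hk : φ e.f (e.p.1 + h) < φ e'.f (e.p.1 + h))
    (hnext : ∀ g ∈ E, g.p = e.p → φ e.f (e.p.1 + h) < φ g.f (e.p.1 + h) →
      φ e'.f (e.p.1 + h) ≤ φ g.f (e.p.1 + h)) (hq : e.q.1 ≤ e'.q.1) :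
    ∃ z ∈ V, abv φ η E z e' ∧ ∀ g, abv φ η E z g → φ e'.f (z.1 - h) ≤ φ g.f (z.1 - h) := by
  obtain ⟨a1, a2, a3, a4, a5⟩ := P.mem e he
  obtain ⟨b1, b2, b3, b4, b5⟩ := P.mem e' he'
  have hspan := hV _ a1 _ a2 a3
  have hff : e.f ≠ e'.f := fun h => by rw [h] at hk; exact lt_irrefl _ hk
  have hlt : ∀ x, e.p.1 < x → x ≤ e.q.1 → φ e.f x < φ e'.f x := by
    intro x hx hx'
    have hne := P.HL e he e' he' hff hp
    by_contra hcon
    have hxl : φ e'.f x < φ e.f x :=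
      lt_of_le_of_ne (not_lt.1 hcon) (hne x hx hx' (hx'.trans hq)).symm
    have hc : Continuous (fun x => φ e'.f x - φ e.f x) := (P.cont _).sub (P.cont _)
    rcases lt_trichotomy x (e.p.1 + h) with h1 | h1 | h1
    · obtain ⟨z, z1, z2, z3⟩ := ivt_zero hc h1 (Or.inr ⟨by linarith, by linarith⟩)
      exact hne z (by linarith) (by linarith) (by linarith) (by linarith)
    · rw [h1] at hxl; linarith
    · obtain ⟨z, z1, z2, z3⟩ := ivt_zero hc h1 (Or.inl ⟨by linarith, by linarith⟩)
      exact hne z (by linarith) (by linarith) (by linarith) (by linarith)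
  set Wd := V.filter (fun v => e.p.1 < v.1 ∧ v.1 ≤ e.q.1 ∧ φ e.f v.1 ≤ η v ∧ η v < φ e'.f v.1)
  have hne : Wd.Nonempty :=
    ⟨e.q, mem_filter.2 ⟨a2, a3, le_rfl, a5.le, by rw [← a5]; exact hlt _ a3 le_rfl⟩⟩
  obtain ⟨z, hz, hmin⟩ := exists_min_image Wd Prod.fst hne
  obtain ⟨hzV, z1, z2, z3, z4⟩ := mem_filter.1 hz
  refine ⟨z, hzV, ⟨he', by rw [← hp]; exact z1, z2.trans hq, z4⟩, ?_⟩
  rintro g ⟨hg, g1, g2, g3⟩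
  by_contra hcon
  rw [not_le] at hcon
  obtain ⟨c1, c2, c3, c4, c5⟩ := P.mem g hg
  have hpz := hV _ a1 _ hzV z1
  have hgz := hV _ c1 _ hzV g1
  have hpx : e.p.1 = e'.p.1 := by rw [hp]
  have hge' : g ≠ e' := fun h => by rw [h] at hcon; exact lt_irrefl _ hcon
  have hgf : g.f ≠ e.f := fun h => by rw [h] at g3; linarith
  -- no zeros
  have n1 : ∀ x, g.p.1 < x → e.p.1 < x → x < z.1 → φ g.f x ≠ φ e'.f x := fun x x1 x2 x3 hx =>
    hge' (P.eq_of hg he' x1 (by linarith) (by linarith) (by linarith) hx)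
  have n2 : ∀ x, g.p.1 < x → e.p.1 < x → x < z.1 → φ g.f x ≠ φ e.f x := fun x x1 x2 x3 hx =>
    P.H2 g hg e he hgf x x1 x2 (by linarith) (by linarith) hx
  have hc1 : Continuous (fun x => φ e'.f x - φ g.f x) := (P.cont _).sub (P.cont _)
  have hc2 : Continuous (fun x => φ g.f x - φ e.f x) := (P.cont _).sub (P.cont _)
  have m1 : ∀ x, g.p.1 ≤ x → e.p.1 ≤ x → x < z.1 - h → φ g.f x ≤ φ e'.f x := by
    intro x x1 x2 x3
    by_contra hx
    rw [not_le] at hx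
    obtain ⟨y, y1, y2, y3⟩ := ivt_zero hc1 x3 (Or.inr ⟨by linarith, by linarith⟩)
    exact n1 y (by linarith) (by linarith) (by linarith) (by linarith)
  have m2 : ∀ x, g.p.1 ≤ x → e.p.1 ≤ x → x < z.1 → φ e.f x ≤ φ g.f x := by
    intro x x1 x2 x3
    by_contra hx
    rw [not_le] at hx
    obtain ⟨y, y1, y2, y3⟩ := ivt_zero hc2 x3 (Or.inr ⟨by linarith, by linarith⟩)
    exact n2 y (by linarith) (by linarith) (by linarith) (by linarith)
  rcases lt_trichotomy g.p.1 e.p.1 with hl | hl | hl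
  · have k1 := m1 e.p.1 hl.le le_rfl (by linarith)
    have k2 := m2 e.p.1 hl.le le_rfl (by linarith)
    rw [hpx, b4, ← hpx] at k1
    rw [a4] at k2
    rw [← hp] at k1
    exact P.H0 g hg e.p a1 hl (by linarith) (le_antisymm k1 k2)
  · have k1 := m1 e.p.1 hl.le le_rfl (by linarith)
    have k2 := m2 e.p.1 hl.le le_rfl (by linarith)
    rw [hpx, b4, ← hpx] at k1
    rw [a4] at k2
    rw [← hp] at k1
    have hgp : g.p = e.p := P.hinj _ _ hl (by rw [← c4, hl]; exact le_antisymm k1 k2)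
    have e1 : φ e.f (e.p.1 + h) < φ g.f (e.p.1 + h) :=
      lt_of_le_of_ne (m2 _ (by linarith) (by linarith) (by linarith))
        (n2 _ (by linarith) (by linarith) (by linarith)).symm
    have e2 := hnext g hg hgp e1
    have e3 : φ g.f (e.p.1 + h) < φ e'.f (e.p.1 + h) := by
      refine lt_of_le_of_ne ?_ (n1 _ (by linarith) (by linarith) (by linarith))
      rcases lt_or_eq_of_le (show e.p.1 + h ≤ z.1 - h by linarith) with hx | hx
      · exact m1 _ (by linarith) (by linarith) hx
      · rw [hx]; exact hcon.le
    linarith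
  · have k1 := m1 g.p.1 le_rfl hl.le (by linarith)
    have k2 := m2 g.p.1 le_rfl hl.le (by linarith)
    have k3 : φ g.f g.p.1 ≠ φ e'.f g.p.1 := fun hx =>
      P.H0 e' he' g.p c1 (by linarith) (by linarith) (by rw [← hx, c4])
    have k4 := lt_of_le_of_ne k1 k3
    rw [c4] at k2 k4
    have := hmin g.p (mem_filter.2 ⟨c1, hl, by linarith, k2, k4⟩)
    linarith

lemma exists_h (V : Finset (ℝ × ℝ)) : ∃ h : ℝ, 0 < h ∧
    ∀ v ∈ V, ∀ w ∈ V, v.1 < w.1 → v.1 + 2 * h ≤ w.1 := by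
  set S := ((V ×ˢ V).filter (fun z => z.1.1 < z.2.1)) with hS
  by_cases hne : S.Nonempty
  · obtain ⟨z, hz, hmin⟩ := exists_min_image S (fun z => z.2.1 - z.1.1) hne
    have hz' := (mem_filter.1 hz).2
    refine ⟨(z.2.1 - z.1.1) / 2, by linarith, ?_⟩
    intro v hv w hw hvw
    have := hmin (v, w) (mem_filter.2 ⟨mem_product.2 ⟨hv, hw⟩, hvw⟩)
    simp only at this
    linarith
  · refine ⟨1, one_pos, ?_⟩
    intro v hv w hw hvw
    exact absurd ⟨(v, w), mem_filter.2 ⟨mem_product.2 ⟨hv, hw⟩, hvw⟩⟩ hne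

lemma card_le_of_rel {α β : Type*} (A : Finset α) (B : Finset β) (R : α → β → Prop)
    (h1 : ∀ a ∈ A, ∃ b ∈ B, R a b) (h2 : ∀ a ∈ A, ∀ a' ∈ A, ∀ b, R a b → R a' b → a = a') :
    A.card ≤ B.card := by
  rcases A.eq_empty_or_nonempty with rfl | ⟨a0, ha0⟩
  · simp
  obtain ⟨b0, -⟩ := h1 a0 ha0
  have : Nonempty β := ⟨b0⟩
  choose! g hg hg' using h1
  exact card_le_card_of_injOn g (fun a ha => hg a ha)
    (fun a ha a' ha' h => h2 a ha a' ha' (g a) (hg' a ha) (by rw [h]; exact hg' a' ha'))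

theorem Pl.bound (P : Pl φ η V E) : E.card ≤ 3 * V.card := by
  obtain ⟨h, hh, hV⟩ := exists_h V
  set k : Edge → ℝ := fun e => φ e.f (e.p.1 + h) with hk
  have hspan : ∀ e ∈ E, e.p.1 + 2 * h ≤ e.q.1 := fun e he => by
    obtain ⟨a1, a2, a3, a4, a5⟩ := P.mem e he
    exact hV _ a1 _ a2 a3
  have kinj : ∀ e ∈ E, ∀ e' ∈ E, e.p = e'.p → k e = k e' → e = e' := by
    intro e he e' he' hp hke
    have s1 := hspan e he
    have s2 := hspan e' he'
    refine P.eq_of he he' (x := e.p.1 + h) (by linarith) (by rw [hp]; linarith) (by linarith)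
      (by rw [hp]; linarith) ?_
    simp only [hk] at hke
    rw [hke, hp]
  set nx : Edge → Edge → Prop := fun e e' => e' ∈ E ∧ e'.p = e.p ∧ k e < k e' ∧
    ∀ g ∈ E, g.p = e.p → k e < k g → k e' ≤ k g with hnx
  set T := E.filter (fun e => ∀ g ∈ E, g.p = e.p → k g ≤ k e) with hT
  set A := E.filter (fun e => ∃ e', nx e e' ∧ e.q.1 ≤ e'.q.1) with hA
  set B := E.filter (fun e => ∃ e', nx e e' ∧ e'.q.1 ≤ e.q.1) with hB
  have hcov : E ⊆ T ∪ (A ∪ B) := by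
    intro e he
    by_cases ht : e ∈ T
    · exact mem_union_left _ ht
    apply mem_union_right
    rw [hT, mem_filter] at ht
    push Not at ht
    obtain ⟨g, hg, hgp, hgk⟩ := ht he
    obtain ⟨e', he', hmin⟩ := exists_min_image (E.filter (fun g => g.p = e.p ∧ k e < k g)) k
      ⟨g, mem_filter.2 ⟨hg, hgp, hgk⟩⟩
    obtain ⟨b1, b2, b3⟩ := mem_filter.1 he'
    have hn : nx e e' := ⟨b1, b2, b3, fun g hg hgp hgk => hmin g (mem_filter.2 ⟨hg, hgp, hgk⟩)⟩
    rcases le_total e.q.1 e'.q.1 with hq | hq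
    · exact mem_union_left _ (mem_filter.2 ⟨he, e', hn, hq⟩)
    · exact mem_union_right _ (mem_filter.2 ⟨he, e', hn, hq⟩)
  have cT : T.card ≤ V.card := by
    apply card_le_of_rel T V (fun e z => e.p = z)
    · intro e he
      exact ⟨e.p, (P.mem e (mem_filter.1 he).1).1, rfl⟩
    · intro e he e' he' z h1 h2
      obtain ⟨m1, t1⟩ := mem_filter.1 he
      obtain ⟨m2, t2⟩ := mem_filter.1 he'
      have hp : e.p = e'.p := h1.trans h2.symm
      exact kinj e m1 e' m2 hp (le_antisymm (t2 e m1 hp) (t1 e' m2 hp.symm))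
  have cA : A.card ≤ V.card := by
    apply card_le_of_rel A V (fun e z => z ∈ V ∧ ∃ e', nx e e' ∧ abv φ η E z e' ∧
      ∀ g, abv φ η E z g → φ e'.f (z.1 - h) ≤ φ g.f (z.1 - h))
    · intro e he
      obtain ⟨m1, e', ⟨n1, n2, n3, n4⟩, hq⟩ := mem_filter.1 he
      obtain ⟨z, hz, h1, h2⟩ := P.wedge hh hV m1 n1 n2.symm (by simpa only [hk, n2] using n3)
        (fun g hg hgp hgk => by simpa only [hk, n2, hgp] using n4 g hg hgp (by simpa only [hk, hgp] using hgk)) hq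
      exact ⟨z, hz, hz, e', ⟨n1, n2, n3, n4⟩, h1, h2⟩
    · rintro e he e2 he2 z ⟨hz, e', ⟨n1, n2, n3, n4⟩, ⟨_, a1, a2, a3⟩, a4⟩
        ⟨_, e2', ⟨m1, m2, m3, m4⟩, ⟨_, b1, b2, b3⟩, b4⟩
      have he := (mem_filter.1 he).1
      have he2 := (mem_filter.1 he2).1
      have s1 := hV _ (P.mem e' n1).1 _ hz a1
      have s2 := hV _ (P.mem e2' m1).1 _ hz b1
      have heq : φ e'.f (z.1 - h) = φ e2'.f (z.1 - h) :=
        le_antisymm (a4 _ ⟨m1, b1, b2, b3⟩) (b4 _ ⟨n1, a1, a2, a3⟩)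
      have hee : e' = e2' :=
        P.eq_of n1 m1 (by linarith) (by linarith) (by linarith) (by linarith) heq
      subst hee
      have hp : e.p = e2.p := n2.symm.trans m2
      apply kinj e he e2 he2 hp
      rcases lt_trichotomy (k e) (k e2) with h1 | h1 | h1
      · have := n4 e2 he2 hp.symm h1
        linarith
      · exact h1
      · have := m4 e he hp h1
        linarith
  have cB : B.card ≤ V.card := by
    apply card_le_of_rel B V (fun e z => z ∈ V ∧ abv (fun f x => - φ f x) (fun v => - η v) E z e ∧
      ∀ g, abv (fun f x => - φ f x) (fun v => - η v) E z g → - φ e.f (z.1 - h) ≤ - φ g.f (z.1 - h))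
    · intro e he
      obtain ⟨m1, e', ⟨n1, n2, n3, n4⟩, hq⟩ := mem_filter.1 he
      simp only [hk, n2] at n3
      obtain ⟨z, hz, h1, h2⟩ := P.neg.wedge hh hV n1 m1 n2
        (by rw [n2]; exact neg_lt_neg n3)
        (fun g hg hgp hgk => by
          rw [n2] at hgp hgk ⊢
          apply neg_le_neg
          by_contra hc
          have h3 := n4 g hg hgp (by simpa only [hk, hgp] using not_le.1 hc)
          simp only [hk, hgp, n2] at h3
          linarith) hq
      exact ⟨z, hz, hz, h1, h2⟩
    · rintro e he e2 he2 z ⟨hz, ⟨n1, a1, a2, a3⟩, a4⟩ ⟨_, ⟨m1, b1, b2, b3⟩, b4⟩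
      have s1 := hV _ (P.mem e n1).1 _ hz a1
      have s2 := hV _ (P.mem e2 m1).1 _ hz b1
      exact P.eq_of n1 m1 (x := z.1 - h) (by linarith) (by linarith) (by linarith) (by linarith)
        (neg_injective (le_antisymm (a4 _ ⟨m1, b1, b2, b3⟩) (b4 _ ⟨n1, a1, a2, a3⟩)))
  have := card_le_card hcov
  have h2 := card_union_le T (A ∪ B)
  have h3 := card_union_le A B
  omega
end LCT

namespace LCT
open Finset
open scoped Classical

structure Base (F : Finset Quad) (V : Finset (ℝ × ℝ)) (E : Finset Edge) : Prop where
  memF : ∀ e ∈ E, e.f ∈ F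
  mem : ∀ e ∈ E, e.p ∈ V ∧ e.q ∈ V ∧ e.p.1 < e.q.1 ∧ ev e.f e.p.1 = e.p.2 ∧ ev e.f e.q.1 = e.q.2
  H0 : ∀ e ∈ E, ∀ v ∈ V, e.p.1 < v.1 → v.1 < e.q.1 → ev e.f v.1 ≠ v.2

variable {F : Finset Quad} {V : Finset (ℝ × ℝ)} {E : Finset Edge}

lemma Base.mono (B : Base F V E) {E' : Finset Edge} (h : E' ⊆ E) : Base F V E' :=
  ⟨fun e he => B.memF e (h he), fun e he => B.mem e (h he), fun e he => B.H0 e (h he)⟩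

lemma Base.H1 (P : Base F V E) {e e' : Edge} (he : e ∈ E) (he' : e' ∈ E) (hf : e.f = e'.f) {x : ℝ}
    (h1 : e.p.1 < x) (h2 : e'.p.1 < x) (h3 : x < e.q.1) (h4 : x < e'.q.1) : e = e' := by
  obtain ⟨a1, a2, a3, a4, a5⟩ := P.mem e he
  obtain ⟨b1, b2, b3, b4, b5⟩ := P.mem e' he'
  have hp : e.p.1 = e'.p.1 := by
    rcases lt_trichotomy e.p.1 e'.p.1 with h | h | h
    · exact absurd (by rw [hf, b4]) (P.H0 e he _ b1 h (h2.trans h3))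
    · exact h
    · exact absurd (by rw [← hf, a4]) (P.H0 e' he' _ a1 h (h1.trans h4))
  have hq : e.q.1 = e'.q.1 := by
    rcases lt_trichotomy e.q.1 e'.q.1 with h | h | h
    · exact absurd (by rw [← hf, a5]) (P.H0 e' he' _ a2 (h2.trans h3) h)
    · exact h
    · exact absurd (by rw [hf, b5]) (P.H0 e he _ b2 (h1.trans h4) h)
  exact Edge.ext' hf (Prod.ext hp (by rw [← a4, ← b4, hf, hp]))
    (Prod.ext hq (by rw [← a5, ← b5, hf, hq]))

/-- two edges forming a lens -/
def Conf (a b : Edge) : Prop := a.f ≠ b.f ∧ ∃ x1 x2 : ℝ, x1 < x2 ∧ ev a.f x1 = ev b.f x1 ∧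
  ev a.f x2 = ev b.f x2 ∧ a.p.1 ≤ x1 ∧ b.p.1 ≤ x1 ∧ x2 ≤ a.q.1 ∧ x2 ≤ b.q.1

def IsLensOf (a b : Edge) (L : Lens) : Prop := L.Ok ∧
  ((L.u = a.f ∧ L.l = b.f) ∨ (L.u = b.f ∧ L.l = a.f)) ∧
  a.p.1 ≤ L.x1 ∧ b.p.1 ≤ L.x1 ∧ L.x2 ≤ a.q.1 ∧ L.x2 ≤ b.q.1

lemma Conf.lens {a b : Edge} (h : Conf a b) : ∃ L, IsLensOf a b L := by
  obtain ⟨hf, x1, x2, hx, e1, e2, h1, h2, h3, h4⟩ := h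
  have hne : ev a.f ((x1 + x2)/2) ≠ ev b.f ((x1 + x2)/2) := fun h =>
    hf (ev_eq3 (x1 := x1) (x2 := (x1+x2)/2) (x3 := x2) (by linarith) (by linarith) (by linarith)
      e1 h e2)
  rcases lt_or_gt_of_ne hne with hl | hl
  · exact ⟨⟨b.f, a.f, x1, x2⟩, ⟨hx, e1.symm, e2.symm, (x1+x2)/2, by simp only; linarith,
      by simp only; linarith, hl⟩, Or.inr ⟨rfl, rfl⟩, h1, h2, h3, h4⟩
  · exact ⟨⟨a.f, b.f, x1, x2⟩, ⟨hx, e1, e2, (x1+x2)/2, by simp only; linarith,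
      by simp only; linarith, hl⟩, Or.inl ⟨rfl, rfl⟩, h1, h2, h3, h4⟩

theorem Base.matching (B : Base F V E) : ∃ E' ⊆ E, (∀ a ∈ E', ∀ b ∈ E', ¬ Conf a b) ∧
    (E.card : ℝ) ≤ E'.card + 120 * (F.card * √F.card * (1 + Real.log F.card)) := by
  set good : Finset (Edge × Edge) → Prop := fun M => (∀ z ∈ M, Conf z.1 z.2) ∧
    ∀ z ∈ M, ∀ w ∈ M, z ≠ w → z.1 ≠ w.1 ∧ z.1 ≠ w.2 ∧ z.2 ≠ w.1 ∧ z.2 ≠ w.2 with hgood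
  obtain ⟨M, hM, hmax⟩ := exists_max_image ((E ×ˢ E).powerset.filter good) card
    ⟨∅, mem_filter.2 ⟨mem_powerset.2 (empty_subset _), by simp [hgood]⟩⟩
  obtain ⟨hME, hMc, hMd⟩ := mem_filter.1 hM
  rw [mem_powerset] at hME
  have hL : ∀ z ∈ M, ∃ L, IsLensOf z.1 z.2 L := fun z hz => (hMc z hz).lens
  have : Nonempty Lens := ⟨default⟩
  choose! ℓ hℓ using hL
  have hdis : ∀ z ∈ M, ∀ w ∈ M, z ≠ w → (ℓ z).Share (ℓ w) →
      (ℓ z).x2 ≤ (ℓ w).x1 ∨ (ℓ w).x2 ≤ (ℓ z).x1 := by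
    intro z hz w hw hzw hs
    obtain ⟨ok1, c1, p1, p2, p3, p4⟩ := hℓ z hz
    obtain ⟨ok2, c2, q1, q2, q3, q4⟩ := hℓ w hw
    obtain ⟨d1, d2, d3, d4⟩ := hMd z hz w hw hzw
    have mz := mem_product.1 (hME hz)
    have mw := mem_product.1 (hME hw)
    by_contra hcon
    rw [not_or, not_le, not_le] at hcon
    have l1 := ok1.lt
    have l2 := ok2.lt
    set x := (max (ℓ z).x1 (ℓ w).x1 + min (ℓ z).x2 (ℓ w).x2) / 2
    have hmm : max (ℓ z).x1 (ℓ w).x1 < min (ℓ z).x2 (ℓ w).x2 :=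
      max_lt (lt_min l1 hcon.2) (lt_min hcon.1 l2)
    have x1 : (ℓ z).x1 < x := by
      have := le_max_left (ℓ z).x1 (ℓ w).x1
      simp only [x]; linarith
    have x2 : (ℓ w).x1 < x := by
      have := le_max_right (ℓ z).x1 (ℓ w).x1
      simp only [x]; linarith
    have x3 : x < (ℓ z).x2 := by
      have := min_le_left (ℓ z).x2 (ℓ w).x2
      simp only [x]; linarith
    have x4 : x < (ℓ w).x2 := by
      have := min_le_right (ℓ z).x2 (ℓ w).x2
      simp only [x]; linarith
    have key : ∀ a ∈ E, ∀ b ∈ E, a.f = b.f → a.p.1 ≤ (ℓ z).x1 → b.p.1 ≤ (ℓ w).x1 →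
      (ℓ z).x2 ≤ a.q.1 → (ℓ w).x2 ≤ b.q.1 → a = b := by
      intro a ha b hb hf h1 h2 h3 h4
      exact B.H1 ha hb hf (x := x) (by linarith) (by linarith) (by linarith) (by linarith)
    have hany : z.1.f = w.1.f ∨ z.1.f = w.2.f ∨ z.2.f = w.1.f ∨ z.2.f = w.2.f := by
      rcases c1 with ⟨c1, c1'⟩ | ⟨c1, c1'⟩ <;> rcases c2 with ⟨c2, c2'⟩ | ⟨c2, c2'⟩ <;>
        unfold Lens.Share at hs <;> rw [c1, c1', c2, c2'] at hs <;> tauto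
    rcases hany with h | h | h | h
    · exact d1 (key _ mz.1 _ mw.1 h p1 q1 p3 q3)
    · exact d2 (key _ mz.1 _ mw.2 h p1 q2 p3 q4)
    · exact d3 (key _ mz.2 _ mw.1 h p2 q1 p4 q3)
    · exact d4 (key _ mz.2 _ mw.2 h p2 q2 p4 q4)
  have hinj : Set.InjOn ℓ M := by
    intro z hz w hw hzw
    by_contra hne
    have := hdis z hz w hw hne (Or.inl (by rw [hzw]))
    have l1 := (hℓ z hz).1.lt
    rw [hzw] at this l1
    rcases this with h | h <;> linarith
  have hΛ := lens_bound F (M.image ℓ)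
    (by intro L hL; obtain ⟨z, hz, rfl⟩ := mem_image.1 hL; exact (hℓ z hz).1)
    (by
      intro L hL L' hL' hne hs
      obtain ⟨z, hz, rfl⟩ := mem_image.1 hL
      obtain ⟨w, hw, rfl⟩ := mem_image.1 hL'
      exact hdis z hz w hw (fun h => hne (by rw [h])) hs)
    (by
      intro L hL; obtain ⟨z, hz, rfl⟩ := mem_image.1 hL
      have mz := mem_product.1 (hME hz)
      rcases (hℓ z hz).2.1 with h | h
      · rw [h.1]; exact B.memF _ mz.1
      · rw [h.1]; exact B.memF _ mz.2)
    (by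
      intro L hL; obtain ⟨z, hz, rfl⟩ := mem_image.1 hL
      have mz := mem_product.1 (hME hz)
      rcases (hℓ z hz).2.1 with h | h
      · rw [h.2]; exact B.memF _ mz.2
      · rw [h.2]; exact B.memF _ mz.1)
  rw [card_image_of_injOn hinj] at hΛ
  set R := M.image Prod.fst ∪ M.image Prod.snd with hR
  refine ⟨E \ R, sdiff_subset, ?_, ?_⟩
  · intro a ha b hb hab
    rw [mem_sdiff] at ha hb
    have hnot : (a, b) ∉ M := fun h => ha.2 (mem_union_left _ (mem_image.2 ⟨_, h, rfl⟩))
    have hra : ∀ w ∈ M, a ≠ w.1 ∧ a ≠ w.2 := fun w hw =>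
      ⟨fun h => ha.2 (mem_union_left _ (mem_image.2 ⟨w, hw, h.symm⟩)),
        fun h => ha.2 (mem_union_right _ (mem_image.2 ⟨w, hw, h.symm⟩))⟩
    have hrb : ∀ w ∈ M, b ≠ w.1 ∧ b ≠ w.2 := fun w hw =>
      ⟨fun h => hb.2 (mem_union_left _ (mem_image.2 ⟨w, hw, h.symm⟩)),
        fun h => hb.2 (mem_union_right _ (mem_image.2 ⟨w, hw, h.symm⟩))⟩
    have := hmax (insert (a, b) M) (mem_filter.2 ⟨mem_powerset.2 (insert_subset
      (mem_product.2 ⟨ha.1, hb.1⟩) hME), ?_, ?_⟩)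
    · rw [card_insert_of_notMem hnot] at this; omega
    · intro z hz
      rcases mem_insert.1 hz with rfl | hz
      · exact hab
      · exact hMc z hz
    · intro z hz w hw hzw
      rcases mem_insert.1 hz with rfl | hz <;> rcases mem_insert.1 hw with rfl | hw
      · exact absurd rfl hzw
      · exact ⟨(hra w hw).1, (hra w hw).2, (hrb w hw).1, (hrb w hw).2⟩
      · exact ⟨(hra z hz).1.symm, (hrb z hz).1.symm, (hra z hz).2.symm, (hrb z hz).2.symm⟩
      · exact hMd z hz w hw hzw
  · have h1 : E.card ≤ (E \ R).card + R.card := by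
      have := le_card_sdiff R E
      omega
    have h2 : R.card ≤ 2 * M.card := by
      have : R.card ≤ _ := card_union_le (M.image Prod.fst) (M.image Prod.snd)
      have h3 := card_image_le (s := M) (f := Prod.fst)
      have h4 := card_image_le (s := M) (f := Prod.snd)
      omega
    have h3 : (E.card : ℝ) ≤ (E \ R).card + 2 * M.card := by exact_mod_cast (by omega)
    linarith

def Cross (e e' : Edge) : Prop := e.f ≠ e'.f ∧ ∃ x, e.p.1 < x ∧ e'.p.1 < x ∧ x < e.q.1 ∧
  x < e'.q.1 ∧ ev e.f x = ev e'.f x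

def XX (E : Finset Edge) : Finset (Edge × Edge) := (E ×ˢ E).filter (fun z => Cross z.1 z.2)

lemma Base.cross_le (B : Base F V E) : (XX E).card ≤ 2 * F.card ^ 2 := by
  rw [card_eq_sum_card_fiberwise (f := fun z => (z.1.f, z.2.f)) (t := F ×ˢ F)]
  · have : ∀ b ∈ F ×ˢ F, ((XX E).filter (fun z => (z.1.f, z.2.f) = b)).card ≤ 2 := by
      intro b _
      by_contra hc
      rw [not_le, two_lt_card] at hc
      obtain ⟨u, hu, v, hv, w, hw, huv, huw, hvw⟩ := hc
      simp only [XX, mem_filter, mem_product] at hu hv hw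
      obtain ⟨⟨⟨mu, mu'⟩, hn, x, x1, x2, x3, x4, x5⟩, hub⟩ := hu
      obtain ⟨⟨⟨mv, mv'⟩, _, y, y1, y2, y3, y4, y5⟩, hvb⟩ := hv
      obtain ⟨⟨⟨mw, mw'⟩, _, t, t1, t2, t3, t4, t5⟩, hwb⟩ := hw
      have e1 := Prod.mk.inj (hub.trans hvb.symm)
      have e2 := Prod.mk.inj (hub.trans hwb.symm)
      have n1 : x ≠ y := by
        rintro rfl
        exact huv (Prod.ext (B.H1 mu mv e1.1 x1 y1 x3 y3) (B.H1 mu' mv' e1.2 x2 y2 x4 y4))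
      have n2 : x ≠ t := by
        rintro rfl
        exact huw (Prod.ext (B.H1 mu mw e2.1 x1 t1 x3 t3) (B.H1 mu' mw' e2.2 x2 t2 x4 t4))
      have n3 : y ≠ t := by
        rintro rfl
        exact hvw (Prod.ext (B.H1 mv mw (e1.1.symm.trans e2.1) y1 t1 y3 t3)
          (B.H1 mv' mw' (e1.2.symm.trans e2.2) y2 t2 y4 t4))
      rw [← e1.1, ← e1.2] at y5
      rw [← e2.1, ← e2.2] at t5
      exact hn (ev_eq3 n1 n3 n2 x5 y5 t5)
    refine (sum_le_card_nsmul _ _ _ this).trans ?_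
    rw [card_product, smul_eq_mul]
    exact le_of_eq (by ring)
  · intro z hz
    have := mem_product.1 (mem_filter.1 (mem_coe.1 hz)).1
    exact mem_coe.2 (mem_product.2 ⟨B.memF _ this.1, B.memF _ this.2⟩)

def sub (E : Finset Edge) (V' : Finset (ℝ × ℝ)) : Finset Edge :=
  E.filter (fun e => e.p ∈ V' ∧ e.q ∈ V')

lemma Base.sub_le (B : Base F V E) (hn : ∀ a ∈ E, ∀ b ∈ E, ¬ Conf a b) {V' : Finset (ℝ × ℝ)}
    (hV : V' ⊆ V) : (sub E V').card ≤ 3 * V'.card + (XX (sub E V')).card := by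
  set S := sub E V'
  set E2 := S \ (XX S).image Prod.fst
  have hSE : S ⊆ E := filter_subset _ _
  have P : Pl ev Prod.snd V' E2 := by
    have h2 : ∀ e ∈ E2, e ∈ S ∧ e ∈ E := fun e he => ⟨(mem_sdiff.1 he).1, hSE (mem_sdiff.1 he).1⟩
    refine ⟨ev_cont, fun v w h h' => Prod.ext h h', ?_, ?_, ?_, ?_⟩
    · intro e he
      obtain ⟨-, b2, b3⟩ := B.mem e (h2 e he).2
      obtain ⟨-, c1, c2⟩ := mem_filter.1 (h2 e he).1
      exact ⟨c1, c2, b3⟩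
    · intro e he v hv
      exact B.H0 e (h2 e he).2 v (hV hv)
    · intro e he e' he' hf x h3 h4 h5 h6 h7
      refine (mem_sdiff.1 he).2 (mem_image.2 ⟨(e, e'), ?_, rfl⟩)
      exact mem_filter.2 ⟨mem_product.2 ⟨(h2 e he).1, (h2 e' he').1⟩, hf, x, h3, h4, h5, h6, h7⟩
    · intro e he e' he' hf hp x h3 h4 h5 h6
      apply hn e (h2 e he).2 e' (h2 e' he').2
      have h7 := (B.mem e (h2 e he).2).2.2.2.1
      have h8 := (B.mem e' (h2 e' he').2).2.2.2.1
      exact ⟨hf, e.p.1, x, h3, by rw [h7, hp, h8], h6, le_rfl, by rw [hp], h4, h5⟩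
  have h1 := P.bound
  have h2 := le_card_sdiff ((XX S).image Prod.fst) S
  have h3 := card_image_le (s := XX S) (f := Prod.fst)
  have h4 : (S \ (XX S).image Prod.fst).card = E2.card := rfl
  omega
end LCT

namespace LCT
open Finset
open scoped Classical

lemma samp {α : Type*} (V S : Finset α) (hS : S ⊆ V) (p : ℝ) :
    ∑ U ∈ V.powerset.filter (fun U => S ⊆ U), p ^ U.card * (1 - p) ^ (V.card - U.card) =
      p ^ S.card := by
  have h1 : ∑ U ∈ V.powerset.filter (fun U => S ⊆ U), p ^ U.card * (1 - p) ^ (V.card - U.card) =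
      ∑ U ∈ (V \ S).powerset, p ^ S.card * (p ^ U.card * (1 - p) ^ ((V \ S).card - U.card)) := by
    refine sum_bij' (fun U _ => U \ S) (fun U _ => U ∪ S) ?_ ?_ ?_ ?_ ?_
    · intro U hU
      obtain ⟨h1, h2⟩ := mem_filter.1 hU
      exact mem_powerset.2 (sdiff_subset_sdiff (mem_powerset.1 h1) le_rfl)
    · intro U hU
      rw [mem_powerset] at hU
      exact mem_filter.2 ⟨mem_powerset.2 (union_subset (hU.trans sdiff_subset) hS),
        subset_union_right⟩
    · intro U hU
      obtain ⟨h1, h2⟩ := mem_filter.1 hU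
      exact sdiff_union_of_subset h2
    · intro U hU
      rw [mem_powerset] at hU
      rw [union_sdiff_right]
      exact sdiff_eq_self_of_disjoint (disjoint_of_subset_left hU sdiff_disjoint)
    · intro U hU
      obtain ⟨h1, h2⟩ := mem_filter.1 hU
      rw [← mul_assoc, ← pow_add]
      have a1 := card_sdiff_add_card_eq_card h2
      have a2 := card_sdiff_add_card_eq_card hS
      congr 2
      · omega
      · omega
  rw [h1, ← mul_sum, Finset.sum_pow_mul_eq_add_pow]
  simp

lemma samp_count {α β : Type*} [DecidableEq α] (V : Finset α) (X : Finset β) (σ : β → Finset α)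
    (hσ : ∀ b ∈ X, σ b ⊆ V) (k : ℕ) (hk : ∀ b ∈ X, (σ b).card = k) (p : ℝ) :
    ∑ U ∈ V.powerset, p ^ U.card * (1 - p) ^ (V.card - U.card) *
      ((X.filter (fun b => σ b ⊆ U)).card : ℝ) = X.card * p ^ k := by
  have h1 : ∀ U, ((X.filter (fun b => σ b ⊆ U)).card : ℝ) =
      ∑ b ∈ X, if σ b ⊆ U then (1:ℝ) else 0 := by
    intro U
    rw [card_filter]; push_cast; rfl
  simp_rw [h1, mul_sum]
  rw [sum_comm]
  have h2 : ∀ b ∈ X, ∑ U ∈ V.powerset, p ^ U.card * (1 - p) ^ (V.card - U.card) *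
      (if σ b ⊆ U then (1:ℝ) else 0) = p ^ k := by
    intro b hb
    rw [← hk b hb, ← samp V (σ b) (hσ b hb) p, sum_filter]
    apply sum_congr rfl
    intro U _
    by_cases hb : σ b ⊆ U
    · simp [hb]
    · simp [hb]
  rw [sum_congr rfl h2]
  simp

variable {F : Finset Quad} {V : Finset (ℝ × ℝ)} {E : Finset Edge}

lemma Base.sampled (B : Base F V E) (hn : ∀ a ∈ E, ∀ b ∈ E, ¬ Conf a b) (p : ℝ) (hp0 : 0 ≤ p)
    (hp1 : p ≤ 1) : (E.card : ℝ) * p^2 ≤ 3 * (V.card * p) + (XX E).card * p ^ 4 := by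
  have cE := samp_count V E (fun e => {e.p, e.q})
    (fun e he => by
      obtain ⟨a1, a2, -⟩ := B.mem e he
      intro x hx
      simp only [mem_insert, mem_singleton] at hx
      rcases hx with rfl | rfl <;> assumption) 2
    (fun e he => by
      obtain ⟨a1, a2, a3, -⟩ := B.mem e he
      exact card_pair (fun h => by rw [h] at a3; exact lt_irrefl _ a3)) p
  have cV := samp_count V V (fun v => {v}) (fun v hv => by simpa using hv) 1 (fun v _ => by simp) p
  have cX := samp_count V (XX E) (fun z => {z.1.p, z.1.q, z.2.p, z.2.q})
    (fun z hz => by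
      have hm := mem_product.1 (mem_filter.1 hz).1
      obtain ⟨a1, a2, -⟩ := B.mem _ hm.1
      obtain ⟨b1, b2, -⟩ := B.mem _ hm.2
      intro x hx
      simp only [mem_insert, mem_singleton] at hx
      rcases hx with rfl | rfl | rfl | rfl <;> assumption) 4
    (fun z hz => by
      obtain ⟨hm, hf, x, x1, x2, x3, x4, x5⟩ := mem_filter.1 hz
      have hm := mem_product.1 hm
      obtain ⟨a1, a2, a3, a4, a5⟩ := B.mem _ hm.1
      obtain ⟨b1, b2, b3, b4, b5⟩ := B.mem _ hm.2
      have n1 : z.1.p ≠ z.1.q := fun h => by rw [h] at a3; exact lt_irrefl _ a3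
      have n2 : z.1.p ≠ z.2.p := fun h => hn _ hm.1 _ hm.2 ⟨hf, z.1.p.1, x, x1,
        by rw [a4, h, b4], x5, le_rfl, by rw [h], x3.le, x4.le⟩
      have n3 : z.1.p ≠ z.2.q := fun h => by rw [h] at x1; linarith
      have n4 : z.1.q ≠ z.2.p := fun h => by rw [h] at x3; linarith
      have n5 : z.1.q ≠ z.2.q := fun h => hn _ hm.1 _ hm.2 ⟨hf, x, z.1.q.1, x3,
        x5, by rw [a5, h, b5], x1.le, x2.le, le_rfl, by rw [h]⟩
      have n6 : z.2.p ≠ z.2.q := fun h => by rw [h] at b3; exact lt_irrefl _ b3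
      rw [card_insert_of_notMem, card_insert_of_notMem, card_pair n6]
      · simp [n4, n5]
      · simp [n1, n2, n3]) p
  have hU : ∀ U ∈ V.powerset, p ^ U.card * (1 - p) ^ (V.card - U.card) *
      ((E.filter (fun e => ({e.p, e.q} : Finset (ℝ × ℝ)) ⊆ U)).card : ℝ) ≤
      3 * (p ^ U.card * (1 - p) ^ (V.card - U.card) *
        ((V.filter (fun v => ({v} : Finset (ℝ × ℝ)) ⊆ U)).card : ℝ)) +
      p ^ U.card * (1 - p) ^ (V.card - U.card) *
        (((XX E).filter (fun z => ({z.1.p, z.1.q, z.2.p, z.2.q} : Finset (ℝ × ℝ)) ⊆ U)).card : ℝ) := by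
    intro U hU
    rw [mem_powerset] at hU
    have hw : 0 ≤ p ^ U.card * (1 - p) ^ (V.card - U.card) :=
      mul_nonneg (pow_nonneg hp0 _) (pow_nonneg (by linarith) _)
    have e1 : E.filter (fun e => ({e.p, e.q} : Finset (ℝ × ℝ)) ⊆ U) = sub E U := by
      ext e
      simp [sub, insert_subset_iff]
    have e2 : V.filter (fun v => ({v} : Finset (ℝ × ℝ)) ⊆ U) = U := by
      ext v
      simp only [mem_filter, singleton_subset_iff]
      exact ⟨fun h => h.2, fun h => ⟨hU h, h⟩⟩
    have e3 : (XX E).filter (fun z => ({z.1.p, z.1.q, z.2.p, z.2.q} : Finset (ℝ × ℝ)) ⊆ U) =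
        XX (sub E U) := by
      ext z
      simp only [XX, sub, mem_filter, mem_product, insert_subset_iff, singleton_subset_iff]
      tauto
    rw [e1, e2, e3]
    have h1 := B.sub_le hn hU
    have h2 : ((sub E U).card : ℝ) ≤ 3 * U.card + (XX (sub E U)).card := by exact_mod_cast h1
    have := mul_le_mul_of_nonneg_left h2 hw
    nlinarith
  have hs := sum_le_sum hU
  rw [sum_add_distrib, ← mul_sum, cE, cV, cX] at hs
  simpa using hs

lemma Base.crossing (B : Base F V E) (hn : ∀ a ∈ E, ∀ b ∈ E, ¬ Conf a b) :
    (E.card : ℝ) ≤ 6 * V.card + 6 * ((V.card : ℝ) * F.card) ^ ((2:ℝ)/3) := by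
  have hpos : 0 ≤ ((V.card : ℝ) * F.card) ^ ((2:ℝ)/3) := by positivity
  by_cases h6 : (E.card : ℝ) ≤ 6 * V.card
  · linarith
  rw [not_le] at h6
  set e := (E.card : ℝ)
  set v := (V.card : ℝ)
  set n := (F.card : ℝ)
  have hv : 0 ≤ v := by positivity
  have he : 0 < e := by linarith
  have hX : ((XX E).card : ℝ) ≤ 2 * n^2 := by
    have := B.cross_le
    simp only [n]
    exact_mod_cast this
  have hs := B.sampled hn (6 * v / e) (by positivity) (by rw [div_le_one he]; linarith)
  have h1 : e ^ 3 ≤ 144 * n ^ 2 * v ^ 2 := by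
    by_cases hv0 : v = 0
    · exfalso
      have : V.card = 0 := by
        have : (V.card : ℝ) = 0 := hv0
        exact_mod_cast this
      rw [card_eq_zero] at this
      have hE : E = ∅ := by
        rw [eq_empty_iff_forall_notMem]
        intro a ha
        have := (B.mem a ha).1
        simp_all
      simp only [e, hE] at he
      simp at he
    have hvp : 0 < v := lt_of_le_of_ne hv (Ne.symm hv0)
    have h2 : e * (6 * v / e)^2 ≤ 3 * (v * (6 * v / e)) + 2 * n^2 * (6 * v / e)^4 :=
      hs.trans (by gcongr)
    have h3 : e * (6 * v / e)^2 * e ^ 4 ≤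
        (3 * (v * (6 * v / e)) + 2 * n^2 * (6 * v / e)^4) * e ^ 4 :=
      mul_le_mul_of_nonneg_right h2 (by positivity)
    have e1 : e * (6 * v / e)^2 * e ^ 4 = 36 * v^2 * e^3 := by field_simp; ring
    have e2 : (3 * (v * (6 * v / e)) + 2 * n^2 * (6 * v / e)^4) * e ^ 4 =
        18 * v^2 * e^3 + 2592 * n^2 * v^4 := by field_simp; ring
    rw [e1, e2] at h3
    have h4 : 18 * v^2 * e^3 ≤ 18 * v^2 * (144 * n^2 * v^2) := by nlinarith
    exact le_of_mul_le_mul_left h4 (by positivity)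
  have h2 : e ≤ 6 * (v * n) ^ ((2:ℝ)/3) := by
    apply le_of_pow_le_pow_left₀ (n := 3) (by norm_num) (by positivity)
    have : (6 * (v * n) ^ ((2:ℝ)/3)) ^ 3 = 216 * (v * n)^2 := by
      rw [mul_pow, ← Real.rpow_natCast ((v * n) ^ ((2:ℝ)/3)), ← Real.rpow_mul (by positivity)]
      norm_num
    rw [this]
    have : 0 ≤ n^2 * v^2 := by positivity
    nlinarith
  linarith

def Inc (P : Finset (ℝ × ℝ)) (F : Finset Quad) : Finset ((ℝ × ℝ) × Quad) :=
  (P ×ˢ F).filter (fun z => ev z.2 z.1.1 = z.1.2)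

theorem base_bound (P : Finset (ℝ × ℝ)) (F : Finset Quad) :
    ((Inc P F).card : ℝ) ≤ F.card + 6 * P.card + 6 * ((P.card : ℝ) * F.card) ^ ((2:ℝ)/3) +
      120 * (F.card * √F.card * (1 + Real.log F.card)) := by
  set E : Finset Edge := ((F ×ˢ (P ×ˢ P)).image (fun z => (⟨z.1, z.2.1, z.2.2⟩ : Edge))).filter
    (fun e => e.p.1 < e.q.1 ∧ ev e.f e.p.1 = e.p.2 ∧ ev e.f e.q.1 = e.q.2 ∧
      ∀ v ∈ P, e.p.1 < v.1 → v.1 < e.q.1 → ev e.f v.1 ≠ v.2) with hE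
  have B : Base F P E := by
    refine ⟨?_, ?_, ?_⟩
    · intro e he
      obtain ⟨h1, -⟩ := mem_filter.1 he
      obtain ⟨z, hz, rfl⟩ := mem_image.1 h1
      exact (mem_product.1 hz).1
    · intro e he
      obtain ⟨h1, h2, h3, h4, h5⟩ := mem_filter.1 he
      obtain ⟨z, hz, rfl⟩ := mem_image.1 h1
      have := mem_product.1 (mem_product.1 hz).2
      exact ⟨this.1, this.2, h2, h3, h4⟩
    · intro e he
      exact (mem_filter.1 he).2.2.2.2
  have hI : (Inc P F).card ≤ F.card + E.card := by
    rw [← card_filter_add_card_filter_not (s := Inc P F)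
      (fun z => ∀ v ∈ P, ev z.2 v.1 = v.2 → z.1.1 ≤ v.1)]
    apply Nat.add_le_add
    · apply card_le_of_rel _ _ (fun z f => z.2 = f)
      · intro z hz
        exact ⟨z.2, (mem_product.1 (mem_filter.1 (mem_filter.1 hz).1).1).2, rfl⟩
      · rintro ⟨z, f⟩ hz ⟨w, g⟩ hw b rfl h
        simp only at h
        subst h
        simp only [Inc, mem_filter, mem_product] at hz hw
        have := hz.2 w hw.1.1.1 hw.1.2
        have := hw.2 z hz.1.1.1 hz.1.2
        have h1 : z.1 = w.1 := by linarith
        have h2 : z.2 = w.2 := by rw [← hz.1.2, ← hw.1.2, h1]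
        rw [Prod.ext h1 h2]
    · apply card_le_of_rel _ _ (fun z e => z.2 = e.f ∧ z.1 = e.q)
      · rintro ⟨z, f⟩ hz
        simp only [Inc, mem_filter, mem_product] at hz
        obtain ⟨⟨⟨hz1, hf⟩, hzf⟩, hn⟩ := hz
        push Not at hn
        obtain ⟨v, hv, hvf, hvz⟩ := hn
        obtain ⟨w, hw, hmax⟩ := exists_max_image (P.filter (fun v => ev f v.1 = v.2 ∧ v.1 < z.1))
          Prod.fst ⟨v, mem_filter.2 ⟨hv, hvf, hvz⟩⟩
        obtain ⟨hwP, hwf, hwz⟩ := mem_filter.1 hw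
        refine ⟨⟨f, w, z⟩, ?_, rfl, rfl⟩
        rw [hE, mem_filter]
        refine ⟨mem_image.2 ⟨(f, w, z), by simp [hf, hwP, hz1], rfl⟩, hwz, hwf, hzf, ?_⟩
        intro u hu hu1 hu2 huf
        have := hmax u (mem_filter.2 ⟨hu, huf, hu2⟩)
        simp only at hu1
        linarith
      · rintro z _ w _ e ⟨h1, h2⟩ ⟨h3, h4⟩
        exact Prod.ext (h2.trans h4.symm) (h1.trans h3.symm)
  obtain ⟨E', hE', hn, hc⟩ := B.matching
  have h1 := (B.mono hE').crossing hn
  have hI' : ((Inc P F).card : ℝ) ≤ F.card + E.card := by exact_mod_cast hI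
  linarith
end LCT

namespace LCT
open Finset
open scoped Classical

def ph (q : ℝ × ℝ) (z : Quad) : ℝ := ev z q.1 - q.2

lemma ph_add (q : ℝ × ℝ) (z d : Quad) (l : ℝ) : ph q (z + l • d) = ph q z + l * ev d q.1 := by
  simp only [ph, ev_add, ev_smul]; ring

lemma ph_cont (q : ℝ × ℝ) : Continuous (ph q) := by
  unfold ph ev; fun_prop

lemma ph_comb (q : ℝ × ℝ) (y z : Quad) (a b : ℝ) (h : a + b = 1) :
    ph q (a • y + b • z) = a * ph q y + b * ph q z := by
  simp only [ph, ev_add, ev_smul]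
  linear_combination q.2 * h

def Cel (S : Finset (ℝ × ℝ)) (f : Quad) : Set Quad := {z | ∀ q ∈ S, 0 ≤ ph q f * ph q z}
def Tg (T : Finset (ℝ × ℝ)) : Set Quad := {z | ∀ q ∈ T, ph q z = 0}

lemma Cel_convex (S f) : Convex ℝ (Cel S f) := by
  intro y hy z hz a b ha hb hab q hq
  rw [ph_comb q y z a b hab]
  have h1 := mul_nonneg ha (hy q hq)
  have h2 := mul_nonneg hb (hz q hq)
  nlinarith

lemma Tg_convex (T) : Convex ℝ (Tg T) := by
  intro y hy z hz a b ha hb hab q hq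
  rw [ph_comb q y z a b hab, hy q hq, hz q hq]; simp

lemma Cel_closed (S f) : IsClosed (Cel S f) := by
  have : Cel S f = ⋂ q ∈ S, {z | 0 ≤ ph q f * ph q z} := by ext z; simp [Cel]
  rw [this]
  exact isClosed_biInter fun q _ => isClosed_le continuous_const ((ph_cont q).const_mul _)

lemma Tg_closed (T) : IsClosed (Tg T) := by
  have : Tg T = ⋂ q ∈ T, {z | ph q z = 0} := by ext z; simp [Tg]
  rw [this]
  exact isClosed_biInter fun q _ => isClosed_eq (ph_cont q) continuous_const

def IsMn (A : Set Quad) (z : Quad) : Prop := z ∈ A ∧ ∀ y ∈ A, ‖z‖ ≤ ‖y‖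

lemma IsMn.uniq {A : Set Quad} (hA : Convex ℝ A) {y z : Quad} (hy : IsMn A y) (hz : IsMn A z) :
    y = z := by
  have h1 := hA hy.1 hz.1 (by norm_num : (0:ℝ) ≤ 1/2) (by norm_num : (0:ℝ) ≤ 1/2) (by norm_num)
  have h2 := hy.2 _ h1
  have h3 := le_antisymm (hy.2 z hz.1) (hz.2 y hy.1)
  have h4 := parallelogram_law_with_norm ℝ y z
  rw [← smul_add, norm_smul] at h2
  norm_num at h2
  have h5 : ‖y - z‖ * ‖y - z‖ ≤ 0 := by nlinarith [norm_nonneg y, norm_nonneg (y+z)]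
  have h6 : ‖y - z‖ = 0 := by nlinarith [norm_nonneg (y - z)]
  exact sub_eq_zero.1 (norm_eq_zero.1 h6)

lemma IsMn.exists {A : Set Quad} (hA : IsClosed A) (hn : A.Nonempty) : ∃ z, IsMn A z := by
  obtain ⟨z, hz, h⟩ := hA.exists_infDist_eq_dist hn 0
  refine ⟨z, hz, fun y hy => ?_⟩
  have := Metric.infDist_le_dist_of_mem (x := (0:Quad)) hy
  rw [h] at this
  simpa using this

def vm (A : Set Quad) : Quad := if h : ∃ z, IsMn A z then h.choose else 0
lemma vm_spec {A : Set Quad} (h : ∃ z, IsMn A z) : IsMn A (vm A) := by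
  unfold vm; rw [dif_pos h]; exact h.choose_spec

def uT (T : Finset (ℝ × ℝ)) : Quad :=
  if h : ∃ u : Quad, u ≠ 0 ∧ ∀ p ∈ T, ev u p.1 = 0 then h.choose else 0
lemma uT_spec {T : Finset (ℝ × ℝ)} (hT : T.card ≤ 2) : uT T ≠ 0 ∧ ∀ p ∈ T, ev (uT T) p.1 = 0 := by
  have h : ∃ u : Quad, u ≠ 0 ∧ ∀ p ∈ T, ev u p.1 = 0 := by
    obtain ⟨a, b, hab⟩ : ∃ a b : ℝ × ℝ, ∀ p ∈ T, p = a ∨ p = b := by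
      interval_cases h : T.card
      · rw [card_eq_zero] at h; exact ⟨0, 0, by simp [h]⟩
      · obtain ⟨a, rfl⟩ := card_eq_one.1 h; exact ⟨a, a, by simp⟩
      · obtain ⟨a, b, -, rfl⟩ := card_eq_two.1 h; exact ⟨a, b, by simp⟩
    refine ⟨!₂[1, -(a.1 + b.1), a.1 * b.1], ?_, ?_⟩
    · intro h0
      have := congrArg (fun z : Quad => z 0) h0
      simp at this
    · intro p hp
      simp only [ev]
      simp
      rcases hab p hp with rfl | rfl <;> ring
  unfold uT; rw [dif_pos h]; exact h.choose_spec

def lam (g d : Quad) (q : ℝ × ℝ) : ℝ := - ph q g / ev d q.1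
def key (g d : Quad) (q : ℝ × ℝ) : ℝ ×ₗ (ℝ ×ₗ ℝ) := toLex (lam g d q, toLex (q.1, q.2))
lemma key_inj (g d : Quad) {q q' : ℝ × ℝ} (h : key g d q = key g d q') : q = q' := by
  have := congrArg (fun x => (ofLex (ofLex x).2)) h
  simpa [key] using this
lemma key_le (g d : Quad) {q q' : ℝ × ℝ} (h : key g d q ≤ key g d q') : lam g d q ≤ lam g d q' := by
  rcases (Prod.Lex.le_iff).1 h with h | h
  · exact le_of_lt h
  · exact le_of_eq h.1

def Cand (S : Finset (ℝ × ℝ)) (f d : Quad) : Finset (ℝ × ℝ) :=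
  S.filter (fun q => ph q f * ev d q.1 < 0)
def IsEx (S : Finset (ℝ × ℝ)) (f g d : Quad) (q : ℝ × ℝ) : Prop :=
  q ∈ Cand S f d ∧ ∀ q' ∈ Cand S f d, key g d q ≤ key g d q'
def ex (S : Finset (ℝ × ℝ)) (f g d : Quad) : ℝ × ℝ :=
  if h : ∃ q, IsEx S f g d q then h.choose else 0

def Bd (S : Finset (ℝ × ℝ)) (f : Quad) : Prop := ∀ d : Quad, d ≠ 0 → ∃ q ∈ S, ph q f * ev d q.1 < 0

lemma IsEx.uniq {S f g d q q'} (h : IsEx S f g d q) (h' : IsEx S f g d q') : q = q' :=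
  key_inj g d (le_antisymm (h.2 _ h'.1) (h'.2 _ h.1))

lemma ex_spec {S f} (g) {d} (hB : Bd S f) (hd : d ≠ 0) : IsEx S f g d (ex S f g d) := by
  have h : ∃ q, IsEx S f g d q := by
    obtain ⟨q, hq, hq'⟩ := hB d hd
    exact exists_min_image (Cand S f d) (key g d) ⟨q, mem_filter.2 ⟨hq, hq'⟩⟩
  unfold ex; rw [dif_pos h]; exact h.choose_spec

/- the state machine -/
def AA (S : Finset (ℝ × ℝ)) (f : Quad) (T : Finset (ℝ × ℝ)) : Set Quad := Cel S f ∩ Tg T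
def vv (S : Finset (ℝ × ℝ)) (f : Quad) (T : Finset (ℝ × ℝ)) : Quad := vm (AA S f T)
def dr (S : Finset (ℝ × ℝ)) (f : Quad) (T : Finset (ℝ × ℝ)) (g : Quad) : Quad := if g = vv S f T then uT T else g - vv S f T
def xq (S : Finset (ℝ × ℝ)) (f : Quad) (z : Finset (ℝ × ℝ) × Quad) : ℝ × ℝ := ex S f z.2 (dr S f z.1 z.2)
def stp (S : Finset (ℝ × ℝ)) (f : Quad) (z : Finset (ℝ × ℝ) × Quad) : Finset (ℝ × ℝ) × Quad :=
  (insert (xq S f z) z.1, z.2 + lam z.2 (dr S f z.1 z.2) (xq S f z) • dr S f z.1 z.2)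
def st (S : Finset (ℝ × ℝ)) (f : Quad) : ℕ → Finset (ℝ × ℝ) × Quad
  | 0 => (∅, f)
  | i+1 => stp S f (st S f i)

structure Inv (S : Finset (ℝ × ℝ)) (f : Quad) (i : ℕ) (z : Finset (ℝ × ℝ) × Quad) : Prop where
  sub : z.1 ⊆ S
  card : z.1.card = i
  inj : ∀ p ∈ z.1, ∀ q ∈ z.1, p.1 = q.1 → p = q
  mem : z.2 ∈ AA S f z.1

lemma AA_convex (S f T) : Convex ℝ (AA S f T) := (Cel_convex S f).inter (Tg_convex T)
lemma AA_closed (S f T) : IsClosed (AA S f T) := (Cel_closed S f).inter (Tg_closed T)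

lemma Inv.mn {S f i z} (h : Inv S f i z) : IsMn (AA S f z.1) (vv S f z.1) :=
  vm_spec (IsMn.exists (AA_closed _ _ _) ⟨_, h.mem⟩)

lemma Inv.dr_ne {S f i z} (h : Inv S f i z) (hi : i ≤ 2) : dr S f z.1 z.2 ≠ 0 := by
  unfold dr
  split_ifs with h1
  · exact (uT_spec (h.card ▸ hi)).1
  · exact sub_ne_zero.2 h1

lemma Inv.dr_T {S f i z} (h : Inv S f i z) (hi : i ≤ 2) : ∀ p ∈ z.1, ev (dr S f z.1 z.2) p.1 = 0 := by
  intro p hp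
  unfold dr
  split_ifs with h1
  · exact (uT_spec (h.card ▸ hi)).2 p hp
  · have a1 := h.mem.2 p hp
    have a2 := h.mn.1.2 p hp
    rw [ev_sub]
    unfold ph at a1 a2
    linarith

lemma Inv.step {S f i z} (h : Inv S f i z) (hB : Bd S f) (hi : i ≤ 2) :
    Inv S f (i+1) (stp S f z) ∧ 0 ≤ lam z.2 (dr S f z.1 z.2) (xq S f z) := by
  have hE : IsEx S f z.2 (dr S f z.1 z.2) (xq S f z) := ex_spec z.2 hB (h.dr_ne hi)
  have hT := h.dr_T hi
  set d := dr S f z.1 z.2 with hd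
  set q := xq S f z with hq
  obtain ⟨hqS, hqn⟩ := mem_filter.1 hE.1
  have hdq : ev d q.1 ≠ 0 := fun h => by rw [h] at hqn; simp at hqn
  have hl : 0 ≤ lam z.2 d q := by
    have := h.mem.1 q hqS
    have hp : ph q f ≠ 0 := fun h => by rw [h] at hqn; simp at hqn
    have e : lam z.2 d q = (ph q f * ph q z.2) / (-(ph q f * ev d q.1)) := by
      unfold lam; field_simp
    rw [e]; exact div_nonneg this (by linarith)
  have hne : ∀ p ∈ z.1, p.1 ≠ q.1 := fun p hp h' => hdq (h' ▸ hT p hp)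
  have hzero : ph q (z.2 + lam z.2 d q • d) = 0 := by
    rw [ph_add]; unfold lam; field_simp; ring
  refine ⟨⟨?_, ?_, ?_, ?_, ?_⟩, hl⟩
  · exact insert_subset hqS h.sub
  · show (insert q z.1).card = i + 1
    rw [card_insert_of_notMem (fun hm => hne q hm rfl), h.card]
  · show ∀ p ∈ insert q z.1, ∀ q' ∈ insert q z.1, p.1 = q'.1 → p = q'
    intro a ha b hb hab
    rcases mem_insert.1 ha with rfl | ha <;> rcases mem_insert.1 hb with rfl | hb
    · rfl
    · exact absurd hab.symm (hne b hb)
    · exact absurd hab (hne a ha)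
    · exact h.inj a ha b hb hab
  · show z.2 + lam z.2 d q • d ∈ Cel S f
    intro p hp
    rw [ph_add]
    have h0 := h.mem.1 p hp
    by_cases hc : ph p f * ev d p.1 < 0
    · have hk := key_le _ _ (hE.2 p (mem_filter.2 ⟨hp, hc⟩))
      have hdp : ev d p.1 ≠ 0 := fun h => by rw [h] at hc; simp at hc
      have e : ph p z.2 = - lam z.2 d p * ev d p.1 := by unfold lam; field_simp
      rw [e]
      nlinarith
    · have := mul_nonneg hl (not_lt.1 hc)
      nlinarith
  · show z.2 + lam z.2 d q • d ∈ Tg (insert q z.1)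
    intro p hp
    rcases mem_insert.1 hp with rfl | hp
    · exact hzero
    · rw [ph_add, hT p hp, h.mem.2 p hp]; simp

lemma Inv.back {S f i z} (h : Inv S f i z) (hB : Bd S f) (hi : i ≤ 2) (x : ℝ × ℝ) (c : ℝ)
    (h1 : 0 ≤ c * ph x (vv S f z.1)) (h2 : 0 ≤ c * ph x (stp S f z).2) : 0 ≤ c * ph x z.2 := by
  by_cases he : z.2 = vv S f z.1
  · rw [he]; exact h1
  · have hl := (h.step hB hi).2
    set l := lam z.2 (dr S f z.1 z.2) (xq S f z)
    have h3 : ph x (stp S f z).2 = ph x z.2 + l * ev (dr S f z.1 z.2) x.1 := ph_add _ _ _ _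
    have h4 : dr S f z.1 z.2 = z.2 - vv S f z.1 := by unfold dr; rw [if_neg he]
    rw [h3, h4, ev_sub] at h2
    have h5 : ev z.2 x.1 - ev (vv S f z.1) x.1 = ph x z.2 - ph x (vv S f z.1) := by unfold ph; ring
    rw [h5] at h2
    have h6 := mul_nonneg hl h1
    by_contra hc
    rw [not_le] at hc
    nlinarith

lemma st_inv {S f} (hB : Bd S f) : ∀ i ≤ 3, Inv S f i (st S f i) := by
  intro i
  induction i with
  | zero => intro _; exact ⟨by simp [st], by simp [st], by simp [st],
      ⟨fun q _ => mul_self_nonneg _, fun q hq => by simp [st] at hq⟩⟩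
  | succ i ih => intro hi; exact ((ih (by omega)).step hB (by omega)).1

end LCT

namespace LCT
open Finset
open scoped Classical

lemma Bd.nonempty {S f} (hB : Bd S f) : S.Nonempty := by
  obtain ⟨q, hq, -⟩ := hB (uT ∅) (uT_spec (T := ∅) (by simp)).1
  exact ⟨q, hq⟩

lemma Inv.cert {S f i z} (h : Inv S f i z) (hB : Bd S f) :
    ∃ D, D ⊆ S ∧ D.card ≤ 4 ∧ ∀ y ∈ AA D f z.1, ‖vv S f z.1‖ ≤ ‖y‖ := by
  by_contra hc
  push Not at hc
  have := Convex.helly_theorem' (𝕜 := ℝ) (s := S)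
    (F := fun q : ℝ × ℝ => Cel {q} f ∩ Tg z.1 ∩ Metric.ball (0 : Quad) ‖vv S f z.1‖)
    (fun q _ => ((Cel_convex _ _).inter (Tg_convex _)).inter (convex_ball _ _)) (by
      intro I hI hcard
      rw [finrank_euclideanSpace_fin] at hcard
      obtain ⟨y, hy, hy2⟩ := hc I hI hcard
      refine ⟨y, ?_⟩
      simp only [Set.mem_iInter]
      intro q hq
      refine ⟨⟨?_, hy.2⟩, by simpa using hy2⟩
      intro q' hq'
      rw [mem_singleton] at hq'
      exact hy.1 q' (hq' ▸ hq))
  obtain ⟨y, hy⟩ := this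
  simp only [Set.mem_iInter] at hy
  obtain ⟨q, hq⟩ := hB.nonempty
  have h1 := hy q hq
  have h2 : ‖vv S f z.1‖ ≤ ‖y‖ := h.mn.2 y ⟨fun q' hq' => (hy q' hq').1.1 q' (mem_singleton_self _), h1.1.2⟩
  have h3 := h1.2
  rw [mem_ball_zero_iff] at h3
  linarith

def Dc (S : Finset (ℝ × ℝ)) (f : Quad) (z : Finset (ℝ × ℝ) × Quad) : Finset (ℝ × ℝ) :=
  if h : ∃ D, D ⊆ S ∧ D.card ≤ 4 ∧ ∀ y ∈ AA D f z.1, ‖vv S f z.1‖ ≤ ‖y‖ then h.choose else ∅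

lemma Dc_card (S f z) : (Dc S f z).card ≤ 4 := by
  unfold Dc
  split_ifs with h
  · exact h.choose_spec.2.1
  · simp

lemma Inv.Dc {S f i z} (h : Inv S f i z) (hB : Bd S f) : Dc S f z ⊆ S ∧
    ∀ y ∈ AA (Dc S f z) f z.1, ‖vv S f z.1‖ ≤ ‖y‖ := by
  unfold LCT.Dc
  rw [dif_pos (h.cert hB)]
  exact ⟨(h.cert hB).choose_spec.1, (h.cert hB).choose_spec.2.2⟩

def DD (S : Finset (ℝ × ℝ)) (f : Quad) : Finset (ℝ × ℝ) :=
  (range 3).biUnion (fun i => insert (xq S f (st S f i)) (Dc S f (st S f i)))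

lemma DD_card (S f) : (DD S f).card ≤ 15 := by
  refine (card_biUnion_le_card_mul _ _ 5 (fun i _ => ?_)).trans (by simp)
  exact (card_insert_le _ _).trans (by have := Dc_card S f (st S f i); omega)

lemma step_stab {S f i z x} (hB : Bd S f) (hi : i ≤ 2) (h : Inv S f i z)
    (h' : Inv (insert x S) f i z) (hx : x ∉ Dc (insert x S) f z) (hq : xq (insert x S) f z ≠ x) :
    vv S f z.1 = vv (insert x S) f z.1 ∧ xq S f z = xq (insert x S) f z ∧
      stp S f z = stp (insert x S) f z := by
  have hB' : Bd (insert x S) f := fun d hd => by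
    obtain ⟨q, hq, hq'⟩ := hB d hd
    exact ⟨q, mem_insert_of_mem hq, hq'⟩
  obtain ⟨d1, d2⟩ := h'.Dc hB'
  have hsub : Dc (insert x S) f z ⊆ S := fun q hq => by
    rcases mem_insert.1 (d1 hq) with rfl | h
    · exact absurd hq hx
    · exact h
  have e1 : vv S f z.1 = vv (insert x S) f z.1 := by
    refine IsMn.uniq (AA_convex _ _ _) h.mn ⟨?_, ?_⟩
    · have := h'.mn.1
      exact ⟨fun q hq => this.1 q (mem_insert_of_mem hq), this.2⟩
    · intro y hy
      exact d2 y ⟨fun q hq => hy.1 q (hsub hq), hy.2⟩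
  have e2 : dr S f z.1 z.2 = dr (insert x S) f z.1 z.2 := by unfold dr; rw [e1]
  have e3 : xq S f z = xq (insert x S) f z := by
    have a1 : IsEx S f z.2 (dr S f z.1 z.2) (xq S f z) := ex_spec z.2 hB (h.dr_ne hi)
    have a2 : IsEx (insert x S) f z.2 (dr (insert x S) f z.1 z.2) (xq (insert x S) f z) :=
      ex_spec z.2 hB' (h'.dr_ne hi)
    rw [← e2] at a2
    refine a1.uniq ⟨?_, ?_⟩
    · have := mem_filter.1 a2.1
      refine mem_filter.2 ⟨?_, this.2⟩
      rcases mem_insert.1 this.1 with h | h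
      · exact absurd h hq
      · exact h
    · intro q' hq'
      have := mem_filter.1 hq'
      exact a2.2 q' (mem_filter.2 ⟨mem_insert_of_mem this.1, this.2⟩)
  refine ⟨e1, e3, ?_⟩
  unfold stp
  rw [e3, e2]

def Gd (S : Finset (ℝ × ℝ)) (f : Quad) (x : ℝ × ℝ) : Prop :=
  (∀ i ≤ 2, 0 ≤ ph x f * ph x (vv S f (st S f i).1)) ∧ 0 ≤ ph x f * ph x (st S f 3).2

lemma Gd_mem {S f x} (hB : Bd S f) (hx : x ∈ S) : Gd S f x :=
  ⟨fun i hi => (st_inv hB i (by omega)).mn.1.1 x hx, (st_inv hB 3 le_rfl).mem.1 x hx⟩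

lemma Gd_stab {S f x} (hB : Bd S f) (hx : x ∉ DD (insert x S) f) : Gd S f x := by
  have hB' : Bd (insert x S) f := fun d hd => by
    obtain ⟨q, hq, hq'⟩ := hB d hd
    exact ⟨q, mem_insert_of_mem hq, hq'⟩
  have hx' : ∀ i ≤ 2, x ∉ Dc (insert x S) f (st (insert x S) f i) ∧
      xq (insert x S) f (st (insert x S) f i) ≠ x := by
    intro i hi
    have : x ∉ insert (xq (insert x S) f (st (insert x S) f i)) (Dc (insert x S) f (st (insert x S) f i)) :=
      fun h => hx (mem_biUnion.2 ⟨i, by simp; omega, h⟩)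
    rw [mem_insert, not_or] at this
    exact ⟨this.2, fun h => this.1 h.symm⟩
  have key : ∀ i ≤ 3, st S f i = st (insert x S) f i := by
    intro i
    induction i with
    | zero => intro _; rfl
    | succ i ih =>
      intro hi
      have e := ih (by omega)
      have h1 := st_inv hB i (by omega)
      have h2 := st_inv hB' i (by omega)
      have h3 := hx' i (by omega)
      rw [e] at h1
      have := (step_stab hB (by omega) h1 h2 h3.1 h3.2).2.2
      simp only [st]
      rw [e, this]
  have hv : ∀ i ≤ 2, vv S f (st S f i).1 = vv (insert x S) f (st (insert x S) f i).1 := by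
    intro i hi
    have e := key i (by omega)
    have h1 := st_inv hB i (by omega)
    have h2 := st_inv hB' i (by omega)
    have h3 := hx' i (by omega)
    rw [e] at h1
    rw [e]
    exact (step_stab hB (by omega) h1 h2 h3.1 h3.2).1
  have hg := Gd_mem hB' (mem_insert_self x S)
  exact ⟨fun i hi => by rw [hv i hi]; exact hg.1 i hi, by rw [key 3 le_rfl]; exact hg.2⟩

def bit (q : ℝ × ℝ) (f : Quad) : Bool := decide (0 < ph q f)
abbrev LabT := ((ℝ × ℝ) × (ℝ × ℝ) × (ℝ × ℝ)) × (Bool × Bool × Bool)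
def Lab (S : Finset (ℝ × ℝ)) (f : Quad) : LabT :=
  ((xq S f (st S f 0), xq S f (st S f 1), xq S f (st S f 2)),
   (bit (xq S f (st S f 0)) f, bit (xq S f (st S f 1)) f, bit (xq S f (st S f 2)) f))

lemma xq_mem {S f} (hB : Bd S f) {i} (hi : i ≤ 2) : xq S f (st S f i) ∈ S := by
  have h := (st_inv hB (i+1) (by omega)).sub
  exact h (by simp [st, stp])

lemma Lab_count (S : Finset (ℝ × ℝ)) (F : Finset Quad) (hB : ∀ f ∈ F, Bd S f) :
    (F.image (Lab S)).card ≤ 8 * S.card ^ 3 := by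
  have : F.image (Lab S) ⊆ (S ×ˢ S ×ˢ S) ×ˢ (univ : Finset (Bool × Bool × Bool)) := by
    intro l hl
    obtain ⟨f, hf, rfl⟩ := mem_image.1 hl
    have := hB f hf
    simp [Lab, xq_mem this]
  refine (card_le_card this).trans (le_of_eq ?_)
  simp only [card_product, card_univ, Fintype.card_prod, Fintype.card_bool]
  ring

lemma bit_pos {q f f'} (h : ph q f ≠ 0) (h' : ph q f' ≠ 0) (hb : bit q f = bit q f') :
    0 < ph q f * ph q f' := by
  unfold bit at hb
  rw [decide_eq_decide] at hb
  rcases lt_or_gt_of_ne h with h | h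
  · rcases lt_or_gt_of_ne h' with h' | h'
    · exact mul_pos_of_neg_of_neg h h'
    · exact absurd (hb.2 h') (not_lt.2 h.le)
  · exact mul_pos h (hb.1 h)

lemma Cel_eq {S f f'} (h : ∀ q ∈ S, 0 < ph q f * ph q f') : Cel S f = Cel S f' := by
  ext z
  constructor
  · intro hz q hq
    have h1 := hz q hq
    have h2 := h q hq
    have : 0 ≤ (ph q f * ph q f') * (ph q f' * ph q z) := by
      nlinarith [mul_nonneg h1 (mul_self_nonneg (ph q f'))]
    exact nonneg_of_mul_nonneg_right this h2
  · intro hz q hq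
    have h1 := hz q hq
    have h2 := h q hq
    have : 0 ≤ (ph q f * ph q f') * (ph q f * ph q z) := by
      nlinarith [mul_nonneg h1 (mul_self_nonneg (ph q f))]
    exact nonneg_of_mul_nonneg_right this h2

lemma st_T (S f) : (st S f 0).1 = ∅ ∧ (st S f 1).1 = {xq S f (st S f 0)} ∧
    (st S f 2).1 = {xq S f (st S f 1), xq S f (st S f 0)} ∧
    (st S f 3).1 = {xq S f (st S f 2), xq S f (st S f 1), xq S f (st S f 0)} := by
  refine ⟨rfl, rfl, rfl, rfl⟩

lemma card3 {T : Finset (ℝ × ℝ)} (hT : T.card = 3) (hi : ∀ p ∈ T, ∀ q ∈ T, p.1 = q.1 → p = q)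
    {w w' : Quad} (h : w ∈ Tg T) (h' : w' ∈ Tg T) : w = w' := by
  obtain ⟨a, b, c, hab, hac, hbc, rfl⟩ := card_eq_three.1 hT
  have e : ∀ q ∈ ({a, b, c} : Finset (ℝ × ℝ)), ev w q.1 = ev w' q.1 := fun q hq => by
    have h1 := h q hq
    have h2 := h' q hq
    unfold ph at h1 h2
    linarith
  exact ev_eq3 (fun hh => hab (hi a (by simp) b (by simp) hh))
    (fun hh => hbc (hi b (by simp) c (by simp) hh))
    (fun hh => hac (hi a (by simp) c (by simp) hh)) (e a (by simp)) (e b (by simp)) (e c (by simp))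

lemma Lab_good {S f f' x} (hB : Bd S f) (hB' : Bd S f') (hn : ∀ q ∈ S, ph q f ≠ 0)
    (hn' : ∀ q ∈ S, ph q f' ≠ 0) (hG : ∀ g, (S.filter (fun q => ph q g = 0)).card ≤ 3)
    (hL : Lab S f = Lab S f') (hx : Gd S f x) : 0 ≤ ph x f * ph x f' := by
  simp only [Lab, Prod.mk.injEq] at hL
  obtain ⟨⟨e0, e1, e2⟩, b0, b1, b2⟩ := hL
  obtain ⟨t0, t1, t2, t3⟩ := st_T S f
  obtain ⟨t0', t1', t2', t3'⟩ := st_T S f'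
  have T0 : (st S f 0).1 = (st S f' 0).1 := rfl
  have T1 : (st S f 1).1 = (st S f' 1).1 := by rw [t1, t1', e0]
  have T2 : (st S f 2).1 = (st S f' 2).1 := by rw [t2, t2', e0, e1]
  have T3 : (st S f 3).1 = (st S f' 3).1 := by rw [t3, t3', e0, e1, e2]
  have i3 := st_inv hB 3 le_rfl
  have i3' := st_inv hB' 3 le_rfl
  have hw : (st S f 3).2 = (st S f' 3).2 :=
    card3 i3.card i3.inj i3.mem.2 (by rw [T3]; exact i3'.mem.2)
  have hT : ∀ q ∈ (st S f 3).1, bit q f = bit q f' := by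
    intro q hq
    rw [t3] at hq
    simp only [mem_insert, mem_singleton] at hq
    rcases hq with rfl | rfl | rfl
    · rw [b2, ← e2]
    · rw [b1, ← e1]
    · rw [b0, ← e0]
  have hC : Cel S f = Cel S f' := by
    apply Cel_eq
    intro q hq
    by_cases hqT : q ∈ (st S f 3).1
    · exact bit_pos (hn q hq) (hn' q hq) (hT q hqT)
    · have hne : ph q (st S f 3).2 ≠ 0 := by
        intro h0
        have hs : insert q (st S f 3).1 ⊆ S.filter (fun q => ph q (st S f 3).2 = 0) := by
          intro p hp
          rcases mem_insert.1 hp with rfl | hp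
          · exact mem_filter.2 ⟨hq, h0⟩
          · exact mem_filter.2 ⟨i3.sub hp, i3.mem.2 p hp⟩
        have := (card_le_card hs).trans (hG _)
        rw [card_insert_of_notMem hqT, i3.card] at this
        omega
      have a1 := i3.mem.1 q hq
      have a2 := i3'.mem.1 q hq
      rw [← hw] at a2
      set w := ph q (st S f 3).2
      have a1' := lt_of_le_of_ne a1 (mul_ne_zero (hn q hq) hne).symm
      have a2' := lt_of_le_of_ne a2 (mul_ne_zero (hn' q hq) hne).symm
      have h4 : 0 < (ph q f * ph q f') * (w * w) := by nlinarith [mul_pos a1' a2']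
      exact pos_of_mul_pos_left h4 (mul_self_nonneg w)
  have hv : ∀ T, vv S f T = vv S f' T := fun T => by unfold vv AA; rw [hC]
  have g3 : 0 ≤ ph x f * ph x (st S f' 3).2 := by rw [← hw]; exact hx.2
  have g2 : 0 ≤ ph x f * ph x (st S f' 2).2 :=
    (st_inv hB' 2 (by omega)).back hB' le_rfl x _ (by rw [← hv, ← T2]; exact hx.1 2 le_rfl) g3
  have g1 : 0 ≤ ph x f * ph x (st S f' 1).2 :=
    (st_inv hB' 1 (by omega)).back hB' (by omega) x _ (by rw [← hv, ← T1]; exact hx.1 1 (by omega)) g2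
  exact (st_inv hB' 0 (by omega)).back hB' (by omega) x _
    (by rw [← hv, ← T0]; exact hx.1 0 (by omega)) g1

end LCT

namespace LCT
open Finset
open scoped Classical

def Gen (F : Finset Quad) (Z : Finset (ℝ × ℝ)) : Prop :=
  (∀ z ∈ Z, ∀ f ∈ F, ph z f ≠ 0) ∧ ∀ g, (Z.filter (fun q => ph q g = 0)).card ≤ 3

lemma gen_step {F Z} (h : Gen F Z) (t a b : ℝ) (hab : a < b) :
    ∃ y, a < y ∧ y < b ∧ (t, y) ∉ Z ∧ Gen F (insert (t, y) Z) := by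
  let G : Finset Quad := (Z.powersetCard 3).image
    (fun T => if h : ∃ g, g ∈ Tg T then h.choose else 0)
  let bad : Finset ℝ := F.image (fun f => ev f t) ∪ Z.image (fun z => z.2) ∪ G.image (fun f => ev f t)
  obtain ⟨y, hy, hyb⟩ := (Set.Ioo_infinite hab).exists_notMem_finset bad
  simp only [bad, mem_union, not_or] at hyb
  obtain ⟨⟨h1, h2⟩, h3⟩ := hyb
  have hZ : (t, y) ∉ Z := fun hz => h2 (mem_image.2 ⟨_, hz, rfl⟩)
  refine ⟨y, hy.1, hy.2, hZ, ?_, ?_⟩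
  · intro z hz f hf
    rcases mem_insert.1 hz with rfl | hz
    · intro h0
      exact h1 (mem_image.2 ⟨f, hf, by unfold ph at h0; simp only at h0; linarith⟩)
    · exact h.1 z hz f hf
  · intro g
    rw [filter_insert]
    split_ifs with h0
    · rw [card_insert_of_notMem (fun hm => hZ (mem_filter.1 hm).1)]
      by_contra hc
      obtain ⟨T, hT, hTc⟩ := exists_subset_card_eq
        (show 3 ≤ (Z.filter (fun q => ph q g = 0)).card by omega)
      have hgT : g ∈ Tg T := fun q hq => (mem_filter.1 (hT hq)).2
      have hex : ∃ g, g ∈ Tg T := ⟨g, hgT⟩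
      have he : hex.choose = g := by
        refine card3 hTc ?_ hex.choose_spec hgT
        intro p hp q hq hpq
        have a1 := hgT p hp
        have a2 := hgT q hq
        unfold ph at a1 a2
        rw [hpq] at a1
        exact Prod.ext hpq (by linarith)
      apply h3
      refine mem_image.2 ⟨g, mem_image.2 ⟨T, mem_powersetCard.2
        ⟨hT.trans (filter_subset _ _), hTc⟩, ?_⟩, ?_⟩
      · rw [dif_pos hex, he]
      · unfold ph at h0; simp only at h0; linarith
    · exact h.2 g

lemma gen_family {ι : Type*} {F} (I : Finset ι) (t a b : ι → ℝ) (hab : ∀ i, a i < b i) {Z}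
    (hZ : Gen F Z) : ∃ y : ι → ℝ, (∀ i ∈ I, a i < y i ∧ y i < b i) ∧
      (∀ i ∈ I, ∀ j ∈ I, (t i, y i) = (t j, y j) → i = j) ∧
      Gen F (Z ∪ I.image (fun i => (t i, y i))) := by
  induction I using Finset.induction_on with
  | empty => exact ⟨fun _ => 0, by simp, by simp, by simpa using hZ⟩
  | insert i I hi ih =>
    obtain ⟨y, h1, h2, h3⟩ := ih
    obtain ⟨y0, g1, g2, g3, g4⟩ := gen_step h3 (t i) (a i) (b i) (hab i)
    have hne : ∀ j ∈ I, j ≠ i := fun j hj h => hi (h ▸ hj)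
    have hu : ∀ j ∈ I, Function.update y i y0 j = y j := fun j hj =>
      Function.update_of_ne (hne j hj) _ _
    have hfr : ∀ j ∈ I, (t i, y0) ≠ (t j, y j) := fun j hj h =>
      g3 (mem_union_right _ (mem_image.2 ⟨j, hj, h.symm⟩))
    refine ⟨Function.update y i y0, ?_, ?_, ?_⟩
    · intro j hj
      rcases mem_insert.1 hj with rfl | hj
      · simp [g1, g2]
      · rw [hu j hj]; exact h1 j hj
    · intro j hj k hk hjk
      rcases mem_insert.1 hj with ej | hj' <;> rcases mem_insert.1 hk with ek | hk'
      · rw [ej, ek]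
      · rw [hu k hk', ej, Function.update_self] at hjk; exact absurd hjk (hfr k hk')
      · rw [hu j hj', ek, Function.update_self] at hjk; exact absurd hjk.symm (hfr j hj')
      · rw [hu j hj', hu k hk'] at hjk; exact h2 j hj' k hk' hjk
    · have : Z ∪ (insert i I).image (fun i' => (t i', Function.update y i y0 i')) =
          insert (t i, y0) (Z ∪ I.image (fun i => (t i, y i))) := by
        rw [image_insert, Function.update_self, union_insert]
        congr 2
        apply image_congr
        intro j hj
        simp only
        rw [hu j hj]
      rw [this]; exact g4

lemma gen_box (F : Finset Quad) : ∃ B : Finset (ℝ × ℝ), B.card ≤ 6 ∧ Gen F B ∧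
    ∀ f ∈ F, ∀ S, B ⊆ S → Bd S f := by
  obtain ⟨K, hK⟩ := ((F ×ˢ (univ : Finset (Fin 3))).image
    (fun z => |ev z.1 ((z.2 : ℕ) : ℝ)|)).exists_le
  have hK' : ∀ f ∈ F, ∀ j : Fin 3, |ev f ((j:ℕ):ℝ)| ≤ K := fun f hf j =>
    hK _ (mem_image.2 ⟨(f, j), by simp [hf], rfl⟩)
  obtain ⟨y, h1, -, h3⟩ := gen_family (F := F) (univ : Finset (Fin 3 × Bool))
    (fun i => ((i.1:ℕ):ℝ)) (fun i => if i.2 then K else -K-1) (fun i => if i.2 then K+1 else -K)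
    (fun i => by rcases i with ⟨j, b⟩; cases b <;> simp) (Z := ∅) ⟨by simp, by simp⟩
  refine ⟨_, ?_, h3, ?_⟩
  · rw [empty_union]
    exact card_image_le.trans (by simp)
  · intro f hf S hS d hd
    have hj : ∃ j : Fin 3, ev d ((j:ℕ):ℝ) ≠ 0 := by
      by_contra hc
      push Not at hc
      have c0 := hc 0
      have c1 := hc 1
      have c2 := hc 2
      exact hd (ev_zero3 (by norm_num) (by norm_num) (by norm_num) c0 c1 c2)
    obtain ⟨j, hj⟩ := hj
    have hk := abs_le.1 (hK' f hf j)
    rcases lt_or_gt_of_ne hj with hj | hj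
    · refine ⟨(((j:ℕ):ℝ), y (j, false)), hS (mem_union_right _ (mem_image.2 ⟨(j, false), mem_univ _, rfl⟩)), ?_⟩
      have := (h1 (j, false) (mem_univ _)).2
      simp only [Bool.false_eq_true, if_false] at this
      apply mul_neg_of_pos_of_neg _ hj
      unfold ph; simp only; linarith [hk.1]
    · refine ⟨(((j:ℕ):ℝ), y (j, true)), hS (mem_union_right _ (mem_image.2 ⟨(j, true), mem_univ _, rfl⟩)), ?_⟩
      have := (h1 (j, true) (mem_univ _)).1
      simp only [if_true] at this
      apply mul_neg_of_neg_of_pos _ hj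
      unfold ph; simp only; linarith [hk.2]

lemma gap (F : Finset Quad) (p : ℝ × ℝ) : ∃ δ : ℝ, 0 < δ ∧ ∀ f ∈ F, ph p f ≠ 0 → δ ≤ |ph p f| := by
  induction F using Finset.induction_on with
  | empty => exact ⟨1, by simp, by simp⟩
  | insert f F _ ih =>
    obtain ⟨δ, h1, h2⟩ := ih
    by_cases h : ph p f = 0
    · refine ⟨δ, h1, fun g hg hgn => ?_⟩
      rcases mem_insert.1 hg with rfl | hg
      · exact absurd h hgn
      · exact h2 g hg hgn
    · refine ⟨min δ |ph p f|, lt_min h1 (abs_pos.2 h), fun g hg hgn => ?_⟩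
      rcases mem_insert.1 hg with rfl | hg
      · exact min_le_right _ _
      · exact (min_le_left _ _).trans (h2 g hg hgn)

lemma dcount (F : Finset Quad) (Q B : Finset (ℝ × ℝ)) (hB : ∀ f ∈ F, ∀ S, B ⊆ S → Bd S f)
    (r : ℕ) : ∃ R ⊆ Q, R.card ≤ r ∧
      r * ∑ f ∈ F, (Q.filter (fun x => ¬ Gd (R ∪ B) f x)).card ≤ 15 * F.card * Q.card := by
  rcases lt_or_ge Q.card r with hr | hr
  · refine ⟨Q, Subset.rfl, hr.le, ?_⟩
    rw [sum_eq_zero]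
    · simp
    · intro f hf
      rw [card_eq_zero, filter_eq_empty_iff]
      intro x hx
      rw [not_not]
      exact Gd_mem (hB f hf _ subset_union_right) (mem_union_left _ hx)
  have hf : ∀ f ∈ F, ∑ R ∈ Q.powersetCard r, (Q.filter (fun x => ¬ Gd (R ∪ B) f x)).card ≤
      15 * Q.card.choose (r+1) := by
    intro f hf
    have h1 : ((Q.powersetCard r).sigma (fun R => Q.filter (fun x => ¬ Gd (R ∪ B) f x))).card ≤
        ((Q.powersetCard (r+1)).sigma (fun R => DD (R ∪ B) f)).card := by
      refine card_le_card_of_injOn (fun z => ⟨insert z.2 z.1, z.2⟩) ?_ ?_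
      · rintro ⟨R, x⟩ hz
        simp only [mem_coe, mem_sigma, mem_powersetCard, mem_filter] at hz ⊢
        obtain ⟨⟨a1, a2⟩, a3, a4⟩ := hz
        have hxR : x ∉ R := fun hx => a4 (Gd_mem (hB f hf _ subset_union_right) (mem_union_left _ hx))
        refine ⟨⟨insert_subset a3 a1, by rw [card_insert_of_notMem hxR, a2]⟩, ?_⟩
        by_contra hc
        rw [insert_union] at hc
        exact a4 (Gd_stab (hB f hf _ subset_union_right) hc)
      · rintro ⟨R, x⟩ hz ⟨R', x'⟩ hz' he
        simp only [mem_coe, mem_sigma, mem_powersetCard, mem_filter] at hz hz'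
        simp only [Sigma.mk.injEq, heq_eq_eq] at he
        obtain ⟨he, rfl⟩ := he
        have hxR : x ∉ R := fun hx =>
          hz.2.2 (Gd_mem (hB f hf _ subset_union_right) (mem_union_left _ hx))
        have hxR' : x ∉ R' := fun hx =>
          hz'.2.2 (Gd_mem (hB f hf _ subset_union_right) (mem_union_left _ hx))
        have : R = R' := by
          rw [← erase_insert hxR, he, erase_insert hxR']
        rw [this]
    rw [card_sigma, card_sigma] at h1
    refine h1.trans ?_
    refine (sum_le_card_nsmul _ _ 15 (fun R _ => DD_card _ _)).trans ?_
    rw [card_powersetCard, smul_eq_mul, mul_comm]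
  have hsum : ∑ R ∈ Q.powersetCard r, ∑ f ∈ F, (Q.filter (fun x => ¬ Gd (R ∪ B) f x)).card ≤
      F.card * (15 * Q.card.choose (r+1)) := by
    rw [sum_comm]
    exact (sum_le_card_nsmul _ _ _ hf)
  have hne : (Q.powersetCard r).Nonempty := powersetCard_nonempty.2 hr
  obtain ⟨R, hR, hmin⟩ := exists_min_image (Q.powersetCard r)
    (fun R => ∑ f ∈ F, (Q.filter (fun x => ¬ Gd (R ∪ B) f x)).card) hne
  have h2 := card_nsmul_le_sum (Q.powersetCard r) _ _ hmin
  rw [card_powersetCard, smul_eq_mul] at h2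
  have h3 := h2.trans hsum
  obtain ⟨hRQ, hRc⟩ := mem_powersetCard.1 hR
  refine ⟨R, hRQ, hRc.le, ?_⟩
  set W := ∑ f ∈ F, (Q.filter (fun x => ¬ Gd (R ∪ B) f x)).card
  have h4 := Nat.choose_succ_right_eq Q.card r
  have hpos : 0 < Q.card.choose r := Nat.choose_pos hr
  have h5 : Q.card.choose r * (W * (r+1)) ≤ Q.card.choose r * (15 * F.card * (Q.card - r)) := by
    calc Q.card.choose r * (W * (r+1)) = (Q.card.choose r * W) * (r+1) := by ring
      _ ≤ (F.card * (15 * Q.card.choose (r+1))) * (r+1) := Nat.mul_le_mul_right _ h3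
      _ = 15 * F.card * (Q.card.choose (r+1) * (r+1)) := by ring
      _ = _ := by rw [h4]; ring
  have h6 := Nat.le_of_mul_le_mul_left h5 hpos
  calc r * W ≤ W * (r+1) := by nlinarith
    _ ≤ _ := h6
    _ ≤ _ := Nat.mul_le_mul_left _ (Nat.sub_le _ _)

lemma cutting (F : Finset Quad) (P : Finset (ℝ × ℝ)) (r : ℕ) : ∃ lab : Quad → LabT,
    (F.image lab).card ≤ 8 * (r+6)^3 ∧
    r * ∑ f ∈ F, (P.filter (fun p => ¬ ∀ f' ∈ F, lab f = lab f' → (ph p f = 0 ↔ ph p f' = 0))).card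
      ≤ 30 * F.card * P.card := by
  obtain ⟨B, hBc, hBG, hBB⟩ := gen_box F
  choose δ hδ hgap using gap F
  obtain ⟨y, h1, h2, h3⟩ := gen_family (P ×ˢ (univ : Finset Bool)) (fun i => i.1.1)
    (fun i => if i.2 then i.1.2 else i.1.2 - δ i.1) (fun i => if i.2 then i.1.2 + δ i.1 else i.1.2)
    (fun i => by rcases i with ⟨j, b⟩; have := hδ j; cases b <;> simp <;> linarith) hBG
  set x : (ℝ × ℝ) × Bool → ℝ × ℝ := fun i => (i.1.1, y i) with hx
  set Q := (P ×ˢ (univ : Finset Bool)).image x with hQ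
  have hQc : Q.card ≤ 2 * P.card := card_image_le.trans (by simp [mul_comm])
  obtain ⟨R, hRQ, hRc, hR⟩ := dcount F Q B hBB r
  have hS : R ∪ B ⊆ B ∪ Q := union_subset (hRQ.trans subset_union_right) subset_union_left
  have hbd : ∀ f ∈ F, Bd (R ∪ B) f := fun f hf => hBB f hf _ subset_union_right
  refine ⟨Lab (R ∪ B), ?_, ?_⟩
  · refine (Lab_count (R ∪ B) F hbd).trans ?_
    have : (R ∪ B).card ≤ r + 6 := (card_union_le _ _).trans (by omega)
    gcongr
  · have hle : ∀ f ∈ F, (P.filter (fun p => ¬ ∀ f' ∈ F, Lab (R ∪ B) f = Lab (R ∪ B) f' →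
        (ph p f = 0 ↔ ph p f' = 0))).card ≤ (Q.filter (fun x => ¬ Gd (R ∪ B) f x)).card := by
      intro f hf
      have hp : ∀ p ∈ P.filter (fun p => ¬ ∀ f' ∈ F, Lab (R ∪ B) f = Lab (R ∪ B) f' →
          (ph p f = 0 ↔ ph p f' = 0)), ∃ b : Bool, ¬ Gd (R ∪ B) f (x (p, b)) := by
        intro p hp
        obtain ⟨hpP, hp⟩ := mem_filter.1 hp
        by_contra hc
        push Not at hc
        apply hp
        intro f' hf' hl
        have hb : ∀ b, 0 < ph (x (p, b)) f * ph (x (p, b)) f' := by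
          intro b
          have hm : x (p, b) ∈ B ∪ Q := mem_union_right _ (mem_image_of_mem _ (by simp [hpP]))
          refine lt_of_le_of_ne (Lab_good (hbd f hf) (hbd f' hf') (fun q hq => h3.1 q (hS hq) f hf)
            (fun q hq => h3.1 q (hS hq) f' hf')
            (fun g => (card_le_card (filter_subset_filter _ hS)).trans (h3.2 g)) hl (hc b)) ?_
          exact (mul_ne_zero (h3.1 _ hm f hf) (h3.1 _ hm f' hf')).symm
        have ht := h1 (p, true) (by simp [hpP])
        have hf0 := h1 (p, false) (by simp [hpP])
        simp only [if_true, Bool.false_eq_true, if_false] at ht hf0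
        have et : ∀ g, ph (x (p, true)) g = ph p g - (y (p, true) - p.2) := fun g => by
          simp only [ph, hx]; ring
        have ef : ∀ g, ph (x (p, false)) g = ph p g + (p.2 - y (p, false)) := fun g => by
          simp only [ph, hx]; ring
        have bt := hb true
        have bf := hb false
        rw [et, et] at bt
        rw [ef, ef] at bf
        have key : ∀ g ∈ F, ∀ g' ∈ F, 0 < (ph p g - (y (p, true) - p.2)) * (ph p g' - (y (p, true) - p.2)) →
            0 < (ph p g + (p.2 - y (p, false))) * (ph p g' + (p.2 - y (p, false))) →
            ph p g = 0 → ph p g' = 0 := by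
          intro g hg g' hg' k1 k2 k0
          by_contra hne
          have := hgap p g' hg' hne
          rw [k0] at k1 k2
          rcases lt_or_gt_of_ne hne with hn | hn
          · rw [abs_of_neg hn] at this
            nlinarith
          · rw [abs_of_pos hn] at this
            nlinarith
        exact ⟨key f hf f' hf' bt bf, key f' hf' f hf (by linarith) (by linarith)⟩
      choose! b hb using hp
      refine card_le_card_of_injOn (fun p => x (p, b p)) ?_ ?_
      · intro p hp
        exact mem_filter.2 ⟨mem_image_of_mem _ (by simp [(mem_filter.1 hp).1]), hb p hp⟩
      · intro p hp p' hp' he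
        have := h2 (p, b p) (by simp [(mem_filter.1 hp).1]) (p', b p') (by simp [(mem_filter.1 hp').1]) he
        exact congrArg Prod.fst this
    calc _ ≤ r * ∑ f ∈ F, (Q.filter (fun x => ¬ Gd (R ∪ B) f x)).card :=
          Nat.mul_le_mul_left _ (sum_le_sum hle)
      _ ≤ _ := hR
      _ ≤ 15 * F.card * (2 * P.card) := Nat.mul_le_mul_left _ hQc
      _ = _ := by ring

end LCT

namespace LCT
open Finset
open scoped Classical

def cnt (P : Finset (ℝ × ℝ)) (f : Quad) : ℕ := (P.filter (fun p => ph p f = 0)).card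

lemma Inc_card (P F) : (Inc P F).card = ∑ f ∈ F, cnt P f := by
  unfold Inc cnt
  rw [card_filter, sum_product_right]
  apply sum_congr rfl
  intro f _
  rw [card_filter]
  apply sum_congr rfl
  intro p _
  simp only [ph, sub_eq_zero]

lemma on3 {T : Finset (ℝ × ℝ)} (hT : T.card = 3) {w w' : Quad} (h : w ∈ Tg T) (h' : w' ∈ Tg T) :
    w = w' := by
  refine card3 hT ?_ h h'
  intro p hp q hq hpq
  have a1 := h p hp
  have a2 := h q hq
  unfold ph at a1 a2
  rw [hpq] at a1
  exact Prod.ext hpq (by linarith)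

lemma choose3 (c : ℕ) : c ≤ 2 + c.choose 3 := by
  induction c with
  | zero => simp
  | succ c ih =>
    rcases Nat.lt_or_ge c 2 with h | h
    · omega
    · have := Nat.choose_succ_succ c 2
      have h2 : 0 < c.choose 2 := Nat.choose_pos h
      have h3 : (c+1).choose 3 = c.choose 2 + c.choose 3 := this
      omega

lemma Inc_triv (P F) : (Inc P F).card ≤ 2 * F.card + P.card ^ 3 := by
  rw [Inc_card]
  have h1 : ∑ f ∈ F, cnt P f ≤ ∑ f ∈ F, (2 + ((P.filter (fun p => ph p f = 0)).powersetCard 3).card) := by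
    apply sum_le_sum
    intro f _
    rw [card_powersetCard]
    exact choose3 _
  refine h1.trans ?_
  rw [sum_add_distrib, ← card_biUnion]
  · have h2 : (F.biUnion (fun f => (P.filter (fun p => ph p f = 0)).powersetCard 3)).card ≤
        (P.powersetCard 3).card := by
      apply card_le_card
      intro T hT
      obtain ⟨f, _, hT⟩ := mem_biUnion.1 hT
      exact powersetCard_mono (filter_subset _ _) hT
    rw [card_powersetCard] at h2
    have h3 := Nat.choose_le_pow P.card 3
    simp only [sum_const, smul_eq_mul]
    omega
  · intro f _ g _ hfg
    rw [Function.onFun, disjoint_left]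
    intro T hT hT'
    obtain ⟨a1, a2⟩ := mem_powersetCard.1 hT
    obtain ⟨b1, b2⟩ := mem_powersetCard.1 hT'
    exact hfg (on3 a2 (fun q hq => (mem_filter.1 (a1 hq)).2) (fun q hq => (mem_filter.1 (b1 hq)).2))

lemma grouping {α β : Type*} [DecidableEq α] [DecidableEq β] (lab : α → β) (L : Finset β) (s : ℕ) (hs : 1 ≤ s) :
    ∀ (n : ℕ) (F : Finset α), F.card = n → F.image lab ⊆ L → ∃ G : Finset (Finset α),
      (∀ g ∈ G, g ⊆ F ∧ g.card = s ∧ ∀ a ∈ g, ∀ b ∈ g, lab a = lab b) ∧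
      (∀ g ∈ G, ∀ h ∈ G, g ≠ h → Disjoint g h) ∧ (F \ G.biUnion id).card ≤ L.card * s := by
  intro n
  induction n using Nat.strong_induction_on with
  | _ n ih =>
    intro F hF hL
    by_cases h : ∃ l ∈ L, s ≤ (F.filter (fun f => lab f = l)).card
    · obtain ⟨l, hl, hsl⟩ := h
      obtain ⟨g, hg, hgc⟩ := exists_subset_card_eq hsl
      have hgF : g ⊆ F := hg.trans (filter_subset _ _)
      have hc : (F \ g).card = F.card - g.card := card_sdiff_of_subset hgF
      have hle := card_le_card hgF
      obtain ⟨G, h1, h2, h3⟩ := ih (F \ g).card (by omega) (F \ g) rfl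
        ((image_subset_image sdiff_subset).trans hL)
      have hdis : ∀ h ∈ G, Disjoint g h := fun h hh =>
        disjoint_of_subset_right (h1 h hh).1 disjoint_sdiff
      refine ⟨insert g G, ?_, ?_, ?_⟩
      · intro k hk
        rcases mem_insert.1 hk with rfl | hk
        · refine ⟨hgF, hgc, fun a ha b hb => ?_⟩
          rw [(mem_filter.1 (hg ha)).2, (mem_filter.1 (hg hb)).2]
        · exact ⟨(h1 k hk).1.trans sdiff_subset, (h1 k hk).2⟩
      · intro a ha b hb hab
        rcases mem_insert.1 ha with rfl | ha' <;> rcases mem_insert.1 hb with rfl | hb'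
        · exact absurd rfl hab
        · exact hdis b hb'
        · exact (hdis a ha').symm
        · exact h2 a ha' b hb' hab
      · refine le_trans (card_le_card ?_) h3
        intro x hx
        simp only [mem_sdiff, biUnion_insert, mem_union, id, not_or] at hx ⊢
        exact ⟨⟨hx.1, hx.2.1⟩, hx.2.2⟩
    · push Not at h
      refine ⟨∅, by simp, by simp, ?_⟩
      simp only [biUnion_empty, sdiff_empty]
      rw [card_eq_sum_card_fiberwise (f := lab) (t := L) (fun x hx => hL (mem_image_of_mem _ hx))]
      exact (sum_le_card_nsmul _ _ s (fun l hl => (h l hl).le))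

/- bound for one group -/
lemma group_bound (P : Finset (ℝ × ℝ)) (g : Finset Quad) (s : ℕ) (hs : 2 ≤ s) (hg : g.card = s) :
    ((Inc P g).card : ℝ) ≤ 2 * s + (Inc (P.filter (fun p => ¬ ((∀ f ∈ g, ph p f = 0) ∨
      (∀ f ∈ g, ph p f ≠ 0)))) g).card := by
  set A := P.filter (fun p => ∀ f ∈ g, ph p f = 0) with hA
  set B := P.filter (fun p => ¬ ((∀ f ∈ g, ph p f = 0) ∨ (∀ f ∈ g, ph p f ≠ 0))) with hB
  have hAc : A.card ≤ 2 := by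
    by_contra hc
    obtain ⟨T, hT, hTc⟩ := exists_subset_card_eq (show 3 ≤ A.card by omega)
    obtain ⟨f, hf, f', hf', hne⟩ := one_lt_card.1 (show 1 < g.card by omega)
    exact hne (on3 hTc (fun q hq => (mem_filter.1 (hT hq)).2 f hf)
      (fun q hq => (mem_filter.1 (hT hq)).2 f' hf'))
  have hcnt : ∀ f ∈ g, cnt P f ≤ 2 + cnt B f := by
    intro f hf
    unfold cnt
    have : P.filter (fun p => ph p f = 0) ⊆ A ∪ B.filter (fun p => ph p f = 0) := by
      intro p hp
      obtain ⟨hp, h0⟩ := mem_filter.1 hp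
      by_cases hall : ∀ f ∈ g, ph p f = 0
      · exact mem_union_left _ (mem_filter.2 ⟨hp, hall⟩)
      · refine mem_union_right _ (mem_filter.2 ⟨mem_filter.2 ⟨hp, ?_⟩, h0⟩)
        rw [not_or]
        exact ⟨hall, fun h => h f hf h0⟩
    have := (card_le_card this).trans (card_union_le _ _)
    omega
  have : (Inc P g).card ≤ 2 * s + (Inc B g).card := by
    rw [Inc_card, Inc_card]
    refine (sum_le_sum hcnt).trans ?_
    rw [sum_add_distrib]
    simp [hg, mul_comm]
  exact_mod_cast this

lemma holder23 {ι : Type*} (G : Finset ι) (a : ι → ℝ) (ha : ∀ i ∈ G, 0 ≤ a i) :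
    ∑ i ∈ G, a i ^ ((2:ℝ)/3) ≤ (G.card : ℝ) ^ ((1:ℝ)/3) * (∑ i ∈ G, a i) ^ ((2:ℝ)/3) := by
  have hc : Real.HolderConjugate 3 (3/2) := by
    rw [Real.holderConjugate_iff]; norm_num
  have := Real.inner_le_Lp_mul_Lq_of_nonneg G hc (f := fun _ => (1:ℝ))
    (g := fun i => a i ^ ((2:ℝ)/3)) (fun _ _ => zero_le_one) (fun i hi => Real.rpow_nonneg (ha i hi) _)
  simp only [one_mul, Real.one_rpow, sum_const, nsmul_eq_mul, mul_one] at this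
  have e : ∑ i ∈ G, (a i ^ ((2:ℝ)/3)) ^ ((3:ℝ)/2) = ∑ i ∈ G, a i := by
    apply sum_congr rfl
    intro i hi
    rw [← Real.rpow_mul (ha i hi)]; norm_num
  rw [e] at this
  convert this using 3
  norm_num

lemma step_bound (P : Finset (ℝ × ℝ)) (F : Finset Quad) (r s : ℕ) (hr : 1 ≤ r) (hs : 2 ≤ s) :
    ∃ F' ⊆ F, F'.card ≤ 2744 * r^3 * s ∧
      ((Inc P F).card : ℝ) ≤ (Inc P F').card + (3 * F.card + 180 * (F.card * P.card / (r * s)) +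
        6 * ((F.card / s : ℝ) ^ ((1:ℝ)/3) * (30 * F.card * P.card / r : ℝ) ^ ((2:ℝ)/3)) +
        120 * (F.card * (√s * (1 + Real.log s)))) := by
  obtain ⟨lab, h1, h2⟩ := cutting F P r
  obtain ⟨G, g1, g2, g3⟩ := grouping lab (F.image lab) s (by omega) _ F rfl Subset.rfl
  refine ⟨F \ G.biUnion id, sdiff_subset, ?_, ?_⟩
  · refine g3.trans ?_
    have : (r + 6)^3 ≤ (7 * r)^3 := Nat.pow_le_pow_left (by omega) 3
    calc _ ≤ (8 * (r+6)^3) * s := Nat.mul_le_mul_right _ h1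
      _ ≤ (8 * (7*r)^3) * s := Nat.mul_le_mul_right _ (Nat.mul_le_mul_left _ this)
      _ = _ := by ring
  have hU : G.biUnion id ⊆ F := by
    intro f hf
    obtain ⟨g, hg, hf⟩ := mem_biUnion.1 hf
    exact (g1 g hg).1 hf
  have hdisj : (G : Set (Finset Quad)).PairwiseDisjoint id := fun g hg h hh hne => g2 g hg h hh hne
  have hNs : G.card * s ≤ F.card := by
    have := card_le_card hU
    rw [card_biUnion hdisj] at this
    have e : ∑ u ∈ G, (id u).card = ∑ u ∈ G, s := sum_congr rfl (fun g hg => (g1 g hg).2.1)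
    rw [e] at this
    simpa using this
  set PG : Finset Quad → Finset (ℝ × ℝ) := fun g => P.filter (fun p => ¬ ((∀ f ∈ g, ph p f = 0) ∨
      (∀ f ∈ g, ph p f ≠ 0))) with hPG
  set cf : Quad → ℕ := fun f => (P.filter (fun p => ¬ ∀ f' ∈ F, lab f = lab f' →
    (ph p f = 0 ↔ ph p f' = 0))).card with hcf
  have hm : r * ∑ g ∈ G, (PG g).card * s ≤ 30 * F.card * P.card := by
    refine le_trans (Nat.mul_le_mul_left _ ?_) h2
    have e1 : ∑ f ∈ G.biUnion id, cf f ≤ ∑ f ∈ F, cf f := sum_le_sum_of_subset hU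
    rw [sum_biUnion hdisj] at e1
    refine le_trans (sum_le_sum ?_) e1
    intro g hg
    obtain ⟨a1, a2, a3⟩ := g1 g hg
    rw [← a2, mul_comm, ← smul_eq_mul]
    refine card_nsmul_le_sum _ _ _ ?_
    intro f hf
    apply card_le_card
    intro p hp
    obtain ⟨hp, hc⟩ := mem_filter.1 hp
    refine mem_filter.2 ⟨hp, fun hall => hc ?_⟩
    by_cases h0 : ph p f = 0
    · exact Or.inl fun f' hf' => (hall f' (a1 hf') (a3 f hf f' hf')).1 h0
    · exact Or.inr fun f' hf' h => h0 ((hall f' (a1 hf') (a3 f hf f' hf')).2 h)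
  have hsplit : (Inc P F).card = (Inc P (F \ G.biUnion id)).card + ∑ g ∈ G, (Inc P g).card := by
    simp_rw [Inc_card]
    rw [← sum_sdiff hU, sum_biUnion hdisj]
    rfl
  have hs0 : (0:ℝ) < s := by exact_mod_cast (by omega : 0 < s)
  have hr0 : (0:ℝ) < r := by exact_mod_cast (by omega : 0 < r)
  have hlog : 0 ≤ Real.log s := Real.log_natCast_nonneg s
  have hNs' : (G.card : ℝ) * s ≤ F.card := by exact_mod_cast hNs
  have hm' : (r:ℝ) * ∑ g ∈ G, ((PG g).card : ℝ) * s ≤ 30 * F.card * P.card := by exact_mod_cast hm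
  have hm'' : ∑ g ∈ G, ((PG g).card : ℝ) * s ≤ 30 * F.card * P.card / r := by
    rw [le_div_iff₀ hr0]; linarith
  have hgb : ∀ g ∈ G, ((Inc P g).card : ℝ) ≤ 3 * s + 6 * (PG g).card +
      6 * (((PG g).card : ℝ) * s) ^ ((2:ℝ)/3) + 120 * (s * √s * (1 + Real.log s)) := by
    intro g hg
    have a2 := (g1 g hg).2.1
    have b1 := group_bound P g s hs a2
    have b2 := base_bound (PG g) g
    rw [a2] at b2
    linarith
  have hsum : ∑ g ∈ G, ((Inc P g).card : ℝ) ≤ 3 * F.card + 180 * (F.card * P.card / (r * s)) +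
        6 * ((F.card / s : ℝ) ^ ((1:ℝ)/3) * (30 * F.card * P.card / r : ℝ) ^ ((2:ℝ)/3)) +
        120 * (F.card * (√s * (1 + Real.log s))) := by
    refine (sum_le_sum hgb).trans ?_
    simp only [sum_add_distrib, sum_const, nsmul_eq_mul, ← mul_sum]
    have t1 : (G.card : ℝ) * (3 * s) ≤ 3 * F.card := by linarith
    have t2 : 6 * ∑ g ∈ G, ((PG g).card : ℝ) ≤ 180 * (F.card * P.card / (r * s)) := by
      rw [← sum_mul] at hm''
      have : ∑ g ∈ G, ((PG g).card : ℝ) ≤ 30 * F.card * P.card / r / s := by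
        rw [le_div_iff₀ hs0]; exact hm''
      calc 6 * ∑ g ∈ G, ((PG g).card : ℝ) ≤ 6 * (30 * F.card * P.card / r / s) := by linarith
        _ = _ := by field_simp; ring
    have t3 : ∑ g ∈ G, (((PG g).card : ℝ) * s) ^ ((2:ℝ)/3) ≤
        (F.card / s : ℝ) ^ ((1:ℝ)/3) * (30 * F.card * P.card / r : ℝ) ^ ((2:ℝ)/3) := by
      refine (holder23 G _ (fun g _ => by positivity)).trans ?_
      apply mul_le_mul
      · apply Real.rpow_le_rpow (by positivity) _ (by norm_num)
        rw [le_div_iff₀ hs0]; exact hNs'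
      · apply Real.rpow_le_rpow (sum_nonneg fun g _ => by positivity) hm'' (by norm_num)
      · exact Real.rpow_nonneg (sum_nonneg fun g _ => by positivity) _
      · positivity
    have t4 : (G.card : ℝ) * (120 * (s * √s * (1 + Real.log s))) ≤
        120 * (F.card * (√s * (1 + Real.log s))) := by
      have : 0 ≤ √(s:ℝ) * (1 + Real.log s) := by positivity
      nlinarith [mul_le_mul_of_nonneg_right hNs' this]
    linarith
  have hsp : ((Inc P F).card : ℝ) = (Inc P (F \ G.biUnion id)).card + ∑ g ∈ G, ((Inc P g).card : ℝ) := by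
    exact_mod_cast hsplit
  rw [hsp]
  linarith

end LCT

namespace LCT
open Finset
open scoped Classical

lemma rpe {x : ℝ} (hx : 0 < x) (p : ℝ) : x ^ p = Real.exp (p * Real.log x) := by
  rw [Real.rpow_def_of_pos hx, mul_comm]

lemma logu (u : ℝ) (hu : 0 ≤ u) : Real.log (1 + u) ≤ u / 2 + 0.2 := by
  have h1 : Real.log ((1+u)/2) ≤ (1+u)/2 - 1 := Real.log_le_sub_one_of_pos (by linarith)
  rw [Real.log_div (by linarith) (by norm_num)] at h1
  have := Real.log_two_lt_d9
  linarith

lemma logu2 (u : ℝ) (hu : 0 ≤ u) : Real.log (1 + u) ≤ 3/10 * u + 1 := by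
  have h1 : Real.log ((1+u)*(3/10)) ≤ (1+u)*(3/10) - 1 := Real.log_le_sub_one_of_pos (by linarith)
  rw [Real.log_mul (by linarith) (by norm_num)] at h1
  have h2 : Real.log ((3/10 : ℝ)⁻¹) ≤ Real.log ((2:ℝ)^2) := Real.log_le_log (by norm_num) (by norm_num)
  rw [Real.log_inv, Real.log_pow] at h2
  have := Real.log_two_lt_d9
  push_cast at h2
  linarith

lemma num_step (n m r s u L κ : ℝ) (hn : 0 < n) (hm : 0 < m) (hr : 0 < r) (hs : 0 < s)
    (hu : u = Real.log m - Real.log n / 3) (hu0 : 0 ≤ u) (hL : L = Real.log (1 + u))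
    (hκ : 0 ≤ κ) (hs1 : 12/11*u - 18/11*L ≤ Real.log s) (hs0 : 0 ≤ Real.log s)
    (hs2 : Real.log s ≤ 12/11*u - 18/11*L + Real.log 2)
    (hr1 : Real.log n ≤ κ + 3 * Real.log r + Real.log s) :
    3 * n + 180 * (n * m / (r * s)) + 6 * ((n / s) ^ ((1:ℝ)/3) * (30 * n * m / r) ^ ((2:ℝ)/3)) +
        120 * (n * (√s * (1 + Real.log s))) ≤
      (429 * Real.exp (κ + Real.log 30 + 1)) *
        Real.exp (6/11 * Real.log m + 9/11 * Real.log n + 2/11 * L) := by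
  have hL0 : 0 ≤ L := by rw [hL]; exact Real.log_nonneg (by linarith)
  have hL2 := logu2 u hu0
  rw [← hL] at hL2
  have h30 : 0 ≤ Real.log 30 := Real.log_nonneg (by norm_num)
  have hl2 := Real.log_two_lt_d9
  set Z := Real.exp (κ + Real.log 30 + 1) with hZ
  set Y := Real.exp (6/11 * Real.log m + 9/11 * Real.log n + 2/11 * L) with hY
  have hZY : Z * Y = Real.exp (κ + Real.log 30 + 1 + (6/11 * Real.log m + 9/11 * Real.log n + 2/11 * L)) := by
    rw [hZ, hY, ← Real.exp_add]
  have t1 : n ≤ Z * Y := by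
    rw [hZY]
    nth_rw 1 [← Real.exp_log hn]
    apply Real.exp_le_exp.2
    linarith
  have t2 : n * m / (r * s) ≤ Z * Y := by
    have e : n * m / (r * s) = Real.exp (Real.log n + Real.log m - (Real.log r + Real.log s)) := by
      rw [Real.exp_sub, Real.exp_add, Real.exp_add, Real.exp_log hn, Real.exp_log hm,
        Real.exp_log hr, Real.exp_log hs]
    rw [hZY, e]
    apply Real.exp_le_exp.2
    linarith
  have t3 : (n / s) ^ ((1:ℝ)/3) * (30 * n * m / r) ^ ((2:ℝ)/3) ≤ Z * Y := by
    rw [rpe (by positivity), rpe (by positivity), ← Real.exp_add, hZY]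
    apply Real.exp_le_exp.2
    rw [Real.log_div hn.ne' hs.ne', Real.log_div (by positivity) hr.ne',
      Real.log_mul (by positivity) hm.ne', Real.log_mul (by norm_num) hn.ne']
    linarith
  have t4 : n * (√s * (1 + Real.log s)) ≤ 2 * (Z * Y) := by
    have e1 : √s = Real.exp (Real.log s / 2) := by
      rw [Real.sqrt_eq_rpow, rpe hs]; congr 1; ring
    have e2 : 1 + Real.log s ≤ 2 * Real.exp L := by
      rw [hL, Real.exp_log (by linarith)]
      linarith
    calc n * (√s * (1 + Real.log s)) ≤ n * (√s * (2 * Real.exp L)) := by gcongr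
      _ = 2 * Real.exp (Real.log n + (Real.log s / 2 + L)) := by
          rw [e1, Real.exp_add, Real.exp_add, Real.exp_log hn]; ring
      _ ≤ 2 * (Z * Y) := by
          rw [hZY]
          have : Real.exp (Real.log n + (Real.log s / 2 + L)) ≤ Real.exp (κ + Real.log 30 + 1 + (6/11 * Real.log m + 9/11 * Real.log n + 2/11 * L)) := by
            apply Real.exp_le_exp.2
            linarith
          linarith
  have : 429 * Z * Y = 429 * (Z * Y) := by ring
  rw [this]
  linarith

def YY (m n : ℝ) : ℝ := m ^ ((6:ℝ)/11) * n ^ ((9:ℝ)/11) * (1 + Real.log n) ^ ((2:ℝ)/11)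

lemma YY_half (m : ℝ) (n n' : ℕ) (hm : 0 ≤ m) (h : (n':ℝ) ≤ n / 2) (hn : 1 ≤ n) :
    YY m n' ≤ 3/4 * YY m n := by
  unfold YY
  have hn1 : (1:ℝ) ≤ n := by exact_mod_cast hn
  have h1 : (n':ℝ) ^ ((9:ℝ)/11) ≤ 3/4 * (n:ℝ) ^ ((9:ℝ)/11) := by
    calc (n':ℝ) ^ ((9:ℝ)/11) ≤ ((1/2) * (n:ℝ)) ^ ((9:ℝ)/11) :=
          Real.rpow_le_rpow (by positivity) (by linarith) (by norm_num)
      _ = (1/2:ℝ) ^ ((9:ℝ)/11) * (n:ℝ) ^ ((9:ℝ)/11) := Real.mul_rpow (by norm_num) (by positivity)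
      _ ≤ _ := by
        gcongr
        calc (1/2:ℝ) ^ ((9:ℝ)/11) ≤ (1/2:ℝ) ^ ((1:ℝ)/2) :=
              Real.rpow_le_rpow_of_exponent_ge (by norm_num) (by norm_num) (by norm_num)
          _ ≤ 3/4 := by
            rw [← Real.sqrt_eq_rpow]
            apply Real.sqrt_le_iff.2; norm_num
  have hl0 : 0 ≤ Real.log n' := Real.log_natCast_nonneg n'
  have h2 : (1 + Real.log n') ^ ((2:ℝ)/11) ≤ (1 + Real.log n) ^ ((2:ℝ)/11) := by
    apply Real.rpow_le_rpow (by linarith) _ (by norm_num)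
    rcases Nat.eq_zero_or_pos n' with h0 | h0
    · rw [h0]; simp; exact Real.log_natCast_nonneg n
    · have : (0:ℝ) < n' := by exact_mod_cast h0
      have := Real.log_le_log this (show (n':ℝ) ≤ n by linarith)
      linarith
  calc m ^ ((6:ℝ)/11) * (n':ℝ) ^ ((9:ℝ)/11) * (1 + Real.log n') ^ ((2:ℝ)/11)
      ≤ m ^ ((6:ℝ)/11) * (3/4 * (n:ℝ) ^ ((9:ℝ)/11)) * (1 + Real.log n) ^ ((2:ℝ)/11) := by
        gcongr
    _ = _ := by ring

lemma cube_root (x : ℝ) (hx : 1 ≤ x) : ∃ r : ℕ, 1 ≤ r ∧ (r:ℝ)^3 ≤ x ∧ x ≤ 8 * (r:ℝ)^3 := by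
  have hx0 : 0 ≤ x := by linarith
  set c := x ^ ((1:ℝ)/3) with hc
  have hc1 : 1 ≤ c := Real.one_le_rpow hx (by norm_num)
  have hc3 : c ^ 3 = x := by
    rw [hc, ← Real.rpow_natCast, ← Real.rpow_mul hx0]; norm_num
  have hr : 1 ≤ ⌊c⌋₊ := (Nat.one_le_floor_iff c).2 hc1
  have hr' : (1:ℝ) ≤ ⌊c⌋₊ := by exact_mod_cast hr
  refine ⟨⌊c⌋₊, hr, ?_, ?_⟩
  · rw [← hc3]
    exact pow_le_pow_left₀ (by positivity) (Nat.floor_le (by linarith)) 3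
  · have h1 := Nat.lt_floor_add_one c
    have h2 : c ≤ 2 * ⌊c⌋₊ := by linarith
    rw [← hc3]
    calc c^3 ≤ (2 * (⌊c⌋₊:ℝ))^3 := pow_le_pow_left₀ (by linarith) h2 3
      _ = _ := by ring

set_option maxHeartbeats 4000000 in
lemma main_inc : ∃ A : ℝ, 0 < A ∧ ∀ (P : Finset (ℝ × ℝ)) (F : Finset Quad),
    ((Inc P F).card : ℝ) ≤ A * (P.card + F.card + ((P.card:ℝ) * F.card) ^ ((2:ℝ)/3) +
      YY P.card F.card) := by
  set κ := Real.log 43904 with hκ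
  have hκ0 : 0 ≤ κ := Real.log_nonneg (by norm_num)
  have hκ' : Real.log 10976 ≤ κ := Real.log_le_log (by norm_num) (by norm_num)
  have hκ'0 : 0 ≤ Real.log 10976 := Real.log_nonneg (by norm_num)
  set C := 429 * Real.exp (κ + Real.log 30 + 1) with hC
  have hC0 : 0 < C := by positivity
  set A1 := 262146 + 6 + 120 * ((2 + κ) * Real.exp κ) with hA1
  have hE0 : 0 ≤ 120 * ((2 + κ) * Real.exp κ) := by positivity
  have key : ∀ (n : ℕ) (P : Finset (ℝ × ℝ)) (F : Finset Quad), F.card = n →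
    ((Inc P F).card : ℝ) ≤ A1 * (P.card + F.card + ((P.card:ℝ) * F.card) ^ ((2:ℝ)/3)) +
      16 * C * YY P.card F.card := by
    intro n
    induction n using Nat.strong_induction_on with
    | _ n ih =>
    intro P F hF
    rw [hF]
    have hY0 : 0 ≤ YY P.card n := by
      unfold YY
      have : 0 ≤ Real.log n := Real.log_natCast_nonneg n
      positivity
    have hR0 : 0 ≤ ((P.card:ℝ) * n) ^ ((2:ℝ)/3) := by positivity
    have hCY : 0 ≤ 16 * C * YY P.card n := by positivity
    have hm0' : (0:ℝ) ≤ P.card := by positivity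
    have hn0' : (0:ℝ) ≤ n := by positivity
    by_cases hb : (P.card:ℝ)^3 ≤ 262144 * n
    · have h1 := Inc_triv P F
      rw [hF] at h1
      have h2 : ((Inc P F).card : ℝ) ≤ 2 * n + (P.card:ℝ)^3 := by exact_mod_cast h1
      have : 262146 * (n:ℝ) ≤ A1 * (P.card + n + ((P.card:ℝ) * n) ^ ((2:ℝ)/3)) := by
        apply mul_le_mul _ _ hn0' _ <;> linarith
      linarith
    rw [not_le] at hb
    rcases Nat.eq_zero_or_pos n with hn0 | hn0
    · have : F = ∅ := by rw [← card_eq_zero, hF, hn0]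
      have : (Inc P F).card = 0 := by rw [this]; simp [Inc]
      rw [this]
      have : 0 ≤ A1 * (P.card + n + ((P.card:ℝ) * n) ^ ((2:ℝ)/3)) := by
        apply mul_nonneg <;> linarith
      push_cast; linarith
    have hn : (0:ℝ) < n := by exact_mod_cast hn0
    have hn1 : (1:ℝ) ≤ n := by exact_mod_cast hn0
    have hm : (0:ℝ) < P.card := by
      rcases hm0'.lt_or_eq with h | h
      · exact h
      · rw [← h] at hb; norm_num at hb; linarith
    set m := (P.card : ℝ) with hmdef
    set u := Real.log m - Real.log n / 3 with hu
    have hβ : 0 ≤ Real.log n := Real.log_natCast_nonneg n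
    have hu4 : 4 ≤ u := by
      have h1 := Real.log_lt_log (by positivity) hb
      rw [Real.log_mul (by norm_num) hn.ne', Real.log_pow] at h1
      have h2 : Real.log 262144 = 18 * Real.log 2 := by
        rw [show (262144:ℝ) = 2^18 by norm_num, Real.log_pow]; norm_num
      have := Real.log_two_gt_d9
      push_cast at h1
      linarith
    have hu0 : 0 ≤ u := by linarith
    set L := Real.log (1 + u) with hL
    have hL0 : 0 ≤ L := Real.log_nonneg (by linarith)
    have hLu := logu u hu0
    rw [← hL] at hLu
    set σ := Real.exp (12/11*u - 18/11*L) with hσ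
    have hσ1 : 1 < σ := by
      rw [hσ, Real.one_lt_exp_iff]; linarith
    have hlσ : Real.log σ = 12/11*u - 18/11*L := Real.log_exp _
    by_cases ha : (n:ℝ) < 10976 * σ
    · have h1 := base_bound P F
      rw [hF] at h1
      have h2 := Real.log_lt_log hn ha
      rw [Real.log_mul (by norm_num) (by positivity), hlσ] at h2
      have h3 : (n:ℝ) * √n * (1 + Real.log n) ≤ ((2 + κ) * Real.exp κ) * ((m * n) ^ ((2:ℝ)/3)) := by
        have e1 : √(n:ℝ) = Real.exp (Real.log n / 2) := by
          rw [Real.sqrt_eq_rpow, rpe hn]; congr 1; ring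
        have e2 : 1 + Real.log n ≤ (2 + κ) * Real.exp L := by
          rw [hL, Real.exp_log (by linarith)]
          linarith [mul_nonneg hκ0 hu0]
        calc (n:ℝ) * √n * (1 + Real.log n) ≤ n * √n * ((2 + κ) * Real.exp L) := by gcongr
          _ = (2 + κ) * Real.exp (Real.log n + (Real.log n / 2 + L)) := by
            rw [e1, Real.exp_add, Real.exp_add, Real.exp_log hn]; ring
          _ ≤ (2 + κ) * Real.exp (κ + 2/3 * (Real.log m + Real.log n)) := by
            apply mul_le_mul_of_nonneg_left _ (by linarith)
            exact Real.exp_le_exp.2 (by linarith)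
          _ = _ := by
            rw [rpe (by positivity), Real.log_mul hm.ne' hn.ne', Real.exp_add]; ring
      rw [hA1]
      nlinarith [mul_nonneg hE0 hm0', mul_nonneg hE0 hn0']
    · rw [not_lt] at ha
      set s := ⌈σ⌉₊ with hs
      have hsσ : σ ≤ s := Nat.le_ceil σ
      have hs2σ : (s:ℝ) ≤ 2 * σ := by
        have := Nat.ceil_lt_add_one (show 0 ≤ σ by linarith)
        linarith
      have hs2 : 2 ≤ s := by
        have : (1:ℝ) < s := by linarith
        have : 1 < s := by exact_mod_cast this
        omega
      have hs0 : (0:ℝ) < s := by linarith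
      have hx : 1 ≤ (n:ℝ) / (5488 * s) := by
        rw [le_div_iff₀ (by positivity)]; linarith
      obtain ⟨r, hr1, hr2, hr3⟩ := cube_root _ hx
      rw [le_div_iff₀ (by positivity)] at hr2
      rw [div_le_iff₀ (by positivity)] at hr3
      have hr0 : (0:ℝ) < r := by exact_mod_cast hr1
      obtain ⟨F', hF', hc, hI⟩ := step_bound P F r s hr1 hs2
      rw [hF] at hI
      have hc' : (F'.card : ℝ) ≤ 2744 * (r:ℝ)^3 * s := by exact_mod_cast hc
      have hhalf : (F'.card : ℝ) ≤ n / 2 := by linarith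
      have hlt : F'.card < n := by
        have : (F'.card : ℝ) < n := by linarith
        exact_mod_cast this
      have hih := ih F'.card hlt P F' rfl
      have hYh := YY_half m n F'.card hm0' hhalf hn0
      have hls1 : 12/11*u - 18/11*L ≤ Real.log s := by
        rw [← hlσ]; exact Real.log_le_log (by linarith) hsσ
      have hls2 : Real.log s ≤ 12/11*u - 18/11*L + Real.log 2 := by
        rw [← hlσ, add_comm, ← Real.log_mul (by norm_num) (by linarith)]
        exact Real.log_le_log hs0 hs2σ
      have hlr : Real.log n ≤ κ + 3 * Real.log r + Real.log s := by
        have h1 : (n:ℝ) ≤ 43904 * (r:ℝ)^3 * s := by linarith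
        have h2 := Real.log_le_log hn h1
        rw [Real.log_mul (by positivity) hs0.ne', Real.log_mul (by norm_num) (by positivity),
          Real.log_pow] at h2
        push_cast at h2
        linarith
      have hE := num_step n m r s u L κ hn hm hr0 hs0 hu hu0 hL hκ0 hls1
        (Real.log_natCast_nonneg s) hls2 hlr
      have hYE : Real.exp (6/11 * Real.log m + 9/11 * Real.log n + 2/11 * L) ≤ 4 * YY m n := by
        have hLl : L ≤ Real.log 4 + Real.log (1 + Real.log n) := by
          rw [← Real.log_mul (by norm_num) (by linarith), hL]
          apply Real.log_le_log (by linarith)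
          have h2 := Real.log_le_log (by positivity) ha
          rw [Real.log_mul (by norm_num) (by positivity), hlσ] at h2
          linarith
        have h4 : 0 ≤ Real.log 4 := Real.log_nonneg (by norm_num)
        unfold YY
        rw [rpe hm, rpe hn, rpe (by linarith : 0 < 1 + Real.log n), ← Real.exp_add, ← Real.exp_add,
          show (4:ℝ) = Real.exp (Real.log 4) from (Real.exp_log (by norm_num)).symm, ← Real.exp_add]
        apply Real.exp_le_exp.2
        linarith
      have hE2 := hE.trans (mul_le_mul_of_nonneg_left hYE hC0.le)
      have hmono : ((m:ℝ) * F'.card) ^ ((2:ℝ)/3) ≤ (m * n) ^ ((2:ℝ)/3) := by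
        apply Real.rpow_le_rpow (by positivity) _ (by norm_num)
        gcongr
      have hA0 : 0 ≤ A1 := by linarith
      have h5 : A1 * (m + F'.card + (m * F'.card) ^ ((2:ℝ)/3)) ≤ A1 * (m + n + (m * n) ^ ((2:ℝ)/3)) := by
        apply mul_le_mul_of_nonneg_left _ hA0
        linarith
      have h6 := mul_le_mul_of_nonneg_left hYh (show 0 ≤ 16 * C by linarith)
      linarith
  refine ⟨A1 + 16 * C, by linarith, fun P F => ?_⟩
  have h := key _ P F rfl
  have hY0 : 0 ≤ YY P.card F.card := by
    unfold YY
    have : 0 ≤ Real.log F.card := Real.log_natCast_nonneg _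
    positivity
  have hR0 : 0 ≤ (P.card : ℝ) + F.card + ((P.card:ℝ) * F.card) ^ ((2:ℝ)/3) := by positivity
  nlinarith [mul_nonneg hC0.le hR0, mul_nonneg (show 0 ≤ A1 by linarith) hY0]

end LCT

namespace LCT
open Finset
open scoped Classical

def gl (M B : ℝ) : Set Pt2 := {x | x 1 = M * x 0 + B}
def vl (c : ℝ) : Set Pt2 := {x | x 0 = c}
def circ (a b r : ℝ) : Set Pt2 := {x | (x 0 - a)^2 + (x 1 - b)^2 = r^2}

lemma line_cases {l : Set Pt2} (h : IsLine2 l) : (∃ M B, l = gl M B) ∨ ∃ c, l = vl c := by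
  obtain ⟨a, v, hv, rfl⟩ := h
  by_cases h0 : v 0 = 0
  · right
    have h1 : v 1 ≠ 0 := by
      intro h1; apply hv; ext i; fin_cases i <;> simp [h0, h1]
    refine ⟨a 0, ?_⟩
    ext x
    constructor
    · rintro ⟨t, rfl⟩
      show (a + t • v) 0 = a 0
      simp [h0]
    · intro hx
      have hx' : x 0 = a 0 := hx
      refine ⟨(x 1 - a 1) / v 1, ?_⟩
      ext i; fin_cases i
      · simp [h0, hx']
      · simp; field_simp; ring
  · left
    refine ⟨v 1 / v 0, a 1 - v 1 / v 0 * a 0, ?_⟩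
    ext x
    constructor
    · rintro ⟨t, rfl⟩
      show (a + t • v) 1 = v 1 / v 0 * (a + t • v) 0 + (a 1 - v 1 / v 0 * a 0)
      simp; field_simp; ring
    · intro hx
      have hx' : x 1 = v 1 / v 0 * x 0 + (a 1 - v 1 / v 0 * a 0) := hx
      refine ⟨(x 0 - a 0) / v 0, ?_⟩
      ext i; fin_cases i
      · simp; field_simp; ring
      · simp; rw [hx']; field_simp; ring

lemma circ_of {s : Set Pt2} (h : IsCircle2 s) : ∃ a b r, 0 < r ∧ s = circ a b r := by
  obtain ⟨c, r, hr, rfl⟩ := h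
  refine ⟨c 0, c 1, r, hr, ?_⟩
  ext x
  show dist x c = r ↔ (x 0 - c 0)^2 + (x 1 - c 1)^2 = r^2
  rw [EuclideanSpace.dist_eq, Real.sqrt_eq_iff_mul_self_eq_of_pos hr]
  simp only [Fin.sum_univ_two, Real.dist_eq, sq_abs]
  constructor <;> intro h <;> linarith

lemma tan_gl {M B a b r : ℝ} (h : Tangent2 (gl M B) (circ a b r)) :
    (M * a + B - b)^2 = r^2 * (1 + M^2) := by
  obtain ⟨p, hp⟩ := h
  have hpm : p ∈ gl M B ∩ circ a b r := by rw [hp]; rfl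
  have h1 : p 1 = M * p 0 + B := hpm.1
  have h2 : (p 0 - a)^2 + (p 1 - b)^2 = r^2 := hpm.2
  have hM : 0 < 1 + M^2 := by positivity
  set D := M * a + B - b with hD
  set X := p 0 - a with hX
  set X' := -(2 * M * D) / (1 + M^2) - X with hX'
  have e1 : (1 + M^2) * (X' + X) = -(2 * M * D) := by rw [hX']; field_simp; ring
  have h3 : X^2 + (M * X + D)^2 = r^2 := by
    rw [← h2, h1, hD, hX]; ring
  have h4 : X'^2 + (M * X' + D)^2 = r^2 := by
    linear_combination h3 + (X' - X) * e1
  have hq : (!₂[X' + a, M * (X' + a) + B] : Pt2) ∈ gl M B ∩ circ a b r := by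
    refine ⟨?_, ?_⟩
    · show (!₂[X' + a, M * (X' + a) + B] : Pt2) 1 = M * (!₂[X' + a, M * (X' + a) + B] : Pt2) 0 + B
      simp
    · show ((!₂[X' + a, M * (X' + a) + B] : Pt2) 0 - a)^2 + ((!₂[X' + a, M * (X' + a) + B] : Pt2) 1 - b)^2 = r^2
      simp
      rw [← h4, hD]; ring
  rw [hp] at hq
  have hq' : (!₂[X' + a, M * (X' + a) + B] : Pt2) = p := hq
  have h5 : X' + a = p 0 := by rw [← hq']; simp
  have h6 : X' = X := by linarith
  rw [h6] at e1
  have e2 : (1 + M^2) * X = -(M * D) := by linarith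
  have : (1 + M^2) * X^2 + 2 * M * D * X + D^2 - r^2 = 0 := by linear_combination h3
  linear_combination (1 + M^2) * this - ((1 + M^2) * X + M * D) * e2

lemma tan_vl {c a b r : ℝ} (h : Tangent2 (vl c) (circ a b r)) : c = a + r ∨ c = a - r := by
  obtain ⟨p, hp⟩ := h
  have hpm : p ∈ vl c ∩ circ a b r := by rw [hp]; rfl
  have h1 : p 0 = c := hpm.1
  have h2 : (p 0 - a)^2 + (p 1 - b)^2 = r^2 := hpm.2
  have hq : (!₂[c, 2 * b - p 1] : Pt2) ∈ vl c ∩ circ a b r := by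
    refine ⟨?_, ?_⟩
    · show (!₂[c, 2 * b - p 1] : Pt2) 0 = c
      simp
    · show ((!₂[c, 2 * b - p 1] : Pt2) 0 - a)^2 + ((!₂[c, 2 * b - p 1] : Pt2) 1 - b)^2 = r^2
      simp
      rw [← h2, h1]; ring
  rw [hp] at hq
  have hq' : (!₂[c, 2 * b - p 1] : Pt2) = p := hq
  have h5 : 2 * b - p 1 = p 1 := by
    have : (!₂[c, 2 * b - p 1] : Pt2) 1 = p 1 := by rw [hq']
    simpa using this
  have h6 : p 1 = b := by linarith
  rw [h1, h6] at h2
  have : (c - a - r) * (c - a + r) = 0 := by linear_combination h2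
  rcases mul_eq_zero.1 this with h | h
  · left; linarith
  · right; linarith

def gpt (M B : ℝ) : ℝ × ℝ := (√(1 + M^2) + M, 2 * (√(1 + M^2) + M) * B)
def qd (a b r : ℝ) : Quad := !₂[r - a, 2 * b, r + a]

def Gmap (z : (ℝ × ℝ) × Quad) : Set Pt2 × Set Pt2 :=
  (gl ((z.1.1^2 - 1) / (2 * z.1.1)) (z.1.2 / (2 * z.1.1)),
    circ ((z.2 2 - z.2 0) / 2) (z.2 1 / 2) ((z.2 0 + z.2 2) / 2))

lemma tpos (M : ℝ) : 0 < √(1 + M^2) + M := by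
  have h := Real.sq_sqrt (show 0 ≤ 1 + M^2 by positivity)
  have h0 := Real.sqrt_nonneg (1 + M^2)
  by_contra hn
  rw [not_lt] at hn
  nlinarith

lemma Gmap_eq (M B a b r : ℝ) : Gmap (gpt M B, qd a b r) = (gl M B, circ a b r) := by
  have h := Real.sq_sqrt (show 0 ≤ 1 + M^2 by positivity)
  have ht := tpos M
  unfold Gmap gpt qd
  simp only
  have e1 : ((√(1 + M^2) + M)^2 - 1) / (2 * (√(1 + M^2) + M)) = M := by
    rw [div_eq_iff (by positivity)]; linear_combination h
  have e2 : 2 * (√(1 + M^2) + M) * B / (2 * (√(1 + M^2) + M)) = B := by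
    field_simp
  rw [e1, e2]
  congr 1
  congr 1 <;> simp

lemma circ_neg (a b r : ℝ) : circ a b (-r) = circ a b r := by
  unfold circ; simp

lemma ev_qd {M B a b r : ℝ} (h : M * a + B - b = r * √(1 + M^2)) :
    ev (qd a b r) (gpt M B).1 = (gpt M B).2 := by
  have hs := Real.sq_sqrt (show 0 ≤ 1 + M^2 by positivity)
  unfold ev qd gpt
  simp
  linear_combination (-r - a) * hs - 2 * (√(1 + M^2) + M) * h

lemma tan_inc {M B a b r : ℝ} (h : Tangent2 (gl M B) (circ a b r)) :
    ev (qd a b r) (gpt M B).1 = (gpt M B).2 ∨ ev (qd a b (-r)) (gpt M B).1 = (gpt M B).2 := by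
  have h1 := tan_gl h
  have hs := Real.sq_sqrt (show 0 ≤ 1 + M^2 by positivity)
  have : (M * a + B - b - r * √(1 + M^2)) * (M * a + B - b + r * √(1 + M^2)) = 0 := by
    linear_combination h1 - r^2 * hs
  rcases mul_eq_zero.1 this with h | h
  · left; exact ev_qd (by linarith)
  · right; exact ev_qd (by linarith)

lemma reduction (L C : Finset (Set Pt2)) (hL : ∀ l ∈ L, IsLine2 l) (hC : ∀ s ∈ C, IsCircle2 s) :
    ∃ (P : Finset (ℝ × ℝ)) (F : Finset Quad), P.card ≤ L.card ∧ F.card ≤ 2 * C.card ∧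
      ({q : Set Pt2 × Set Pt2 | q.1 ∈ L ∧ q.2 ∈ C ∧ Tangent2 q.1 q.2}).ncard ≤
        2 * C.card + (Inc P F).card := by
  have hc : ∀ s : Set Pt2, ∃ a b r, s ∈ C → s = circ a b r := by
    intro s
    by_cases h : s ∈ C
    · obtain ⟨a, b, r, _, h⟩ := circ_of (hC s h)
      exact ⟨a, b, r, fun _ => h⟩
    · exact ⟨0, 0, 0, fun h' => absurd h' h⟩
  have hl : ∀ l : Set Pt2, ∃ M B, l ∈ L → (l = gl M B ∨ ∃ c, l = vl c) := by
    intro l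
    by_cases h : l ∈ L
    · rcases line_cases (hL l h) with ⟨M, B, h⟩ | h
      · exact ⟨M, B, fun _ => Or.inl h⟩
      · exact ⟨0, 0, fun _ => Or.inr h⟩
    · exact ⟨0, 0, fun h' => absurd h' h⟩
  choose a b r hs using hc
  choose M B hg using hl
  set P := L.image (fun l => gpt (M l) (B l)) with hP
  set F := C.image (fun s => qd (a s) (b s) (r s)) ∪ C.image (fun s => qd (a s) (b s) (-r s)) with hF
  refine ⟨P, F, card_image_le, ?_, ?_⟩
  · refine (card_union_le _ _).trans ?_
    have h1 : (C.image (fun s => qd (a s) (b s) (r s))).card ≤ C.card := card_image_le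
    have h2 : (C.image (fun s => qd (a s) (b s) (-r s))).card ≤ C.card := card_image_le
    omega
  · set V1 := C.image (fun s => (vl (a s + r s), s)) with hV1
    set V2 := C.image (fun s => (vl (a s - r s), s)) with hV2
    have hsub : {q : Set Pt2 × Set Pt2 | q.1 ∈ L ∧ q.2 ∈ C ∧ Tangent2 q.1 q.2} ⊆
        (((V1 ∪ V2) ∪ (Inc P F).image Gmap : Finset (Set Pt2 × Set Pt2)) : Set (Set Pt2 × Set Pt2)) := by
      rintro ⟨l, s⟩ ⟨h1, h2, h3⟩
      simp only at h1 h2 h3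
      have hs' := hs s h2
      rw [Finset.mem_coe, mem_union, mem_union]
      rcases hg l h1 with h | ⟨c, h⟩
      · right
        rw [h, hs'] at h3
        rw [mem_image]
        rcases tan_inc h3 with h4 | h4
        · refine ⟨(gpt (M l) (B l), qd (a s) (b s) (r s)), ?_, ?_⟩
          · simp only [Inc, mem_filter, mem_product]
            exact ⟨⟨mem_image_of_mem _ h1, mem_union_left _ (mem_image_of_mem _ h2)⟩, h4⟩
          · rw [Gmap_eq, ← h, ← hs']
        · refine ⟨(gpt (M l) (B l), qd (a s) (b s) (-r s)), ?_, ?_⟩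
          · simp only [Inc, mem_filter, mem_product]
            exact ⟨⟨mem_image_of_mem _ h1, mem_union_right _ (mem_image_of_mem _ h2)⟩, h4⟩
          · rw [Gmap_eq, circ_neg, ← h, ← hs']
      · left
        rw [h, hs'] at h3
        rcases tan_vl h3 with h4 | h4
        · left
          rw [mem_image]
          exact ⟨s, h2, by rw [h, h4]⟩
        · right
          rw [mem_image]
          exact ⟨s, h2, by rw [h, h4]⟩
    have h1 := Set.ncard_le_ncard hsub (Finset.finite_toSet _)
    rw [Set.ncard_coe_finset] at h1
    have h2 := card_union_le (V1 ∪ V2) ((Inc P F).image Gmap)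
    have h3 := card_union_le V1 V2
    have h4 : V1.card ≤ C.card := card_image_le
    have h5 : V2.card ≤ C.card := card_image_le
    have h6 : ((Inc P F).image Gmap).card ≤ (Inc P F).card := card_image_le
    omega

lemma YY_final (m K : ℕ) (n k : ℕ) (hm : m ≤ n) (hK : K ≤ 2 * k) (hk : 2 ≤ k) :
    YY m K ≤ 8 * ((n : ℝ) ^ ((6 : ℝ) / 11) * (k : ℝ) ^ ((9 : ℝ) / 11) *
                 (Real.log k) ^ ((2 : ℝ) / 11)) := by
  unfold YY
  have hk' : (2:ℝ) ≤ k := by exact_mod_cast hk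
  have hm' : (m:ℝ) ≤ n := by exact_mod_cast hm
  have hK' : (K:ℝ) ≤ 2 * k := by exact_mod_cast hK
  have hlk : Real.log 2 ≤ Real.log k := Real.log_le_log (by norm_num) hk'
  have h2 := Real.log_two_gt_d9
  have hK0 : 0 ≤ Real.log K := Real.log_natCast_nonneg K
  have h3 : Real.log K ≤ Real.log 2 + Real.log k := by
    rw [← Real.log_mul (by norm_num) (by linarith)]
    rcases Nat.eq_zero_or_pos K with h0 | h0
    · rw [h0]; simp; exact Real.log_nonneg (by linarith)
    · exact Real.log_le_log (by exact_mod_cast h0) hK'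
  have h4 : (1 + Real.log K) ^ ((2:ℝ)/11) ≤ 4 * (Real.log k) ^ ((2:ℝ)/11) := by
    calc (1 + Real.log K) ^ ((2:ℝ)/11) ≤ (4 * Real.log k) ^ ((2:ℝ)/11) :=
          Real.rpow_le_rpow (by linarith) (by linarith) (by norm_num)
      _ = (4:ℝ) ^ ((2:ℝ)/11) * (Real.log k) ^ ((2:ℝ)/11) :=
          Real.mul_rpow (by norm_num) (by linarith)
      _ ≤ _ := by
        apply mul_le_mul_of_nonneg_right _ (Real.rpow_nonneg (by linarith) _)
        calc (4:ℝ) ^ ((2:ℝ)/11) ≤ (4:ℝ) ^ (1:ℝ) :=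
              Real.rpow_le_rpow_of_exponent_le (by norm_num) (by norm_num)
          _ = 4 := Real.rpow_one _
  have h5 : (K:ℝ) ^ ((9:ℝ)/11) ≤ 2 * (k:ℝ) ^ ((9:ℝ)/11) := by
    calc (K:ℝ) ^ ((9:ℝ)/11) ≤ (2 * (k:ℝ)) ^ ((9:ℝ)/11) :=
          Real.rpow_le_rpow (by positivity) hK' (by norm_num)
      _ = (2:ℝ) ^ ((9:ℝ)/11) * (k:ℝ) ^ ((9:ℝ)/11) :=
          Real.mul_rpow (by norm_num) (by linarith)
      _ ≤ _ := by
        apply mul_le_mul_of_nonneg_right _ (Real.rpow_nonneg (by linarith) _)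
        calc (2:ℝ) ^ ((9:ℝ)/11) ≤ (2:ℝ) ^ (1:ℝ) :=
              Real.rpow_le_rpow_of_exponent_le (by norm_num) (by norm_num)
          _ = 2 := Real.rpow_one _
  have h6 : (m:ℝ) ^ ((6:ℝ)/11) ≤ (n:ℝ) ^ ((6:ℝ)/11) :=
    Real.rpow_le_rpow (by positivity) hm' (by norm_num)
  calc (m:ℝ) ^ ((6:ℝ)/11) * (K:ℝ) ^ ((9:ℝ)/11) * (1 + Real.log K) ^ ((2:ℝ)/11)
      ≤ (n:ℝ) ^ ((6:ℝ)/11) * (2 * (k:ℝ) ^ ((9:ℝ)/11)) * (4 * (Real.log k) ^ ((2:ℝ)/11)) := by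
        gcongr
    _ = _ := by ring

lemma R_final (m K : ℕ) (n k : ℕ) (hm : m ≤ n) (hK : K ≤ 2 * k) :
    ((m:ℝ) * K) ^ ((2:ℝ)/3) ≤ 2 * ((n : ℝ) ^ ((2 : ℝ) / 3) * (k : ℝ) ^ ((2 : ℝ) / 3)) := by
  have hm' : (m:ℝ) ≤ n := by exact_mod_cast hm
  have hK' : (K:ℝ) ≤ 2 * k := by exact_mod_cast hK
  calc ((m:ℝ) * K) ^ ((2:ℝ)/3) ≤ (2 * ((n:ℝ) * k)) ^ ((2:ℝ)/3) := by
        apply Real.rpow_le_rpow (by positivity) _ (by norm_num)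
        calc (m:ℝ) * K ≤ n * (2 * k) := by gcongr
          _ = _ := by ring
    _ = (2:ℝ) ^ ((2:ℝ)/3) * ((n : ℝ) ^ ((2 : ℝ) / 3) * (k : ℝ) ^ ((2 : ℝ) / 3)) := by
        rw [Real.mul_rpow (by norm_num) (by positivity), Real.mul_rpow (by positivity) (by positivity)]
    _ ≤ _ := by
        apply mul_le_mul_of_nonneg_right _ (by positivity)
        calc (2:ℝ) ^ ((2:ℝ)/3) ≤ (2:ℝ) ^ (1:ℝ) :=
              Real.rpow_le_rpow_of_exponent_le (by norm_num) (by norm_num)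
          _ = 2 := Real.rpow_one _

end LCT

theorem line_circle_tangencies :
    ∃ A : ℝ, 0 < A ∧
      ∀ (n k : ℕ) (L C : Finset (Set Pt2)),
        L.card = n → C.card = k → 2 ≤ k →
        (∀ l ∈ L, IsLine2 l) → (∀ s ∈ C, IsCircle2 s) →
        (({q : Set Pt2 × Set Pt2 | q.1 ∈ L ∧ q.2 ∈ C ∧ Tangent2 q.1 q.2}).ncard : ℝ) ≤
          A * ((n : ℝ) ^ ((2 : ℝ) / 3) * (k : ℝ) ^ ((2 : ℝ) / 3) +
               (n : ℝ) ^ ((6 : ℝ) / 11) * (k : ℝ) ^ ((9 : ℝ) / 11) *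
                 (Real.log k) ^ ((2 : ℝ) / 11) +
               (k : ℝ) + (n : ℝ)) := by
  obtain ⟨A, hA, hmain⟩ := LCT.main_inc
  refine ⟨2 + 8 * A, by linarith, ?_⟩
  intro n k L C hLn hCk hk hL hC
  obtain ⟨P, F, hP, hF, hT⟩ := LCT.reduction L C hL hC
  rw [hLn] at hP
  rw [hCk] at hF hT
  have h1 := hmain P F
  have h2 := LCT.YY_final P.card F.card n k hP hF hk
  have h3 := LCT.R_final P.card F.card n k hP hF
  have hP' : (P.card : ℝ) ≤ n := by exact_mod_cast hP
  have hF' : (F.card : ℝ) ≤ 2 * k := by exact_mod_cast hF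
  set X := (n : ℝ) ^ ((2 : ℝ) / 3) * (k : ℝ) ^ ((2 : ℝ) / 3) with hX
  set Y := (n : ℝ) ^ ((6 : ℝ) / 11) * (k : ℝ) ^ ((9 : ℝ) / 11) *
                 (Real.log k) ^ ((2 : ℝ) / 11) with hY
  have hX0 : 0 ≤ X := by positivity
  have hlk : 0 ≤ Real.log k := Real.log_natCast_nonneg k
  have hY0 : 0 ≤ Y := by positivity
  have hn0 : (0:ℝ) ≤ n := by positivity
  have hk0 : (0:ℝ) ≤ k := by positivity
  have hT' : (({q : Set Pt2 × Set Pt2 | q.1 ∈ L ∧ q.2 ∈ C ∧ Tangent2 q.1 q.2}).ncard : ℝ) ≤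
      2 * k + ((LCT.Inc P F).card : ℝ) := by exact_mod_cast hT
  have h4 : A * (P.card + F.card + ((P.card:ℝ) * F.card) ^ ((2:ℝ)/3) + LCT.YY P.card F.card) ≤
      A * (8 * (X + Y + k + n)) := by
    apply mul_le_mul_of_nonneg_left _ hA.le
    linarith
  calc _ ≤ 2 * (k:ℝ) + A * (8 * (X + Y + k + n)) := by linarith
    _ ≤ (2 + 8 * A) * (X + Y + k + n) := by linarith
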